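/- On the event E, assume Condition (H) with the dataset in the sparse-unlearnable regime and Γ ≥ Cd, and run adversarial distillation for T iterations under a Bad Teacher. Then: (1) there exists a filter r ∈ [m] with w_{r,1}^{(T)} ≥ C_0/(α m^{1/3}); (2) there exists an unlearnable sample i ∈ S_U with max over r ∈ [m], j ≠ s(X_i) of y_i⟨w_r^{(T)}, x_{i,j}⟩ ≥ C_1/(3(mP)^{1/3}) (noise memorization); (3) the robust training error is o(1); and (4) the robust test error on the learnable test distribution satisfies L^rob(f_{W^{(T)}}) ≥ 1/2 − o(1). -/

import Mathlib

open Finset MeasureTheory ProbabilityTheory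
open scoped ENNReal NNReal

noncomputable section

namespace AD

/-- Cubic ReLU activation. -/
def phi (z : ℝ) : ℝ := (max 0 z) ^ 3

/-- Negative sigmoid `ψ(z) = 1/(1+e^z)`. -/
def psi (z : ℝ) : ℝ := 1 / (1 + Real.exp z)

/-- Logistic loss `ℓ(z) = log(1+e^{-z})`. -/
def lloss (z : ℝ) : ℝ := Real.log (1 + Real.exp (-z))

/-- Logistic sigmoid `σ(z) = 1/(1+e^{-z})`. -/
def sigm (z : ℝ) : ℝ := 1 / (1 + Real.exp (-z))

/-- Euclidean inner product on `Fin d → ℝ`. -/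
def dot {d : ℕ} (a b : Fin d → ℝ) : ℝ := ∑ k, a k * b k

/-- Squared Euclidean norm. -/
def sqnorm {d : ℕ} (a : Fin d → ℝ) : ℝ := dot a a

/-- First standard basis vector `e₁` (the learnable feature `u`). -/
def e1 (d : ℕ) (hd : 0 < d) : Fin d → ℝ := fun k => if k = (⟨0, hd⟩ : Fin d) then 1 else 0

/-- Last standard basis vector `e_d` (the unlearnable feature `v`). -/
def eLast (d : ℕ) (_hd : 0 < d) : Fin d → ℝ := fun k => if (k : ℕ) = d - 1 then 1 else 0

/-- The two-layer student network
`f_W(X) = ∑_r ∑_p [φ(⟨w_r,x_p⟩) − φ(−⟨w_r,x_p⟩)]`. -/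
def netOut {m P d : ℕ} (w : Fin m → Fin d → ℝ) (X : Fin P → Fin d → ℝ) : ℝ :=
  ∑ r, ∑ p, (phi (dot (w r) (X p)) - phi (-(dot (w r) (X p))))

/-- The concentration event `E` of the paper, i.e. properties (P1)–(P8), stated for
training patches `x`, initialization `w0`, labels `y` and signal-patch indices `sig`. -/
def EventEOn (N m P d : ℕ) (hd : 0 < d) (sigman sigma0 delta : ℝ)
    (y : Fin N → ℝ) (sig : Fin N → Fin P)
    (x : Fin N → Fin P → Fin d → ℝ) (w0 : Fin m → Fin d → ℝ) : Prop :=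
  -- (P1) noise-patch norms
  (∀ i j, j ≠ sig i →
      sigman ^ 2 * d / 2 ≤ sqnorm (x i j) ∧ sqnorm (x i j) ≤ 3 * sigman ^ 2 * d / 2) ∧
  -- (P2) pairwise noise inner products
  (∀ i k j q, j ≠ sig i → q ≠ sig k → ((i, j) : Fin N × Fin P) ≠ (k, q) →
      |dot (x i j) (x k q)| ≤
        2 * sigman ^ 2 * Real.sqrt ((d : ℝ) * Real.log ((16 : ℝ) * N ^ 2 * P ^ 2 / delta))) ∧
  -- (P3) sup-norm of noise patches
  (∀ i j, j ≠ sig i → ∀ kk : Fin d,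
      |x i j kk| ≤ sigman * Real.sqrt (2 * Real.log ((16 : ℝ) * d * N * P / delta))) ∧
  -- (P4) initialization norms
  (∀ r, Real.sqrt (sqnorm (w0 r)) ≤ 2 * sigma0 * Real.sqrt d) ∧
  -- (P5) initialization signal correlation
  (∀ r, |dot (w0 r) (e1 d hd)| ≤ sigma0 * Real.sqrt (2 * Real.log ((16 : ℝ) * m / delta))) ∧
  -- (P6) initialization noise correlations
  (∀ r i j, j ≠ sig i →
      |dot (w0 r) (x i j)| ≤
        2 * sigma0 * sigman * Real.sqrt ((d : ℝ) * Real.log ((16 : ℝ) * N * m * P / delta))) ∧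
  -- (P7) maximal initial signal alignment
  (∃ r, sigma0 / 2 ≤ dot (w0 r) (e1 d hd)) ∧
  -- (P8) maximal initial noise alignment
  (∀ i j, j ≠ sig i → ∃ r, sigma0 * sigman * Real.sqrt d / 4 ≤ y i * dot (w0 r) (x i j))
structure Setting where
  N : ℕ
  m : ℕ
  P : ℕ
  d : ℕ
  T : ℕ
  hN : 0 < N
  hm : 0 < m
  hP : 0 < P
  hd : 0 < d
  alpha : ℝ
  sigman : ℝ
  sigma0 : ℝ
  eta : ℝ
  eps : ℝ
  delta : ℝ
  halpha : 0 < alpha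
  hsigman : 0 < sigman
  hsigma0 : 0 < sigma0
  heta : 0 < eta
  heps : 0 < eps
  hepsalpha : eps < alpha
  hdelta0 : 0 < delta
  hdelta1 : delta < 1
  /-- labels -/
  y : Fin N → ℝ
  hy : ∀ i, y i = 1 ∨ y i = -1
  /-- signal patch index -/
  sig : Fin N → Fin P
  /-- learnable samples -/
  SL : Finset (Fin N)
  /-- unlearnable samples -/
  SU : Finset (Fin N)
  hunion : SL ∪ SU = Finset.univ
  hdisj : Disjoint SL SU
  /-- training patches -/
  x : Fin N → Fin P → Fin d → ℝ
  hsigL : ∀ i ∈ SL, x i (sig i) = (alpha * y i) • e1 d hd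
  hsigU : ∀ i ∈ SU, x i (sig i) = (alpha * y i) • eLast d hd
  hnoiseU : ∀ i j, j ≠ sig i → dot (x i j) (e1 d hd) = 0
  hnoiseV : ∀ i j, j ≠ sig i → dot (x i j) (eLast d hd) = 0
  /-- weight trajectory -/
  w : ℕ → Fin m → Fin d → ℝ
  hwperp : ∀ t r, dot (w t r) (eLast d hd) = 0
  /-- adversarial training examples at each iteration -/
  xadv : ℕ → Fin N → Fin P → Fin d → ℝ
  hadvnoise : ∀ t i j, j ≠ sig i → xadv t i j = x i j
  hadvspan : ∀ t i, ∃ c : ℝ, xadv t i (sig i) - x i (sig i) = c • x i (sig i)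
  hadvlinf : ∀ t i p k, |xadv t i p k - x i p k| ≤ eps
  hadvlearn : ∀ t : ℕ, ∀ i ∈ SL,
    alpha - eps ≤ y i * dot (xadv t i (sig i)) (e1 d hd) ∧
      y i * dot (xadv t i (sig i)) (e1 d hd) ≤ alpha

namespace Setting

variable (S : Setting)

/-- Adversarial margin `y_i f_{W^{(t)}}(X̃_i^{(t)})`. -/
def marg (t : ℕ) (i : Fin S.N) : ℝ := S.y i * netOut (S.w t) (S.xadv t i)

/-- Signal coordinate `w_{r,1}^{(t)}`. -/
def wsig (t : ℕ) (r : Fin S.m) : ℝ := S.w t r ⟨0, S.hd⟩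

/-- Unlearnable fraction `p_un = |S_U|/N`. -/
def pun : ℝ := (S.SU.card : ℝ) / S.N

/-- The adversarial-training gradient-descent dynamics. -/
def ATDyn : Prop :=
  ∀ t r, S.w (t + 1) r = S.w t r +
    (3 * S.eta / S.N) •
      ∑ i : Fin S.N, (psi (S.marg t i) * S.y i) •
        ∑ p : Fin S.P, (dot (S.w t r) (S.xadv t i p)) ^ 2 • S.xadv t i p

/-- The signed gradient weight of sample `i` at iteration `t` under adversarial
distillation from teacher logits `fT`. -/
def gAD (fT : Fin S.N → ℝ) (t : ℕ) (i : Fin S.N) : ℝ :=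
  sigm (S.y i * fT i) * psi (S.marg t i) - sigm (-(S.y i * fT i)) * psi (-(S.marg t i))

/-- The adversarial-distillation gradient-descent dynamics. -/
def ADDyn (fT : Fin S.N → ℝ) : Prop :=
  ∀ t r, S.w (t + 1) r = S.w t r +
    (3 * S.eta / S.N) •
      ∑ i : Fin S.N, (S.gAD fT t i * S.y i) •
        ∑ p : Fin S.P, (dot (S.w t r) (S.xadv t i p)) ^ 2 • S.xadv t i p

/-- Noise coefficients `ρ_{i,j,r}^{(t)}` (adversarial training). -/
def rho (i : Fin S.N) (j : Fin S.P) (r : Fin S.m) : ℕ → ℝ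
  | 0 => 0
  | t + 1 => rho i j r t + (3 * S.eta / S.N) * psi (S.marg t i) * (dot (S.w t r) (S.x i j)) ^ 2

/-- Noise coefficients under adversarial distillation. -/
def rhoAD (fT : Fin S.N → ℝ) (i : Fin S.N) (j : Fin S.P) (r : Fin S.m) : ℕ → ℝ
  | 0 => 0
  | t + 1 => rhoAD fT i j r t + (3 * S.eta / S.N) * S.gAD fT t i * (dot (S.w t r) (S.x i j)) ^ 2

/-- The event `E` for a setting. -/
def EventE : Prop :=
  EventEOn S.N S.m S.P S.d S.hd S.sigman S.sigma0 S.delta S.y S.sig S.x (S.w 0)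

/-- Condition (H): the parameter requirements of Condition 4.1 of the paper
(without the unlearnable-fraction regime item, which is imposed separately). -/
def CondH (C : ℝ) : Prop :=
  1 ≤ C ∧
  -- training horizon
  C * S.N / (S.eta * S.sigma0 * S.sigman ^ 3 * ((S.d : ℝ) * Real.sqrt S.d)) ≤ (S.T : ℝ) ∧
  -- dimension
  C * S.m ^ 2 * S.P ^ 2 * S.N ^ 2 *
      (Real.log ((S.T : ℝ) * S.N * S.m * S.P / S.delta)) ^ 4 ≤ (S.d : ℝ) ∧
  -- signal strength
  C * S.sigman * Real.sqrt S.d * Real.log ((S.T : ℝ) * S.N * S.m * S.P / S.delta) /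
      (((S.N : ℝ) * (1 - S.pun)) ^ ((1 : ℝ) / 3)) ≤ S.alpha ∧
  -- initialization scale
  S.sigma0 ≤
    C⁻¹ *
        min (min (1 / ((S.m : ℝ) ^ ((2 : ℝ) / 3) * (S.P : ℝ) ^ ((2 : ℝ) / 3) *
            S.sigman * Real.sqrt S.d))
          (1 / (S.alpha * (S.m : ℝ) ^ ((2 : ℝ) / 3))))
          (1 / (S.sigman * S.m ^ 2 * Real.sqrt S.P * S.d)) /
      Real.log ((S.T : ℝ) * S.d * S.N * S.m * S.P / S.delta) ∧
  -- learning rate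
  S.eta ≤
    C⁻¹ * min (min (1 / (S.alpha ^ 3 * S.sigma0)) (1 / (S.sigman ^ 2 * S.d))) (1 / S.alpha ^ 2) /
      Real.log ((S.T : ℝ) * S.N * S.m * S.P / S.delta) ∧
  -- adversarial budget
  C * S.sigman * S.m * Real.sqrt S.P * Real.log ((S.T : ℝ) * S.d * S.N * S.P / S.delta) ≤ S.eps ∧
  S.eps < C⁻¹ * min S.alpha (1 / (S.m * S.sigma0 * S.d)) ∧
  -- width and number of patches
  C * Real.log ((S.N : ℝ) * S.P / S.delta) ≤ (S.m : ℝ) ∧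
  (S.m : ℝ) ≤ C * Real.log S.d ^ C ∧
  2 ≤ S.P ∧ (S.P : ℝ) ≤ C

/-- The sparse-unlearnable regime of Condition 4.1. -/
def SparseRegime (C : ℝ) : Prop :=
  C / S.N ≤ S.pun ∧ S.pun ≤ C⁻¹ * Real.log S.d / S.N ∧
  C * S.m * S.P * Real.log ((S.T : ℝ) * S.d * S.N * S.m * S.P / S.delta) ≤ (S.N : ℝ)

/-- The noise-stability bound (NS) on learnable samples at iteration `t`. -/
def NS (t : ℕ) : Prop :=
  ∀ r : Fin S.m, ∀ i ∈ S.SL, ∀ j, j ≠ S.sig i →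
    |dot (S.w t r) (S.x i j)| ≤
      3 * S.sigma0 * S.sigman *
          Real.sqrt ((S.d : ℝ) * Real.log ((16 : ℝ) * S.N * S.m * S.P / S.delta)) +
        21 * S.pun * S.N * S.P * Real.log S.T ^ ((1 : ℝ) / 3) / Real.sqrt S.d *
          Real.sqrt (Real.log ((16 : ℝ) * S.N ^ 2 * S.P ^ 2 / S.delta))

/-- The signal-learning hitting time `T₀`. -/
def T0 (C0 : ℝ) : ℕ :=
  sInf {t : ℕ | ∃ r, C0 / (S.alpha * (S.m : ℝ) ^ ((1 : ℝ) / 3)) < S.wsig t r}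

/-- Maximum of the noise coefficients over unlearnable noise patches. -/
def rhoMaxSU (t : ℕ) : ℝ :=
  sSup {z : ℝ | ∃ r : Fin S.m, ∃ k ∈ S.SU, ∃ q, q ≠ S.sig k ∧ z = S.rho k q r t}

/-- Shifted noise coefficients `ρ̂_{i,j,r}^{(t)}`. -/
def rhoHat (i : Fin S.N) (j : Fin S.P) (r : Fin S.m) (t : ℕ) : ℝ :=
  S.rho i j r t + S.y i * dot (S.w 0 r) (S.x i j) / sqnorm (S.x i j)

/-- Maximum shifted noise coefficient over unlearnable noise patches. -/
def rhoHatMax (t : ℕ) : ℝ :=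
  sSup {z : ℝ | ∃ r : Fin S.m, ∃ k ∈ S.SU, ∃ q, q ≠ S.sig k ∧ z = S.rhoHat k q r t}

/-- The noise-memorization hitting time `T₁`. -/
def T1 (C1 : ℝ) : ℕ :=
  sInf {t : ℕ | C1 / (((S.m : ℝ) * S.P) ^ ((1 : ℝ) / 3) * S.sigman ^ 2 * S.d) < S.rhoHatMax t}

/-- The Good-Teacher horizon `T_max`. -/
def Tmax : ℝ :=
  S.N / (1000 * S.eta * S.m * S.P * S.sigma0 ^ 4 * S.sigman ^ 6 * (S.d : ℝ) ^ 3 *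
    Real.log ((16 : ℝ) * S.N * S.m * S.P / S.delta) ^ 2)

end Setting
/-- Law of the label: uniform on `{+1, −1}`. -/
def labelLaw : Measure ℝ :=
  ((2 : ℝ≥0∞)⁻¹ • Measure.dirac (1 : ℝ)) + ((2 : ℝ≥0∞)⁻¹ • Measure.dirac (-1 : ℝ))

/-- Law of a single coordinate of a noise patch: `N(0, σ_n²)` off the feature
subspace coordinates, `δ₀` on coordinates `1` and `d`. -/
def noiseCoordLaw (sigman : ℝ) (d : ℕ) (k : Fin d) : Measure ℝ :=
  if (k : ℕ) = 0 ∨ (k : ℕ) = d - 1 then Measure.dirac 0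
  else gaussianReal 0 ⟨sigman ^ 2, sq_nonneg _⟩

/-- Law of a noise patch: `N(0, σ_n²(I_d − Π_F))`. -/
def noisePatchLaw (sigman : ℝ) (d : ℕ) : Measure (Fin d → ℝ) :=
  Measure.pi (noiseCoordLaw sigman d)

/-- Uniform law of the signal-patch index. -/
def uniformPatch (P : ℕ) (hP : 0 < P) : Measure (Fin P) :=
  (@PMF.uniformOfFintype (Fin P) _ ⟨⟨0, hP⟩⟩).toMeasure

/-- The learnable test distribution `D_L`: uniform label, uniform signal-patch index,
signal patch `α y u`, independent Gaussian noise patches. -/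
def testLaw (alpha sigman : ℝ) (P d : ℕ) (hP : 0 < P) (hd : 0 < d) :
    Measure ((Fin P → Fin d → ℝ) × ℝ) :=
  Measure.map
    (fun z : ℝ × Fin P × (Fin P → Fin d → ℝ) =>
      (Function.update z.2.2 z.2.1 ((alpha * z.1) • e1 d hd), z.1))
    ((labelLaw).prod ((uniformPatch P hP).prod (Measure.pi fun _ : Fin P => noisePatchLaw sigman d)))

/-- Robust test error of the student at iteration `t` on the learnable test
distribution `D_L`. -/
def Setting.robErr (S : Setting) (t : ℕ) : ℝ≥0∞ :=
  testLaw S.alpha S.sigman S.P S.d S.hP S.hd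
    {Xy : (Fin S.P → Fin S.d → ℝ) × ℝ |
      ∃ Δ : Fin S.P → Fin S.d → ℝ, (∀ p k, |Δ p k| ≤ S.eps) ∧
        Xy.2 * netOut (S.w t) (fun p => Xy.1 p + Δ p) < 0}

lemma cube_le_cube {a b : ℝ} (h : a ≤ b) : a ^ 3 ≤ b ^ 3 :=
  (Odd.pow_le_pow (by decide : Odd 3)).2 h

lemma psi_pos (z : ℝ) : 0 < psi z := by unfold psi; positivity

lemma psi_le_one (z : ℝ) : psi z ≤ 1 := by
  unfold psi
  rw [div_le_one (by positivity)]
  linarith [Real.exp_pos z]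

lemma psi_le_exp_neg (z : ℝ) : psi z ≤ Real.exp (-z) := by
  unfold psi
  rw [Real.exp_neg, ← one_div]
  exact one_div_le_one_div_of_le (Real.exp_pos z) (by linarith)

lemma psi_antitone {a b : ℝ} (h : a ≤ b) : psi b ≤ psi a := by
  unfold psi
  exact one_div_le_one_div_of_le (by positivity) (by linarith [Real.exp_le_exp.2 h])

lemma half_exp_neg_le_psi {M L : ℝ} (hL : 0 ≤ L) (h : M ≤ L) : Real.exp (-L) / 2 ≤ psi M := by
  refine le_trans ?_ (psi_antitone h)
  unfold psi
  rw [Real.exp_neg, inv_eq_one_div, div_div]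
  exact one_div_le_one_div_of_le (by positivity) (by linarith [Real.one_le_exp hL])

/-- The discrete Riccati inequality `u (t+1) ≥ u t + c t * u t ^ 2` bounds the total rate. -/
lemma sum_rate_le {u c : ℕ → ℝ} {t : ℕ} (hu0 : 0 < u 0) (hc : ∀ t' < t, 0 ≤ c t')
    (hcu : ∀ t' < t, c t' * u t' ≤ 1)
    (hstep : ∀ t' < t, u t' + c t' * u t' ^ 2 ≤ u (t' + 1)) :
    ∑ t' ∈ range t, c t' ≤ 2 / u 0 := by
  have key : ∀ n ≤ t, 0 < u n ∧ ∑ t' ∈ range n, c t' ≤ 2 / u 0 - 2 / u n := by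
    intro n
    induction n with
    | zero => intro _; simp [hu0]
    | succ n ih =>
      intro hn
      obtain ⟨hpos, hsum⟩ := ih (by omega)
      have h1 := hc n (by omega)
      have h2 := hcu n (by omega)
      have h3 := hstep n (by omega)
      have hpos' : 0 < u n + c n * u n ^ 2 := by positivity
      refine ⟨by linarith, ?_⟩
      rw [sum_range_succ]
      have h4 : 2 / u (n + 1) ≤ 2 / (u n + c n * u n ^ 2) :=
        div_le_div_of_nonneg_left (by norm_num) hpos' h3
      have h5 : c n ≤ 2 / u n - 2 / (u n + c n * u n ^ 2) := by
        have h0 : 0 ≤ c n * u n := by positivity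
        have : 2 / u n - 2 / (u n + c n * u n ^ 2) = 2 * c n / (1 + c n * u n) := by
          have : (1 + c n * u n) ≠ 0 := by positivity
          have h6 : u n + c n * u n ^ 2 = u n * (1 + c n * u n) := by ring
          rw [h6]
          field_simp
          ring
        rw [this, le_div_iff₀ (by positivity)]
        nlinarith
      linarith
  obtain ⟨hpos, hsum⟩ := key t le_rfl
  have : 0 < 2 / u t := by positivity
  linarith

/-- Normalised distillation dynamics. `s` is the rescaled signal coordinate of each filter,
`n` the label-aligned noise correlations (zero on signal patches), `r` the rescaled noise
coefficients and `k` the rescaled Gram matrix of the noise patches. -/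
structure Sys (N m P T : ℕ) where
  SL : Finset (Fin N)
  s : ℕ → Fin m → ℝ
  n : ℕ → Fin N × Fin P → Fin m → ℝ
  r : ℕ → Fin N × Fin P → Fin m → ℝ
  n0 : Fin N × Fin P → Fin m → ℝ
  k : Fin N × Fin P → Fin N × Fin P → ℝ
  beta : ℕ → Fin N → ℝ
  M : ℕ → Fin N → ℝ
  g : ℕ → Fin N → ℝ
  gam : Fin N → ℝ
  etas : ℝ
  etan : ℝ
  kap : ℝ
  nu : ℝ
  ell : ℝ
  sg : ℝ
  s0 : ℝ
  tau : ℝ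
  Gam : ℝ
  hN : 0 < N
  hm : 0 < m
  hP : 0 < P
  hT : 0 < T
  hr0 : ∀ z a, r 0 z a = 0
  hr : ∀ t z a, r (t + 1) z a = r t z a + etan / N * g t z.1 * n t z a ^ 2
  hn : ∀ t z a, n t z a = n0 z a + ∑ z', r t z' a * k z' z
  hs : ∀ t a, s (t + 1) a = s t a + (etas / N * ∑ i, g t i * beta t i) * s t a ^ 2
  hM : ∀ t i, M t i = beta t i * ∑ a, s t a ^ 3 + ∑ a, ∑ j, n t (i, j) a ^ 3
  hg : ∀ t i, g t i = psi (M t i) - psi (gam i)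
  hgam : ∀ i, Gam ≤ gam i
  hbetaL : ∀ t, ∀ i ∈ SL, 1 / 8 ≤ beta t i ∧ beta t i ≤ 1
  hbetaU : ∀ t, ∀ i ∉ SL, beta t i = 0
  hkd : ∀ z, 1 / 2 ≤ k z z ∧ k z z ≤ 3 / 2
  hko : ∀ z z', z ≠ z' → |k z z'| ≤ kap
  hn0 : ∀ z a, |n0 z a| ≤ 4 * nu * ell
  hn0big : ∃ z a, z.1 ∉ SL ∧ nu / 4 ≤ n0 z a
  hs0 : ∀ a, |s 0 a| ≤ s0
  hs0big : ∃ a, sg ≤ s 0 a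
  hell : 1 ≤ ell
  hlogT : Real.log T ≤ ell ^ 2
  hkap0 : 0 ≤ kap
  hkap : kap * N * P * m * ell ≤ 1 / 10 ^ 6
  hnu0 : 0 < nu
  hnu : nu * N * P * m * ell ≤ 1 / 10 ^ 6
  hs01 : s0 ≤ 1
  hs0m : m * s0 ^ 3 ≤ 1 / 4
  hetas0 : 0 < etas
  hetas : etas * ell ^ 2 ≤ 1 / 10 ^ 6
  hetan0 : 0 < etan
  hetan : etan * ell ^ 2 ≤ 1 / 10 ^ 6
  htau : tau = 4 * nu * ell + 12 * (kap * N * P * ell)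
  htaum : 1728 * (m ^ 2 * P * tau ^ 3) ≤ 1
  hU1 : (SLᶜ.card : ℝ) ≤ ell ^ 2
  hU2 : 64 * (SLᶜ.card : ℝ) ≤ N
  hGam : 700 * (m * P * ell ^ 3) + 10 ≤ Gam
  hsg0 : 0 < sg
  hphase1 : 10 ^ 5 * (etan * nu * ell ^ 2) ≤ etas * sg * N
  hphase2 : etan * ell ^ 3 ≤ etas * N
  hmem : 1000 * N < T * etan * nu

namespace Sys

variable {N m P T : ℕ} (Y : Sys N m P T)

lemma nu_ell_le : Y.nu * Y.ell ≤ 1 / 10 ^ 6 := by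
  have hN : (1 : ℝ) ≤ N := by exact_mod_cast Y.hN
  have hm : (1 : ℝ) ≤ m := by exact_mod_cast Y.hm
  have hP : (1 : ℝ) ≤ P := by exact_mod_cast Y.hP
  have h : 1 ≤ (N : ℝ) * P * m := by
    have : 1 ≤ (N : ℝ) * P := by nlinarith
    nlinarith
  have h0 : 0 ≤ Y.nu * Y.ell := mul_nonneg Y.hnu0.le (by linarith [Y.hell])
  have := Y.hnu
  nlinarith [mul_le_mul_of_nonneg_left h h0]

lemma kap_NP_ell_le : Y.kap * N * P * Y.ell ≤ 1 / 10 ^ 6 := by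
  have hm : (1 : ℝ) ≤ m := by exact_mod_cast Y.hm
  have hl := Y.hell
  have h0 : 0 ≤ Y.kap * N * P * Y.ell := by have := Y.hkap0; positivity
  have := Y.hkap
  nlinarith [mul_le_mul_of_nonneg_left hm h0]

lemma kap_NP_le : Y.kap * N * P ≤ 1 / 10 ^ 6 := by
  have hl := Y.hell
  have h0 : 0 ≤ Y.kap * N * P := by have := Y.hkap0; positivity
  have := Y.kap_NP_ell_le
  nlinarith [mul_le_mul_of_nonneg_left hl h0]

lemma tau_nonneg : 0 ≤ Y.tau := by
  have hl := Y.hell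
  have := Y.hkap0
  have := Y.hnu0
  rw [Y.htau]; positivity

lemma tau_le : Y.tau ≤ 1 / 10 := by
  have h1 := Y.nu_ell_le
  have h2 := Y.kap_NP_ell_le
  rw [Y.htau]; linarith

lemma m_P_tau_le : 1728 * (m * P * Y.tau ^ 3) ≤ 1 := by
  have hm : (1 : ℝ) ≤ m := by exact_mod_cast Y.hm
  have h0 : 0 ≤ (m : ℝ) * P * Y.tau ^ 3 := by have := Y.tau_nonneg; positivity
  have := Y.htaum
  nlinarith [mul_le_mul_of_nonneg_left hm h0]

lemma cross_le {t : ℕ} {a : Fin m} (hr : ∀ z, 0 ≤ Y.r t z a) (z : Fin N × Fin P) :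
    |Y.n t z a - (Y.n0 z a + Y.r t z a * Y.k z z)| ≤ Y.kap * ∑ z', Y.r t z' a := by
  rw [Y.hn, ← Finset.add_sum_erase _ _ (mem_univ z)]
  have e : Y.n0 z a + (Y.r t z a * Y.k z z + ∑ z' ∈ univ.erase z, Y.r t z' a * Y.k z' z) -
      (Y.n0 z a + Y.r t z a * Y.k z z) = ∑ z' ∈ univ.erase z, Y.r t z' a * Y.k z' z := by ring
  rw [e]
  refine (Finset.abs_sum_le_sum_abs _ _).trans ?_
  rw [mul_sum]
  refine (Finset.sum_le_sum (g := fun z' => Y.kap * Y.r t z' a) ?_).trans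
    (Finset.sum_le_sum_of_subset_of_nonneg (Finset.erase_subset _ _)
      fun i _ _ => mul_nonneg Y.hkap0 (hr i))
  intro z' hz'
  rw [abs_mul, abs_of_nonneg (hr z'), mul_comm]
  exact mul_le_mul_of_nonneg_right (Y.hko _ _ (Finset.ne_of_mem_erase hz')) (hr z')

/-- The crude a priori bounds. -/
def Inv (t : ℕ) : Prop :=
  (∀ a, Y.s 0 a ≤ Y.s t a ∧ Y.s t a ≤ 4 * Y.ell + 1 + t / T) ∧
    ∀ z a, 0 ≤ Y.r t z a ∧ Y.r t z a * Y.k z z ≤ 4 * Y.ell + 1 + t / T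

section InvConsequences

variable {Y} {t : ℕ}

lemma time_div_le (Y : Sys N m P T) (ht : t ≤ T) : (t : ℝ) / T ≤ 1 := by
  have hT : (0 : ℝ) < T := by exact_mod_cast Y.hT
  rw [div_le_one hT]
  exact_mod_cast ht

lemma Inv.s_le (h : Y.Inv t) (ht : t ≤ T) (a : Fin m) : Y.s t a ≤ 6 * Y.ell := by
  linarith [(h.1 a).2, Y.time_div_le ht, Y.hell]

lemma Inv.s_ge (h : Y.Inv t) (a : Fin m) : -Y.s0 ≤ Y.s t a := by
  linarith [(h.1 a).1, (abs_le.1 (Y.hs0 a)).1]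

lemma Inv.v_le (h : Y.Inv t) (ht : t ≤ T) (z : Fin N × Fin P) (a : Fin m) :
    Y.r t z a * Y.k z z ≤ 6 * Y.ell := by
  linarith [(h.2 z a).2, Y.time_div_le ht, Y.hell]

lemma Inv.r_le (h : Y.Inv t) (ht : t ≤ T) (z : Fin N × Fin P) (a : Fin m) : Y.r t z a ≤ 12 * Y.ell := by
  nlinarith [h.v_le ht z a, (h.2 z a).1, (Y.hkd z).1]

lemma Inv.sum_r_le (h : Y.Inv t) (ht : t ≤ T) (a : Fin m) : ∑ z, Y.r t z a ≤ N * P * (12 * Y.ell) := by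
  refine (Finset.sum_le_card_nsmul _ _ _ fun z _ => h.r_le ht z a).trans ?_
  simp

lemma Inv.abs_n_sub_le (h : Y.Inv t) (ht : t ≤ T) (z : Fin N × Fin P) (a : Fin m) :
    |Y.n t z a - Y.r t z a * Y.k z z| ≤ Y.tau := by
  have h1 := Y.cross_le (fun z => (h.2 z a).1) z
  have h2 := mul_le_mul_of_nonneg_left (h.sum_r_le ht a) Y.hkap0
  have h3 := Y.hn0 z a
  rw [Y.htau]
  rw [abs_le] at *
  constructor <;> linarith [h1.1, h1.2, h3.1, h3.2]

lemma Inv.neg_tau_le_n (h : Y.Inv t) (ht : t ≤ T) (z : Fin N × Fin P) (a : Fin m) : -Y.tau ≤ Y.n t z a := by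
  have h1 := abs_le.1 (h.abs_n_sub_le ht z a)
  have h2 := mul_nonneg (h.2 z a).1 (by linarith [(Y.hkd z).1] : 0 ≤ Y.k z z)
  linarith [h1.1]

lemma Inv.n_le (h : Y.Inv t) (ht : t ≤ T) (z : Fin N × Fin P) (a : Fin m) : Y.n t z a ≤ 7 * Y.ell := by
  have h1 := abs_le.1 (h.abs_n_sub_le ht z a)
  linarith [h1.2, h.v_le ht z a, Y.tau_le, Y.hell]

lemma Inv.sum_n_ge (h : Y.Inv t) (ht : t ≤ T) (i : Fin N) :
    -(1 / 1728) ≤ ∑ a, ∑ j, Y.n t (i, j) a ^ 3 := by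
  have h1 : ∑ _a : Fin m, ∑ _j : Fin P, (-Y.tau) ^ 3 ≤ ∑ a, ∑ j, Y.n t (i, j) a ^ 3 :=
    Finset.sum_le_sum fun a _ => Finset.sum_le_sum fun j _ =>
      cube_le_cube (h.neg_tau_le_n ht (i, j) a)
  simp only [sum_const, card_univ, Fintype.card_fin, nsmul_eq_mul] at h1
  nlinarith [Y.m_P_tau_le]

lemma Inv.cube_n_le (h : Y.Inv t) (ht : t ≤ T) (i : Fin N) (j : Fin P) (a : Fin m) :
    Y.n t (i, j) a ^ 3 - 1 / 1728 ≤ ∑ a, ∑ j, Y.n t (i, j) a ^ 3 := by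
  have hmp := Y.m_P_tau_le
  have ht0 := Y.tau_nonneg
  have h1 : ∑ _a : Fin m × Fin P, (-Y.tau) ^ 3 + Y.n t (i, j) a ^ 3 ≤
      ∑ x : Fin m × Fin P, Y.n t (i, x.2) x.1 ^ 3 := by
    rw [← Finset.add_sum_erase _ (fun x : Fin m × Fin P => Y.n t (i, x.2) x.1 ^ 3)
      (mem_univ (a, j)), add_comm]
    gcongr
    rw [← Finset.add_sum_erase _ _ (mem_univ (a, j))]
    have : (-Y.tau) ^ 3 ≤ 0 := by
      have : 0 ≤ Y.tau ^ 3 := by positivity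
      nlinarith
    have h2 : ∑ x ∈ univ.erase (a, j), (-Y.tau) ^ 3 ≤
        ∑ x ∈ univ.erase (a, j), Y.n t (i, x.2) x.1 ^ 3 :=
      Finset.sum_le_sum fun x _ => cube_le_cube (h.neg_tau_le_n ht (i, x.2) x.1)
    linarith
  rw [← Fintype.sum_prod_type (f := fun x : Fin m × Fin P => Y.n t (i, x.2) x.1 ^ 3)]
  simp only [sum_const, card_univ, Fintype.card_prod, Fintype.card_fin, nsmul_eq_mul,
    Nat.cast_mul] at h1
  nlinarith

lemma Inv.cube_s_le (h : Y.Inv t) (a : Fin m) : Y.s t a ^ 3 - 1 / 4 ≤ ∑ a, Y.s t a ^ 3 := by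
  have hm := Y.hs0m
  have hs0 : 0 ≤ Y.s0 := (abs_nonneg _).trans (Y.hs0 a)
  rw [← Finset.add_sum_erase _ _ (mem_univ a)]
  have h2 : ∑ x ∈ univ.erase a, (-Y.s0) ^ 3 ≤ ∑ x ∈ univ.erase a, Y.s t x ^ 3 :=
    Finset.sum_le_sum fun x _ => cube_le_cube (h.s_ge x)
  have h3 : ∑ x : Fin m, (-Y.s0) ^ 3 ≤ ∑ x ∈ univ.erase a, (-Y.s0) ^ 3 := by
    rw [← Finset.add_sum_erase _ _ (mem_univ a)]
    have : 0 ≤ Y.s0 ^ 3 := by positivity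
    nlinarith
  rw [sum_const, card_univ, Fintype.card_fin, nsmul_eq_mul] at h3
  nlinarith

lemma Inv.sum_s_ge (h : Y.Inv t) : -(1 / 4) ≤ ∑ a, Y.s t a ^ 3 := by
  have hm := Y.hs0m
  have h2 : ∑ x : Fin m, (-Y.s0) ^ 3 ≤ ∑ x, Y.s t x ^ 3 :=
    Finset.sum_le_sum fun x _ => cube_le_cube (h.s_ge x)
  simp only [sum_const, card_univ, Fintype.card_fin, nsmul_eq_mul] at h2
  nlinarith

lemma Inv.M_ge_n (h : Y.Inv t) (ht : t ≤ T) (i : Fin N) (j : Fin P) (a : Fin m) :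
    Y.n t (i, j) a ^ 3 - 1 ≤ Y.M t i := by
  rw [Y.hM]
  have h1 := h.cube_n_le ht i j a
  have h2 := h.sum_s_ge
  by_cases hi : i ∈ Y.SL
  · obtain ⟨hb, hb'⟩ := Y.hbetaL t i hi
    nlinarith
  · rw [Y.hbetaU t i hi]; linarith

lemma Inv.M_ge_sum (h : Y.Inv t) (ht : t ≤ T) {i : Fin N} (hi : i ∈ Y.SL) :
    (∑ a, Y.s t a ^ 3) / 8 - 1 / 2 ≤ Y.M t i := by
  rw [Y.hM]
  have h1 := h.sum_n_ge ht i
  have h2 := h.sum_s_ge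
  obtain ⟨hb, hb'⟩ := Y.hbetaL t i hi
  nlinarith

lemma Inv.neg_one_le_M (h : Y.Inv t) (ht : t ≤ T) (i : Fin N) : -1 ≤ Y.M t i := by
  rw [Y.hM]
  have h1 := h.sum_n_ge ht i
  have h2 := h.sum_s_ge
  by_cases hi : i ∈ Y.SL
  · obtain ⟨hb, hb'⟩ := Y.hbetaL t i hi
    nlinarith
  · rw [Y.hbetaU t i hi]; linarith

lemma Inv.M_ge_s (h : Y.Inv t) (ht : t ≤ T) {i : Fin N} (hi : i ∈ Y.SL) (a : Fin m) :
    Y.s t a ^ 3 / 8 - 1 ≤ Y.M t i := by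
  have h1 := h.cube_s_le a
  have h2 := h.M_ge_sum ht hi
  linarith

lemma Inv.sum_s_le (h : Y.Inv t) (ht : t ≤ T) : ∑ a, Y.s t a ^ 3 ≤ m * (6 * Y.ell) ^ 3 := by
  have h2 : ∑ x : Fin m, Y.s t x ^ 3 ≤ ∑ x : Fin m, (6 * Y.ell) ^ 3 :=
    Finset.sum_le_sum fun x _ => cube_le_cube (h.s_le ht x)
  simpa using h2

lemma Inv.M_le (h : Y.Inv t) (ht : t ≤ T) (i : Fin N) : Y.M t i ≤ Y.Gam := by
  have h1 := h.sum_s_le ht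
  have hP : (1 : ℝ) ≤ P := by exact_mod_cast Y.hP
  have hl := Y.hell
  have h2 : ∑ a, ∑ j, Y.n t (i, j) a ^ 3 ≤ ∑ _a : Fin m, ∑ _j : Fin P, (7 * Y.ell) ^ 3 :=
    Finset.sum_le_sum fun a _ => Finset.sum_le_sum fun j _ =>
      cube_le_cube (h.n_le ht (i, j) a)
  simp only [sum_const, card_univ, Fintype.card_fin, nsmul_eq_mul] at h2
  have h0 : 0 ≤ m * Y.ell ^ 3 := by positivity
  have h3 : (m : ℝ) * Y.ell ^ 3 ≤ m * P * Y.ell ^ 3 := by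
    nlinarith [mul_le_mul_of_nonneg_left hP h0]
  have h4 : Y.beta t i * ∑ a, Y.s t a ^ 3 ≤ m * (6 * Y.ell) ^ 3 := by
    have h5 : (0 : ℝ) ≤ m * (6 * Y.ell) ^ 3 := by positivity
    by_cases hi : i ∈ Y.SL
    · obtain ⟨hb, hb'⟩ := Y.hbetaL t i hi
      nlinarith
    · rw [Y.hbetaU t i hi]; linarith
  rw [Y.hM]
  have h6 := Y.hGam
  have h7 : (m : ℝ) * (6 * Y.ell) ^ 3 = 216 * (m * Y.ell ^ 3) := by ring
  have h8 : (m : ℝ) * (P * (7 * Y.ell) ^ 3) = 343 * (m * P * Y.ell ^ 3) := by ring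
  linarith

lemma Inv.g_nonneg (h : Y.Inv t) (ht : t ≤ T) (i : Fin N) : 0 ≤ Y.g t i := by
  rw [Y.hg, sub_nonneg]
  exact psi_antitone ((h.M_le ht i).trans (Y.hgam i))

end InvConsequences

lemma g_le_exp (t : ℕ) (i : Fin N) : Y.g t i ≤ Real.exp (-Y.M t i) := by
  rw [Y.hg]
  linarith [psi_le_exp_neg (Y.M t i), psi_pos (Y.gam i)]

lemma g_le_one (t : ℕ) (i : Fin N) : Y.g t i ≤ 1 := by
  rw [Y.hg]
  linarith [psi_le_one (Y.M t i), psi_pos (Y.gam i)]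

lemma le_g {t : ℕ} {i : Fin N} {L : ℝ} (hL : 0 ≤ L) (hLG : L + 2 ≤ Y.Gam) (hM : Y.M t i ≤ L) :
    Real.exp (-L) / 4 ≤ Y.g t i := by
  rw [Y.hg]
  have h1 := half_exp_neg_le_psi hL hM
  have h2 : psi (Y.gam i) ≤ Real.exp (-L) / 4 := by
    refine (psi_le_exp_neg _).trans ?_
    have h3 : Real.exp (-Y.gam i) ≤ Real.exp (-L + -2) :=
      Real.exp_le_exp.2 (by linarith [Y.hgam i])
    rw [Real.exp_add] at h3
    have h4 : Real.exp (-2) ≤ 1 / 4 := by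
      rw [Real.exp_neg, ← one_div]
      refine one_div_le_one_div_of_le (by norm_num) ?_
      have : Real.exp 2 = Real.exp 1 * Real.exp 1 := by rw [← Real.exp_add]; norm_num
      nlinarith [Real.exp_one_gt_d9]
    nlinarith [Real.exp_pos (-L)]
  linarith

/-- The common growth rate of the signal coordinates. -/
def rate (t : ℕ) : ℝ := Y.etas / N * ∑ i, Y.g t i * Y.beta t i

lemma rate_eq (t : ℕ) : Y.rate t = Y.etas / N * ∑ i ∈ Y.SL, Y.g t i * Y.beta t i := by
  unfold rate
  congr 1
  symm
  refine Finset.sum_subset (subset_univ _) fun i _ hi => ?_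
  rw [Y.hbetaU t i hi, mul_zero]

lemma s_succ (t : ℕ) (a : Fin m) : Y.s (t + 1) a = Y.s t a + Y.rate t * Y.s t a ^ 2 := Y.hs t a

lemma rate_le {t : ℕ} {c : ℝ} (hc : 0 ≤ c)
    (hg : ∀ i ∈ Y.SL, Y.g t i ≤ c) : Y.rate t ≤ Y.etas * c := by
  have hN : (0 : ℝ) < N := by exact_mod_cast Y.hN
  rw [rate_eq]
  have h1 : ∑ i ∈ Y.SL, Y.g t i * Y.beta t i ≤ N * c := by
    calc _ ≤ ∑ i ∈ Y.SL, c := Finset.sum_le_sum fun i hi => by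
            obtain ⟨hb, hb'⟩ := Y.hbetaL t i hi
            nlinarith [hg i hi]
      _ = Y.SL.card * c := by simp
      _ ≤ N * c := by
            gcongr
            exact_mod_cast (card_le_univ _).trans (by simp)
  have h0 := Y.hetas0
  calc _ ≤ Y.etas / N * (N * c) := by gcongr
    _ = _ := by field_simp

lemma rate_nonneg {t : ℕ} (hg0 : ∀ i, 0 ≤ Y.g t i) : 0 ≤ Y.rate t := by
  rw [rate_eq]
  have h0 := Y.hetas0
  refine mul_nonneg (by positivity) (Finset.sum_nonneg fun i hi => ?_)
  exact mul_nonneg (hg0 i) (by linarith [(Y.hbetaL t i hi).1])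

lemma exp_neg_le_inv_sq {x : ℝ} (hx : 2 * Y.ell ^ 2 ≤ x) :
    Real.exp (-x) ≤ 1 / (T : ℝ) := by
  have hT : (0 : ℝ) < T := by exact_mod_cast Y.hT
  have h1 : Real.exp (-x) ≤ Real.exp (-Real.log T) := by
    apply Real.exp_le_exp.2
    have := Y.hlogT
    have := sq_nonneg Y.ell
    linarith
  rwa [Real.exp_neg (Real.log T), Real.exp_log hT, ← one_div] at h1

lemma inv (t : ℕ) (ht : t ≤ T) : Y.Inv t := by
  induction t with
  | zero =>
    refine ⟨fun a => ⟨le_rfl, ?_⟩, fun z a => ?_⟩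
    · have := (abs_le.1 (Y.hs0 a)).2
      simp
      linarith [Y.hs01, Y.hell]
    · simp [Y.hr0]; linarith [Y.hell]
  | succ t ih =>
    have h := ih (by omega)
    have ht' : t ≤ T := by omega
    have hT : (0 : ℝ) < T := by exact_mod_cast Y.hT
    have hN : (1 : ℝ) ≤ N := by exact_mod_cast Y.hN
    have hl := Y.hell
    have hl2 : Y.ell ^ 2 ≤ Y.ell ^ 3 := pow_le_pow_right₀ hl (by norm_num)
    have hl1 : 1 ≤ Y.ell ^ 2 := one_le_pow₀ hl
    have hg0 := h.g_nonneg ht'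
    have hrate := Y.rate_nonneg hg0
    have htT : ((t + 1 : ℕ) : ℝ) / T = t / T + 1 / T := by push_cast; ring
    have htT0 : 0 ≤ (t : ℝ) / T := by positivity
    have hT1 : 0 < 1 / (T : ℝ) := by positivity
    refine ⟨fun a => ?_, fun z a => ?_⟩
    · rw [Y.s_succ, htT]
      refine ⟨by nlinarith [(h.1 a).1, sq_nonneg (Y.s t a)], ?_⟩
      have hs6 : Y.s t a ^ 2 ≤ 36 * Y.ell ^ 2 := by
        have h1 := h.s_le ht' a
        have h2 := h.s_ge a
        have h3 := Y.hs01
        nlinarith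
      have hinc : Y.rate t * Y.s t a ^ 2 ≤ (Y.rate t / Y.etas) := by
        have : Y.rate t * Y.s t a ^ 2 ≤ Y.rate t * (36 * Y.ell ^ 2) := by gcongr
        rw [le_div_iff₀ Y.hetas0]
        have h3 : Y.etas * (36 * Y.ell ^ 2) ≤ 1 := by nlinarith [Y.hetas]
        calc _ ≤ Y.rate t * (36 * Y.ell ^ 2) * Y.etas := by
                have := Y.hetas0; gcongr
          _ = Y.rate t * (Y.etas * (36 * Y.ell ^ 2)) := by ring
          _ ≤ Y.rate t * 1 := by gcongr
          _ = _ := mul_one _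
      by_cases hcase : Y.s t a ≤ 4 * Y.ell
      · have h1 := Y.rate_le zero_le_one (fun i _ => Y.g_le_one t i)
        have h2 : Y.rate t / Y.etas ≤ 1 := by rw [div_le_one Y.hetas0]; linarith
        linarith
      · push Not at hcase
        have h1 : Y.rate t ≤ Y.etas * (1 / T) := by
          refine Y.rate_le hT1.le (fun i hi => (Y.g_le_exp t i).trans ?_)
          apply Y.exp_neg_le_inv_sq
          have h2 := h.M_ge_s ht' hi a
          have h3 : (4 * Y.ell) ^ 3 ≤ Y.s t a ^ 3 := by gcongr
          nlinarith
        have h2 : Y.rate t / Y.etas ≤ 1 / T := by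
          rw [div_le_iff₀ Y.hetas0]; linarith
        linarith [(h.1 a).2]
    · rw [Y.hr, htT]
      have hk := Y.hkd z
      have hr0 := (h.2 z a).1
      have he := Y.hetan0
      have hinc0 : 0 ≤ Y.etan / N * Y.g t z.1 * Y.n t z a ^ 2 := by
        have := hg0 z.1
        positivity
      refine ⟨by linarith, ?_⟩
      have hn2 : Y.n t z a ^ 2 ≤ 49 * Y.ell ^ 2 := by
        have h1 := h.n_le ht' z a
        have h2 := h.neg_tau_le_n ht' z a
        have h3 := Y.tau_le
        nlinarith
      have hinc : Y.etan / N * Y.g t z.1 * Y.n t z a ^ 2 * Y.k z z ≤ Y.g t z.1 := by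
        have hgz := hg0 z.1
        calc _ ≤ Y.etan / 1 * Y.g t z.1 * (49 * Y.ell ^ 2) * (3 / 2) := by
              gcongr
              · linarith
              · exact hk.2
          _ = Y.g t z.1 * (49 * 3 / 2 * (Y.etan * Y.ell ^ 2)) := by ring
          _ ≤ Y.g t z.1 * 1 := by
              gcongr
              linarith [Y.hetan]
          _ = _ := mul_one _
      rw [add_mul]
      by_cases hcase : Y.r t z a * Y.k z z ≤ 4 * Y.ell
      · linarith [Y.g_le_one t z.1]
      · push Not at hcase
        have h1 : Y.g t z.1 ≤ 1 / T := by
          refine (Y.g_le_exp t z.1).trans (Y.exp_neg_le_inv_sq ?_)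
          have h2 := h.M_ge_n ht' z.1 z.2 a
          have h4 := abs_le.1 (h.abs_n_sub_le ht' z a)
          have h5 : 3 * Y.ell ≤ Y.n t z a := by linarith [Y.tau_le]
          have h3 : (3 * Y.ell) ^ 3 ≤ Y.n t z a ^ 3 := by gcongr
          simp only [Prod.mk.eta] at h2
          nlinarith
        linarith [(h.2 z a).2]

lemma rate_nonneg' {t : ℕ} (ht : t ≤ T) : 0 ≤ Y.rate t :=
  Y.rate_nonneg ((Y.inv t ht).g_nonneg ht)

lemma s_mono {t t' : ℕ} (htt : t ≤ t') (ht : t' ≤ T) (a : Fin m) : Y.s t a ≤ Y.s t' a := by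
  induction t', htt using Nat.le_induction with
  | base => exact le_rfl
  | succ n hn ih =>
    refine (ih (by omega)).trans ?_
    rw [Y.s_succ]
    nlinarith [Y.rate_nonneg' (show n ≤ T by omega), sq_nonneg (Y.s n a)]

lemma r_mono {t t' : ℕ} (htt : t ≤ t') (ht : t' ≤ T) (z : Fin N × Fin P) (a : Fin m) :
    Y.r t z a ≤ Y.r t' z a := by
  induction t', htt using Nat.le_induction with
  | base => exact le_rfl
  | succ n hn ih =>
    refine (ih (by omega)).trans ?_
    rw [Y.hr]
    have := (Y.inv n (by omega)).g_nonneg (by omega) z.1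
    have := Y.hetan0
    have : 0 ≤ Y.etan / N * Y.g n z.1 * Y.n n z a ^ 2 := by positivity
    linarith

/-- Total signal strength. -/
def str (t : ℕ) : ℝ := ∑ a, Y.s t a ^ 3

lemma str_mono {t t' : ℕ} (htt : t ≤ t') (ht : t' ≤ T) : Y.str t ≤ Y.str t' :=
  Finset.sum_le_sum fun a _ => cube_le_cube (Y.s_mono htt ht a)

end Sys

namespace Sys

variable {N m P T : ℕ} (Y : Sys N m P T)

lemma rate_ge {t : ℕ} {c : ℝ} (hc : 0 ≤ c) (hg : ∀ i ∈ Y.SL, c ≤ Y.g t i) :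
    Y.etas * c / 16 ≤ Y.rate t := by
  have hN : (0 : ℝ) < N := by exact_mod_cast Y.hN
  have h0 := Y.hetas0
  have hcard : (Y.SL.card : ℝ) + (Y.SLᶜ.card : ℝ) = N := by
    exact_mod_cast (Finset.card_add_card_compl Y.SL).trans (Fintype.card_fin N)
  have hU := Y.hU2
  have h1 : N / 2 * (c / 8) ≤ ∑ i ∈ Y.SL, Y.g t i * Y.beta t i := by
    calc N / 2 * (c / 8) ≤ Y.SL.card * (c / 8) := by gcongr; linarith
      _ = ∑ i ∈ Y.SL, c / 8 := by simp
      _ ≤ _ := Finset.sum_le_sum fun i hi => by nlinarith [(Y.hbetaL t i hi).1, hg i hi]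
  rw [rate_eq]
  calc Y.etas * c / 16 = Y.etas / N * (N / 2 * (c / 8)) := by field_simp; ring
    _ ≤ _ := by gcongr

lemma sum_g_le_rate {t : ℕ} (ht : t ≤ T) :
    Y.etas / N * (1 / 8) * ∑ i ∈ Y.SL, Y.g t i ≤ Y.rate t := by
  have h0 := Y.hetas0
  rw [rate_eq, mul_assoc, mul_sum]
  refine mul_le_mul_of_nonneg_left (Finset.sum_le_sum fun i hi => ?_) (by positivity)
  have := (Y.inv t ht).g_nonneg ht i
  nlinarith [(Y.hbetaL t i hi).1]

lemma rate_mul_s_le {t : ℕ} (ht : t ≤ T) (a : Fin m) : Y.rate t * Y.s t a ≤ 1 := by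
  have h := Y.inv t ht
  have h1 := Y.rate_le zero_le_one (fun i _ => Y.g_le_one t i)
  have h2 := Y.rate_nonneg' ht
  have hl := Y.hell
  have h0 := Y.hetas0
  calc Y.rate t * Y.s t a ≤ Y.rate t * (6 * Y.ell) := by gcongr; exact h.s_le ht a
    _ ≤ (Y.etas * 1) * (6 * Y.ell) := by gcongr
    _ ≤ 6 * (Y.etas * Y.ell ^ 2) := by
        have : Y.ell ≤ Y.ell ^ 2 := by nlinarith
        nlinarith [mul_le_mul_of_nonneg_left this h0.le]
    _ ≤ 1 := by linarith [Y.hetas]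

lemma sum_rate_Ico_le {t0 t : ℕ} (htt : t0 ≤ t) (ht : t ≤ T) {a : Fin m} (ha : 0 < Y.s t0 a) :
    ∑ t' ∈ Ico t0 t, Y.rate t' ≤ 2 / Y.s t0 a := by
  rw [Finset.sum_Ico_eq_sum_range]
  refine sum_rate_le (u := fun n => Y.s (t0 + n) a) (c := fun n => Y.rate (t0 + n)) ha ?_ ?_ ?_
  · intro t' h'
    exact Y.rate_nonneg' (by omega)
  · intro t' h'
    exact Y.rate_mul_s_le (by omega) a
  · intro t' h'
    exact (Y.s_succ (t0 + t') a).ge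

lemma r_eq_add_sum {t0 t : ℕ} (htt : t0 ≤ t) (z : Fin N × Fin P) (a : Fin m) :
    Y.r t z a = Y.r t0 z a + ∑ t' ∈ Ico t0 t, Y.etan / N * Y.g t' z.1 * Y.n t' z a ^ 2 := by
  induction t, htt using Nat.le_induction with
  | base => simp
  | succ n hn ih => rw [Y.hr, ih, Finset.sum_Ico_succ_top hn]; ring

lemma M_le_of_n_le {t : ℕ} {i : Fin N} {S b : ℝ} (hS : 0 ≤ S) (hstr : Y.str t ≤ S)
    (hn : ∀ j a, Y.n t (i, j) a ≤ b) (hb : m * P * b ^ 3 ≤ 1) : Y.M t i ≤ S + 1 := by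
  rw [Y.hM]
  have h1 : ∑ a, ∑ j, Y.n t (i, j) a ^ 3 ≤ ∑ _a : Fin m, ∑ _j : Fin P, b ^ 3 :=
    Finset.sum_le_sum fun a _ => Finset.sum_le_sum fun j _ => cube_le_cube (hn j a)
  simp only [sum_const, card_univ, Fintype.card_fin, nsmul_eq_mul] at h1
  unfold str at hstr
  have h2 : Y.beta t i * ∑ a, Y.s t a ^ 3 ≤ S := by
    by_cases hi : i ∈ Y.SL
    · obtain ⟨hb, hb'⟩ := Y.hbetaL t i hi
      nlinarith
    · rw [Y.hbetaU t i hi]; linarith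
  linarith

lemma sum_r_le_of_r_le {t : ℕ} {b : ℝ} {a : Fin m} (h : ∀ z, Y.r t z a ≤ b) :
    ∑ z, Y.r t z a ≤ N * P * b := by
  refine (Finset.sum_le_card_nsmul _ _ _ fun z _ => h z).trans ?_
  simp

lemma abs_n_le_of_r_le_nu {t : ℕ} (ht : t ≤ T) (hr : ∀ z a, Y.r t z a ≤ Y.nu)
    (z : Fin N × Fin P) (a : Fin m) : |Y.n t z a| ≤ 7 * (Y.nu * Y.ell) := by
  have h := Y.inv t ht
  have hl := Y.hell
  have hν := Y.hnu0
  have h1 := abs_le.1 (Y.cross_le (fun z => (h.2 z a).1) z)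
  have h2 := mul_le_mul_of_nonneg_left (Y.sum_r_le_of_r_le fun z => hr z a) Y.hkap0
  have h3 := abs_le.1 (Y.hn0 z a)
  have h4 : Y.kap * (N * P * Y.nu) ≤ Y.nu := by nlinarith [Y.kap_NP_le]
  have h5 : Y.r t z a * Y.k z z ≤ Y.nu * (3 / 2) :=
    mul_le_mul (hr z a) (Y.hkd z).2 (by linarith [(Y.hkd z).1]) hν.le
  have h6 : 0 ≤ Y.r t z a * Y.k z z := mul_nonneg (h.2 z a).1 (by linarith [(Y.hkd z).1])
  have h7 : Y.nu ≤ Y.nu * Y.ell := by nlinarith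
  rw [abs_le]
  constructor <;> linarith [h1.1, h1.2, h3.1, h3.2]

lemma m_P_cube_le {b : ℝ} (hb : b ≤ 3 * Y.tau) : m * P * b ^ 3 ≤ 1 := by
  have h1 := cube_le_cube hb
  have h2 : (m : ℝ) * P * b ^ 3 ≤ m * P * (3 * Y.tau) ^ 3 := by gcongr
  have h3 := Y.m_P_tau_le
  nlinarith

lemma rate_ge_of_str_le_one {t : ℕ} (ht : t ≤ T) (hstr : Y.str t ≤ 1)
    (hr : ∀ z a, Y.r t z a ≤ Y.nu) : Y.etas / 512 ≤ Y.rate t := by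
  have hb : 7 * (Y.nu * Y.ell) ≤ 3 * Y.tau := by
    have h1 : 0 ≤ Y.nu * Y.ell := mul_nonneg Y.hnu0.le (by linarith [Y.hell])
    have h2 : 0 ≤ Y.kap * N * P * Y.ell := by
      have := Y.hkap0; have := Y.hell; positivity
    rw [Y.htau]; linarith
  have hG : (1 + 1 : ℝ) + 2 ≤ Y.Gam := by
    have := Y.hGam
    have hl := Y.hell
    have : 0 ≤ (m : ℝ) * P * Y.ell ^ 3 := by positivity
    linarith
  have h1 := Y.rate_ge (t := t) (c := 1 / 32) (by norm_num) fun i _ => by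
    have hM := Y.M_le_of_n_le (t := t) (i := i) zero_le_one hstr
      (fun j a => (abs_le.1 (Y.abs_n_le_of_r_le_nu ht hr (i, j) a)).2) (Y.m_P_cube_le hb)
    have hg := Y.le_g (by norm_num) hG hM
    refine le_trans ?_ hg
    have : Real.exp (-(1 + 1)) = 1 / (Real.exp 1 * Real.exp 1) := by
      rw [Real.exp_neg, Real.exp_add, one_div]
    rw [this, div_div, one_div_le_one_div (by norm_num) (by positivity)]
    nlinarith [Real.exp_one_lt_d9, Real.exp_one_gt_d9]
  linarith

lemma r_le_nu_of_early {t : ℕ} (ht : t ≤ T) (hstr : ∀ t' < t, Y.str t' ≤ 1)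
    (z : Fin N × Fin P) (a : Fin m) : Y.r t z a ≤ Y.nu := by
  induction t using Nat.strong_induction_on generalizing z a with
  | _ t ih =>
    have hN : (0 : ℝ) < N := by exact_mod_cast Y.hN
    have hIH : ∀ t' < t, ∀ z a, Y.r t' z a ≤ Y.nu := fun t' h' z a =>
      ih t' h' (by omega) (fun t'' h'' => hstr t'' (by omega)) z a
    obtain ⟨a0, ha0⟩ := Y.hs0big
    have hsg := Y.hsg0
    have hpos : 0 < Y.s 0 a0 := lt_of_lt_of_le hsg ha0
    have h1 := Y.sum_rate_Ico_le (Nat.zero_le t) ht hpos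
    have h2 : t * (Y.etas / 512) ≤ ∑ t' ∈ Ico 0 t, Y.rate t' := by
      have : ∑ t' ∈ Ico 0 t, Y.etas / 512 ≤ ∑ t' ∈ Ico 0 t, Y.rate t' := by
        refine Finset.sum_le_sum fun t' h' => ?_
        have h' := (Finset.mem_Ico.1 h').2
        exact Y.rate_ge_of_str_le_one (by omega) (hstr t' h') (hIH t' h')
      simpa using this
    have h3 : t * Y.etas * Y.sg ≤ 1024 := by
      have h4 : 2 / Y.s 0 a0 ≤ 2 / Y.sg := div_le_div_of_nonneg_left (by norm_num) hsg ha0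
      have h5 : t * (Y.etas / 512) ≤ 2 / Y.sg := by linarith
      rw [le_div_iff₀ hsg] at h5
      linarith
    have h6 := Y.r_eq_add_sum (Nat.zero_le t) z a
    rw [Y.hr0, zero_add] at h6
    have hl := Y.hell
    have hν := Y.hnu0
    have he := Y.hetan0
    have h7 : Y.r t z a ≤ t * (Y.etan / N * 1 * (7 * (Y.nu * Y.ell)) ^ 2) := by
      rw [h6]
      have : ∑ t' ∈ Ico 0 t, Y.etan / N * Y.g t' z.1 * Y.n t' z a ^ 2 ≤
          ∑ t' ∈ Ico 0 t, Y.etan / N * 1 * (7 * (Y.nu * Y.ell)) ^ 2 := by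
        refine Finset.sum_le_sum fun t' h' => ?_
        have h' := (Finset.mem_Ico.1 h').2
        have hg0 := (Y.inv t' (by omega)).g_nonneg (by omega) z.1
        have hn2 : Y.n t' z a ^ 2 ≤ (7 * (Y.nu * Y.ell)) ^ 2 :=
          sq_le_sq' (abs_le.1 (Y.abs_n_le_of_r_le_nu (by omega) (hIH t' h') z a)).1
            (abs_le.1 (Y.abs_n_le_of_r_le_nu (by omega) (hIH t' h') z a)).2
        gcongr
        exact Y.g_le_one t' z.1
      simpa using this
    refine h7.trans ?_
    have h8 : (t : ℝ) * (Y.etan / N * 1 * (7 * (Y.nu * Y.ell)) ^ 2) =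
        Y.nu * (49 * (t * (Y.etan * Y.nu * Y.ell ^ 2)) / N) := by field_simp; ring
    rw [h8]
    have h9 : 49 * (t * (Y.etan * Y.nu * Y.ell ^ 2)) / N ≤ 1 := by
      rw [div_le_one hN]
      have h10 := mul_le_mul_of_nonneg_left Y.hphase1 (Nat.cast_nonneg (α := ℝ) t)
      have h11 := mul_le_mul_of_nonneg_right h3 hN.le
      nlinarith
    nlinarith

/-- Shifted noise coefficient. -/
def h (t : ℕ) (z : Fin N × Fin P) (a : Fin m) : ℝ := Y.n0 z a + Y.r t z a * Y.k z z

/-- Index set of the unlearnable noise coefficients. -/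
def idx : Finset ((Fin N × Fin P) × Fin m) := univ.filter fun x => x.1.1 ∉ Y.SL

lemma idx_nonempty : Y.idx.Nonempty := by
  obtain ⟨z, a, hz, _⟩ := Y.hn0big
  exact ⟨(z, a), by simp [idx, hz]⟩

/-- Largest shifted noise coefficient over the unlearnable samples. -/
def H (t : ℕ) : ℝ := Y.idx.sup' Y.idx_nonempty fun x => Y.h t x.1 x.2

lemma h_le_H (t : ℕ) {z : Fin N × Fin P} (hz : z.1 ∉ Y.SL) (a : Fin m) : Y.h t z a ≤ Y.H t :=
  Finset.le_sup' (fun x : (Fin N × Fin P) × Fin m => Y.h t x.1 x.2)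
    (show (z, a) ∈ Y.idx by simp [idx, hz])

lemma exists_h_eq_H (t : ℕ) : ∃ z a, z.1 ∉ Y.SL ∧ Y.h t z a = Y.H t := by
  obtain ⟨x, hx, hxe⟩ := Finset.exists_mem_eq_sup' Y.idx_nonempty
    fun x : (Fin N × Fin P) × Fin m => Y.h t x.1 x.2
  exact ⟨x.1, x.2, by simpa [idx] using hx, hxe.symm⟩

lemma h_mono {t t' : ℕ} (htt : t ≤ t') (ht : t' ≤ T) (z : Fin N × Fin P) (a : Fin m) :
    Y.h t z a ≤ Y.h t' z a := by
  unfold h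
  have := Y.r_mono htt ht z a
  have := (Y.hkd z).1
  gcongr

lemma H_mono {t t' : ℕ} (htt : t ≤ t') (ht : t' ≤ T) : Y.H t ≤ Y.H t' := by
  obtain ⟨z, a, hz, he⟩ := Y.exists_h_eq_H t
  rw [← he]
  exact (Y.h_mono htt ht z a).trans (Y.h_le_H t' hz a)

lemma nu_le_H {t : ℕ} (ht : t ≤ T) : Y.nu / 4 ≤ Y.H t := by
  obtain ⟨z, a, hz, hb⟩ := Y.hn0big
  refine le_trans ?_ (Y.H_mono (Nat.zero_le t) ht)
  refine le_trans ?_ (Y.h_le_H 0 hz a)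
  simpa [h, Y.hr0] using hb

lemma H_le {t : ℕ} (ht : t ≤ T) : Y.H t ≤ 8 * Y.ell := by
  obtain ⟨z, a, hz, he⟩ := Y.exists_h_eq_H t
  rw [← he, h]
  have h1 := (Y.inv t ht).v_le ht z a
  have h2 := (abs_le.1 (Y.hn0 z a)).2
  linarith [Y.nu_ell_le, Y.hell]

lemma r_le_H {t : ℕ} (ht : t ≤ T) {z : Fin N × Fin P} (hz : z.1 ∉ Y.SL) (a : Fin m) :
    Y.r t z a ≤ 2 * (Y.H t + 4 * Y.nu * Y.ell) := by
  have h1 := Y.h_le_H t hz a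
  have h2 := (abs_le.1 (Y.hn0 z a)).1
  have h3 := ((Y.inv t ht).2 z a).1
  unfold h at h1
  nlinarith [(Y.hkd z).1]

/-- Bound for the noise correlations on learnable samples. -/
def nbar (t : ℕ) : ℝ := 12 * (Y.nu * Y.ell) + 8 * (Y.kap * Y.SLᶜ.card * P * Y.H t)

lemma H_pos {t : ℕ} (ht : t ≤ T) : 0 < Y.H t := by linarith [Y.nu_le_H ht, Y.hnu0]

lemma nbar_nonneg {t : ℕ} (ht : t ≤ T) : 0 ≤ Y.nbar t := by
  have := Y.H_pos ht
  have := Y.hnu0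
  have := Y.hkap0
  have := Y.hell
  unfold nbar; positivity

lemma nbar_mono {t t' : ℕ} (htt : t ≤ t') (ht : t' ≤ T) : Y.nbar t ≤ Y.nbar t' := by
  have := Y.H_mono htt ht
  have := Y.hkap0
  unfold nbar; gcongr

lemma nbar_le_of_H {t : ℕ} (ht : t ≤ T) :
    Y.nbar t ≤ 12 * (Y.nu * Y.ell) + 64 * (Y.kap * Y.SLᶜ.card * P * Y.ell) := by
  have := Y.hkap0
  have h1 : Y.kap * Y.SLᶜ.card * P * Y.H t ≤ Y.kap * Y.SLᶜ.card * P * (8 * Y.ell) := by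
    gcongr; exact Y.H_le ht
  unfold nbar; linarith

lemma nbar_le_tau {t : ℕ} (ht : t ≤ T) : Y.nbar t ≤ 3 * Y.tau := by
  have h1 := Y.nbar_le_of_H ht
  have h0 := Y.hkap0
  have hl := Y.hell
  have h2 : Y.kap * Y.SLᶜ.card * P * Y.ell ≤ Y.kap * (N / 64) * P * Y.ell := by
    gcongr; linarith [Y.hU2]
  have h3 : 0 ≤ Y.kap * N * P * Y.ell := by positivity
  rw [Y.htau]
  nlinarith

lemma nbar_etan_le {t : ℕ} (ht : t ≤ T) : 320 * m * Y.nbar t * Y.etan ≤ Y.etas := by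
  have h1 := Y.nbar_le_of_H ht
  have h0 := Y.hkap0
  have hν := Y.hnu0
  have hl := Y.hell
  have hP : (1 : ℝ) ≤ P := by exact_mod_cast Y.hP
  have hes := Y.hetas0
  have hen := Y.hetan0
  have hnb := Y.nbar_nonneg ht
  have hl3 : 1 ≤ Y.ell ^ 3 := one_le_pow₀ hl
  have hl23 : Y.ell ^ 2 ≤ Y.ell ^ 3 := pow_le_pow_right₀ hl (by norm_num)
  have hl2 : 1 ≤ Y.ell ^ 2 := one_le_pow₀ hl
  have h2 : m * N * (Y.nu * Y.ell) ≤ 1 / 10 ^ 6 := by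
    have h3 : 0 ≤ Y.nu * N * m * Y.ell := by positivity
    nlinarith [Y.hnu, mul_le_mul_of_nonneg_left hP h3]
  have h4 : m * N * (Y.kap * Y.SLᶜ.card * P * Y.ell) ≤ Y.ell ^ 2 / 10 ^ 6 := by
    calc _ ≤ m * N * (Y.kap * Y.ell ^ 2 * P * Y.ell) := by gcongr; exact Y.hU1
      _ = Y.ell ^ 2 * (Y.kap * N * P * m * Y.ell) := by ring
      _ ≤ Y.ell ^ 2 * (1 / 10 ^ 6) := by gcongr; exact Y.hkap
      _ = _ := by ring
  have h5 : 320 * m * N * Y.nbar t ≤ Y.ell ^ 3 := by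
    have h6 : (m * N : ℝ) * Y.nbar t ≤
        m * N * (12 * (Y.nu * Y.ell) + 64 * (Y.kap * Y.SLᶜ.card * P * Y.ell)) := by gcongr
    nlinarith
  have h7 : (320 * m * Y.nbar t * Y.etan) * Y.ell ^ 3 ≤ Y.etas * Y.ell ^ 3 := by
    calc _ = 320 * m * Y.nbar t * (Y.etan * Y.ell ^ 3) := by ring
      _ ≤ 320 * m * Y.nbar t * (Y.etas * N) := 
          mul_le_mul_of_nonneg_left Y.hphase2 (by positivity)
      _ = Y.etas * (320 * m * N * Y.nbar t) := by ring
      _ ≤ Y.etas * Y.ell ^ 3 := by gcongr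
  exact le_of_mul_le_mul_right h7 (by positivity)

lemma exists_inv_m_le_s {t : ℕ} (h : 1 < Y.str t) : ∃ a, 1 / (m : ℝ) ≤ Y.s t a := by
  by_contra hcon
  push Not at hcon
  have hm : (1 : ℝ) ≤ m := by exact_mod_cast Y.hm
  have h1 : Y.str t ≤ ∑ _a : Fin m, (1 / (m : ℝ)) ^ 3 :=
    Finset.sum_le_sum fun a _ => cube_le_cube (hcon a).le
  have h2 : (1 / (m : ℝ)) ^ 3 ≤ 1 / m := by
    have h3 : 1 / (m : ℝ) ≤ 1 := by rw [div_le_one (by linarith)]; exact hm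
    calc (1 / (m : ℝ)) ^ 3 ≤ (1 / (m : ℝ)) ^ 1 :=
          pow_le_pow_of_le_one (by positivity) h3 (by norm_num)
      _ = _ := pow_one _
  simp only [sum_const, card_univ, Fintype.card_fin, nsmul_eq_mul] at h1
  have h4 : (m : ℝ) * (1 / (m : ℝ)) ^ 3 ≤ m * (1 / m) := by gcongr
  rw [mul_one_div_cancel (by positivity)] at h4
  linarith

/-- Bounds on the noise coefficients of the learnable samples. -/
def LearnableBound (t : ℕ) : Prop :=
  ∀ j a, ∑ i ∈ Y.SL, Y.r t (i, j) a ≤ N * Y.nu + Y.nbar t / 20 ∧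
    ∀ i ∈ Y.SL, Y.r t (i, j) a ≤ Y.nu + Y.nbar t / 20

lemma sum_r_le_of_learnableBound {t : ℕ} (ht : t ≤ T) (hb : Y.LearnableBound t) (a : Fin m) :
    ∑ z, Y.r t z a ≤ P * (N * Y.nu + Y.nbar t / 20) +
      Y.SLᶜ.card * P * (2 * (Y.H t + 4 * Y.nu * Y.ell)) := by
  rw [Fintype.sum_prod_type, ← Finset.sum_add_sum_compl Y.SL]
  gcongr
  · rw [Finset.sum_comm]
    refine (Finset.sum_le_card_nsmul _ _ _ fun j _ => (hb j a).1).trans ?_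
    rw [card_univ, Fintype.card_fin, nsmul_eq_mul]
  · have h1 : ∑ i ∈ Y.SLᶜ, ∑ j, Y.r t (i, j) a ≤
        ∑ i ∈ Y.SLᶜ, ∑ _j : Fin P, (2 * (Y.H t + 4 * Y.nu * Y.ell)) :=
      Finset.sum_le_sum fun i hi => Finset.sum_le_sum fun j _ =>
        Y.r_le_H ht (z := (i, j)) (by simpa using hi) a
    simp only [sum_const, card_univ, Fintype.card_fin, nsmul_eq_mul] at h1
    linarith

lemma abs_n_le_nbar {t : ℕ} (ht : t ≤ T) (hb : Y.LearnableBound t) {z : Fin N × Fin P}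
    (hz : z.1 ∈ Y.SL) (a : Fin m) : |Y.n t z a| ≤ Y.nbar t := by
  have hi := Y.inv t ht
  have hl := Y.hell
  have hν := Y.hnu0
  have hk0 := Y.hkap0
  have hP : (1 : ℝ) ≤ P := by exact_mod_cast Y.hP
  have hN : (1 : ℝ) ≤ N := by exact_mod_cast Y.hN
  have hH := Y.H_pos ht
  have hnb := Y.nbar_nonneg ht
  have h1 := abs_le.1 (Y.cross_le (fun z => (hi.2 z a).1) z)
  have h2 := mul_le_mul_of_nonneg_left (Y.sum_r_le_of_learnableBound ht hb a) hk0
  have h3 := abs_le.1 (Y.hn0 z a)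
  have hrz : Y.r t z a ≤ Y.nu + Y.nbar t / 20 := (hb z.2 a).2 z.1 hz
  have h5 : Y.r t z a * Y.k z z ≤ (Y.nu + Y.nbar t / 20) * (3 / 2) :=
    mul_le_mul hrz (Y.hkd z).2 (by linarith [(Y.hkd z).1]) (by positivity)
  have h6 : 0 ≤ Y.r t z a * Y.k z z := mul_nonneg (hi.2 z a).1 (by linarith [(Y.hkd z).1])
  have h7 : Y.nu ≤ Y.nu * Y.ell := by nlinarith
  have hkNP := Y.kap_NP_le
  have hkP : Y.kap * P ≤ 1 / 10 ^ 6 := by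
    have : 0 ≤ Y.kap * P := by positivity
    nlinarith [mul_le_mul_of_nonneg_left hN this]
  have h8 : Y.kap * (P * (N * Y.nu + Y.nbar t / 20)) ≤ Y.nu + Y.nbar t / 20 := by
    have e : Y.kap * (P * (N * Y.nu + Y.nbar t / 20)) =
      (Y.kap * N * P) * Y.nu + (Y.kap * P) * (Y.nbar t / 20) := by ring
    rw [e]
    nlinarith
  have hU : (Y.SLᶜ.card : ℝ) ≤ N := by linarith [Y.hU2, Nat.cast_nonneg (α := ℝ) Y.SLᶜ.card]
  have hkU : Y.kap * Y.SLᶜ.card * P ≤ 1 / 10 ^ 6 :=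
    le_trans (by gcongr) hkNP
  have h9 : Y.kap * (Y.SLᶜ.card * P * (2 * (Y.H t + 4 * Y.nu * Y.ell))) ≤
      2 * (Y.kap * Y.SLᶜ.card * P * Y.H t) + Y.nu * Y.ell := by
    have e : Y.kap * (Y.SLᶜ.card * P * (2 * (Y.H t + 4 * Y.nu * Y.ell))) =
      2 * (Y.kap * Y.SLᶜ.card * P * Y.H t) +
        8 * (Y.kap * Y.SLᶜ.card * P) * (Y.nu * Y.ell) := by ring
    rw [e]
    nlinarith [mul_pos hν (by linarith : 0 < Y.ell)]
  have h10 : 0 ≤ Y.kap * Y.SLᶜ.card * P * Y.H t := by positivity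
  have h11 : Y.nbar t = 12 * (Y.nu * Y.ell) + 8 * (Y.kap * Y.SLᶜ.card * P * Y.H t) := rfl
  rw [abs_le]
  constructor <;> linarith [h1.1, h1.2, h3.1, h3.2]

lemma learnableBound (t : ℕ) (ht : t ≤ T) : Y.LearnableBound t := by
  induction t using Nat.strong_induction_on with
  | _ t ih =>
    have hN : (0 : ℝ) < N := by exact_mod_cast Y.hN
    have hnb := Y.nbar_nonneg ht
    have hν := Y.hnu0
    have card_le : (Y.SL.card : ℝ) ≤ N := by
      exact_mod_cast (card_le_univ _).trans (by simp)
    by_cases hearly : ∀ t' < t, Y.str t' ≤ 1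
    · have h1 := Y.r_le_nu_of_early ht hearly
      intro j a
      refine ⟨?_, fun i _ => by linarith [h1 (i, j) a]⟩
      have h2 : ∑ i ∈ Y.SL, Y.r t (i, j) a ≤ Y.SL.card * Y.nu := by
        refine (Finset.sum_le_card_nsmul _ _ _ fun i _ => h1 (i, j) a).trans ?_
        simp
      nlinarith
    · push Not at hearly
      classical
      have hex : ∃ t', 1 < Y.str t' := hearly.imp fun _ h => h.2
      set t0 := Nat.find hex with ht0
      have hstr0 : 1 < Y.str t0 := Nat.find_spec hex
      have ht0t : t0 < t := by
        obtain ⟨t', h', h''⟩ := hearly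
        exact lt_of_le_of_lt (Nat.find_min' hex h'') h'
      have hr0 := Y.r_le_nu_of_early (t := t0) (by omega)
        fun t' h' => not_lt.1 (Nat.find_min hex h')
      obtain ⟨a1, ha1⟩ := Y.exists_inv_m_le_s hstr0
      have hm : (0 : ℝ) < m := by exact_mod_cast Y.hm
      have hpos : 0 < Y.s t0 a1 := lt_of_lt_of_le (by positivity) ha1
      have hsum := Y.sum_rate_Ico_le ht0t.le ht hpos
      have hsum2 : 2 / Y.s t0 a1 ≤ 2 * m := by
        rw [div_le_iff₀ hpos]
        rw [div_le_iff₀ hm] at ha1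
        linarith
      have hes := Y.hetas0
      have hen := Y.hetan0
      have hG : Y.etas / N * (1 / 8) * ∑ t' ∈ Ico t0 t, ∑ i ∈ Y.SL, Y.g t' i ≤ 2 * m := by
        rw [mul_sum]
        refine (Finset.sum_le_sum fun t' h' => ?_).trans (hsum.trans hsum2)
        exact Y.sum_g_le_rate (by have := (Finset.mem_Ico.1 h').2; omega)
      have hG' : ∑ t' ∈ Ico t0 t, ∑ i ∈ Y.SL, Y.g t' i ≤ 16 * m * N / Y.etas := by
        rw [le_div_iff₀ hes]
        have h3 := mul_le_mul_of_nonneg_right hG (by positivity : (0 : ℝ) ≤ 8 * N)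
        have e : Y.etas / N * (1 / 8) * (∑ t' ∈ Ico t0 t, ∑ i ∈ Y.SL, Y.g t' i) * (8 * N) =
            (∑ t' ∈ Ico t0 t, ∑ i ∈ Y.SL, Y.g t' i) * Y.etas := by field_simp
        rw [e] at h3
        linarith
      intro j a
      have hterm : ∀ t' ∈ Ico t0 t, ∀ i ∈ Y.SL,
          Y.etan / N * Y.g t' i * Y.n t' (i, j) a ^ 2 ≤
            Y.etan / N * Y.nbar t ^ 2 * Y.g t' i := by
        intro t' h' i hi
        have h' := (Finset.mem_Ico.1 h').2
        have hg0 := (Y.inv t' (by omega)).g_nonneg (by omega) i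
        have h4 := Y.abs_n_le_nbar (by omega) (ih t' h' (by omega)) (z := (i, j)) hi a
        have h5 := h4.trans (Y.nbar_mono h'.le ht)
        have h6 : Y.n t' (i, j) a ^ 2 ≤ Y.nbar t ^ 2 :=
          sq_le_sq' (abs_le.1 h5).1 (abs_le.1 h5).2
        calc _ ≤ Y.etan / N * Y.g t' i * Y.nbar t ^ 2 := by gcongr
          _ = _ := by ring
      have hnn : ∀ i ∈ Y.SL,
          0 ≤ ∑ t' ∈ Ico t0 t, Y.etan / N * Y.g t' i * Y.n t' (i, j) a ^ 2 := by
        intro i hi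
        refine Finset.sum_nonneg fun t' h' => ?_
        have h' := (Finset.mem_Ico.1 h').2
        have hg0 := (Y.inv t' (by omega)).g_nonneg (by omega) i
        positivity
      have hX : ∑ i ∈ Y.SL, ∑ t' ∈ Ico t0 t, Y.etan / N * Y.g t' i * Y.n t' (i, j) a ^ 2 ≤
          Y.nbar t / 20 := by
        rw [Finset.sum_comm]
        calc _ ≤ ∑ t' ∈ Ico t0 t, ∑ i ∈ Y.SL, Y.etan / N * Y.nbar t ^ 2 * Y.g t' i :=
              Finset.sum_le_sum fun t' h' => Finset.sum_le_sum fun i hi => hterm t' h' i hi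
          _ = Y.etan / N * Y.nbar t ^ 2 * ∑ t' ∈ Ico t0 t, ∑ i ∈ Y.SL, Y.g t' i := by
              simp only [mul_sum]
          _ ≤ Y.etan / N * Y.nbar t ^ 2 * (16 * m * N / Y.etas) := by gcongr
          _ = (320 * m * Y.nbar t * Y.etan) / Y.etas * (Y.nbar t / 20) := by
              field_simp; ring
          _ ≤ 1 * (Y.nbar t / 20) := by
              gcongr
              rw [div_le_one hes]
              exact Y.nbar_etan_le ht
          _ = _ := one_mul _
      have hsplit := fun i => Y.r_eq_add_sum ht0t.le (i, j) a
      refine ⟨?_, fun i hi => ?_⟩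
      · simp only [hsplit, sum_add_distrib]
        have h2 : ∑ i ∈ Y.SL, Y.r t0 (i, j) a ≤ Y.SL.card * Y.nu := by
          refine (Finset.sum_le_card_nsmul _ _ _ fun i _ => hr0 (i, j) a).trans ?_
          simp
        nlinarith
      · rw [hsplit]
        have h3 := Finset.single_le_sum hnn hi
        exact add_le_add (hr0 (i, j) a) (h3.trans hX)

/-- The learnable signal is fitted by time `T`. -/
lemma le_str {K : ℝ} (hK : 0 ≤ K) (hKG : K + 3 ≤ Y.Gam)
    (hT : 128 * Real.exp (K + 1) < T * Y.etas * Y.sg) : K ≤ Y.str T := by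
  by_contra hcon
  push Not at hcon
  obtain ⟨a0, ha0⟩ := Y.hs0big
  have hsg := Y.hsg0
  have hpos : 0 < Y.s 0 a0 := lt_of_lt_of_le hsg ha0
  have h1 := Y.sum_rate_Ico_le (Nat.zero_le T) le_rfl hpos
  have h2 : T * (Y.etas * (Real.exp (-(K + 1)) / 4) / 16) ≤ ∑ t' ∈ Ico 0 T, Y.rate t' := by
    have : ∑ t' ∈ Ico 0 T, Y.etas * (Real.exp (-(K + 1)) / 4) / 16 ≤
        ∑ t' ∈ Ico 0 T, Y.rate t' := by
      refine Finset.sum_le_sum fun t' h' => ?_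
      have h' := (Finset.mem_Ico.1 h').2
      refine Y.rate_ge (by positivity) fun i hi => ?_
      refine Y.le_g (by linarith) (by linarith) ?_
      refine Y.M_le_of_n_le hK ((Y.str_mono h'.le le_rfl).trans hcon.le)
        (fun j a => (abs_le.1 (Y.abs_n_le_nbar h'.le (Y.learnableBound t' h'.le)
          (z := (i, j)) hi a)).2) (Y.m_P_cube_le (Y.nbar_le_tau h'.le))
    simpa using this
  have h4 : 2 / Y.s 0 a0 ≤ 2 / Y.sg := div_le_div_of_nonneg_left (by norm_num) hsg ha0
  have h5 : T * (Y.etas * (Real.exp (-(K + 1)) / 4) / 16) ≤ 2 / Y.sg := by linarith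
  rw [le_div_iff₀ hsg, Real.exp_neg] at h5
  have hE := Real.exp_pos (K + 1)
  have h6 : T * (Y.etas * ((Real.exp (K + 1))⁻¹ / 4) / 16) * Y.sg =
      (T * Y.etas * Y.sg) / (64 * Real.exp (K + 1)) := by field_simp; ring
  rw [h6, div_le_iff₀ (by positivity)] at h5
  linarith

lemma kap_sum_r_le {t : ℕ} (ht : t ≤ T) (a : Fin m) :
    Y.kap * ∑ z, Y.r t z a ≤ Y.H t / 2 := by
  have hl := Y.hell
  have hν := Y.hnu0
  have hk0 := Y.hkap0
  have hP : (1 : ℝ) ≤ P := by exact_mod_cast Y.hP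
  have hN : (1 : ℝ) ≤ N := by exact_mod_cast Y.hN
  have hH := Y.H_pos ht
  have hνH := Y.nu_le_H ht
  have hkNPl := Y.kap_NP_ell_le
  have hkNP := Y.kap_NP_le
  have h2 := mul_le_mul_of_nonneg_left
    (Y.sum_r_le_of_learnableBound ht (Y.learnableBound t ht) a) hk0
  have hU : (Y.SLᶜ.card : ℝ) ≤ N := by linarith [Y.hU2, Nat.cast_nonneg (α := ℝ) Y.SLᶜ.card]
  have hkU : Y.kap * Y.SLᶜ.card * P ≤ 1 / 10 ^ 6 :=
    le_trans (by gcongr) hkNP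
  have hkUl : Y.kap * Y.SLᶜ.card * P * Y.ell ≤ 1 / 10 ^ 6 :=
    le_trans (by gcongr) hkNPl
  have hkP : Y.kap * P ≤ 1 / 10 ^ 6 := by
    have : 0 ≤ Y.kap * P := by positivity
    nlinarith [mul_le_mul_of_nonneg_left hN this]
  have hkPl : Y.kap * P * Y.ell ≤ 1 / 10 ^ 6 := by
    have : 0 ≤ Y.kap * P * Y.ell := by positivity
    nlinarith [mul_le_mul_of_nonneg_left hN this]
  have e : Y.kap * (P * (N * Y.nu + Y.nbar t / 20) +
      Y.SLᶜ.card * P * (2 * (Y.H t + 4 * Y.nu * Y.ell))) =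
      (Y.kap * N * P) * Y.nu + (12 / 20) * (Y.kap * P * Y.ell) * Y.nu +
      (8 / 20) * ((Y.kap * P) * (Y.kap * Y.SLᶜ.card * P)) * Y.H t +
      2 * (Y.kap * Y.SLᶜ.card * P) * Y.H t + 8 * (Y.kap * Y.SLᶜ.card * P * Y.ell) * Y.nu := by
    unfold nbar; ring
  rw [e] at h2
  have h3 : (Y.kap * P) * (Y.kap * Y.SLᶜ.card * P) ≤ 1 / 10 ^ 6 * (1 / 10 ^ 6) :=
    mul_le_mul hkP hkU (by positivity) (by norm_num)
  have i1 := mul_le_mul_of_nonneg_right hkNP hν.le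
  have i2 := mul_le_mul_of_nonneg_right hkPl hν.le
  have i3 := mul_le_mul_of_nonneg_right h3 hH.le
  have i4 := mul_le_mul_of_nonneg_right hkU hH.le
  have i5 := mul_le_mul_of_nonneg_right hkUl hν.le
  linarith

lemma abs_n_sub_h_le {t : ℕ} (ht : t ≤ T) (z : Fin N × Fin P) (a : Fin m) :
    |Y.n t z a - Y.h t z a| ≤ Y.H t / 2 :=
  (Y.cross_le (fun z => ((Y.inv t ht).2 z a).1) z).trans (Y.kap_sum_r_le ht a)

lemma H_succ_ge {t : ℕ} (ht : t < T) (hH : m * P * (3 / 2 * Y.H t) ^ 3 ≤ 1) :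
    Y.H t + Y.etan / (96 * N) * Y.H t ^ 2 ≤ Y.H (t + 1) := by
  obtain ⟨z, a, hz, he⟩ := Y.exists_h_eq_H t
  have hHpos := Y.H_pos ht.le
  have hen := Y.hetan0
  have hN : (0 : ℝ) < N := by exact_mod_cast Y.hN
  refine le_trans ?_ (Y.h_le_H (t + 1) hz a)
  have h1 : Y.h (t + 1) z a =
      Y.h t z a + Y.etan / N * Y.g t z.1 * Y.n t z a ^ 2 * Y.k z z := by
    unfold h; rw [Y.hr]; ring
  rw [h1, he]
  refine add_le_add le_rfl ?_
  have h2 := (abs_le.1 (Y.abs_n_sub_h_le ht.le z a)).1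
  have h3 : Y.H t / 2 ≤ Y.n t z a := by linarith
  have hG : (0 + 1 : ℝ) + 2 ≤ Y.Gam := by
    have := Y.hGam
    have hl := Y.hell
    have : 0 ≤ (m : ℝ) * P * Y.ell ^ 3 := by positivity
    linarith
  have hM : Y.M t z.1 ≤ 0 + 1 := by
    rw [Y.hM, Y.hbetaU t z.1 hz, zero_mul]
    gcongr
    have h4 : ∑ a, ∑ j, Y.n t (z.1, j) a ^ 3 ≤
        ∑ _a : Fin m, ∑ _j : Fin P, (3 / 2 * Y.H t) ^ 3 :=
      Finset.sum_le_sum fun a _ => Finset.sum_le_sum fun j _ => cube_le_cube (by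
        have h5 := (abs_le.1 (Y.abs_n_sub_h_le ht.le (z.1, j) a)).2
        have h6 := Y.h_le_H t (z := (z.1, j)) hz a
        linarith)
    simp only [sum_const, card_univ, Fintype.card_fin, nsmul_eq_mul] at h4
    linarith
  have hg := Y.le_g (by norm_num) hG hM
  have hg' : 1 / 12 ≤ Y.g t z.1 := by
    refine le_trans ?_ hg
    rw [zero_add, Real.exp_neg, ← one_div, div_div, one_div_le_one_div (by norm_num) (by positivity)]
    nlinarith [Real.exp_one_lt_d9]
  calc Y.etan / (96 * N) * Y.H t ^ 2 = Y.etan / N * (1 / 12) * (Y.H t / 2) ^ 2 * (1 / 2) := by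
        field_simp; norm_num
    _ ≤ _ := by
        gcongr
        exact (Y.hkd z).1

/-- Some unlearnable noise patch is memorised by time `T`. -/
lemma exists_memorized :
    ∃ z a, z.1 ∉ Y.SL ∧ 0 < Y.n T z a ∧ 1 ≤ 27 * (m * P * Y.n T z a ^ 3) := by
  have hHT : 1 < m * P * (3 / 2 * Y.H T) ^ 3 := by
    by_contra hcon
    push Not at hcon
    have hH0 := Y.H_pos (Nat.zero_le T)
    have hen := Y.hetan0
    have hN : (1 : ℝ) ≤ N := by exact_mod_cast Y.hN
    have hl := Y.hell
    have h1 := sum_rate_le (u := Y.H) (c := fun _ => Y.etan / (96 * N)) (t := T) hH0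
      (fun t' _ => by positivity)
      (fun t' h' => by
        calc Y.etan / (96 * N) * Y.H t' ≤ Y.etan / 1 * (8 * Y.ell) := by
              have := Y.H_le h'.le
              have := Y.H_pos h'.le
              gcongr
              linarith
          _ ≤ 8 * (Y.etan * Y.ell ^ 2) := by
              have : Y.ell ≤ Y.ell ^ 2 := by nlinarith
              rw [div_one]
              nlinarith [mul_le_mul_of_nonneg_left this hen.le]
          _ ≤ 1 := by linarith [Y.hetan])
      (fun t' h' => Y.H_succ_ge h' (by
        refine le_trans ?_ hcon
        have := Y.H_mono h'.le le_rfl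
        have := Y.H_pos h'.le
        gcongr))
    have hν := Y.hnu0
    have h2 : 2 / Y.H 0 ≤ 2 / (Y.nu / 4) :=
      div_le_div_of_nonneg_left (by norm_num) (by positivity) (Y.nu_le_H (Nat.zero_le T))
    simp only [sum_const, card_range, nsmul_eq_mul] at h1
    have h3 := h1.trans h2
    rw [le_div_iff₀ (by positivity)] at h3
    have h4 : (T : ℝ) * (Y.etan / (96 * N)) * (Y.nu / 4) = (T * Y.etan * Y.nu) / (384 * N) := by
      field_simp; ring
    rw [h4, div_le_iff₀ (by positivity)] at h3
    linarith [Y.hmem]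
  obtain ⟨z, a, hz, he⟩ := Y.exists_h_eq_H T
  have h2 := (abs_le.1 (Y.abs_n_sub_h_le le_rfl z a)).1
  have hHp := Y.H_pos le_rfl
  have h3 : Y.H T / 2 ≤ Y.n T z a := by linarith
  refine ⟨z, a, hz, by linarith, ?_⟩
  have h4 := cube_le_cube h3
  have h5 : (m * P : ℝ) * (Y.H T / 2) ^ 3 ≤ m * P * Y.n T z a ^ 3 := by gcongr
  nlinarith

end Sys

lemma phi_sub_phi_neg (z : ℝ) : phi z - phi (-z) = z ^ 3 := by
  unfold phi
  rcases le_total 0 z with h | h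
  · rw [max_eq_right h, max_eq_left (by linarith)]; ring
  · rw [max_eq_left h, max_eq_right (by linarith)]; ring

lemma netOut_eq {m P d : ℕ} (w : Fin m → Fin d → ℝ) (X : Fin P → Fin d → ℝ) :
    netOut w X = ∑ r, ∑ p, dot (w r) (X p) ^ 3 := by
  simp only [netOut, phi_sub_phi_neg]

lemma sigm_eq (z : ℝ) : sigm z = psi (-z) := rfl

lemma psi_neg (z : ℝ) : psi (-z) = 1 - psi z := by
  unfold psi
  rw [Real.exp_neg]
  have := Real.exp_pos z
  field_simp
  ring

lemma dot_comm {d : ℕ} (a b : Fin d → ℝ) : dot a b = dot b a := by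
  simp only [dot, mul_comm]

lemma dot_add_left {d : ℕ} (a b c : Fin d → ℝ) : dot (a + b) c = dot a c + dot b c := by
  simp only [dot, Pi.add_apply, add_mul, sum_add_distrib]

lemma dot_add_right {d : ℕ} (a b c : Fin d → ℝ) : dot a (b + c) = dot a b + dot a c := by
  simp only [dot, Pi.add_apply, mul_add, sum_add_distrib]

lemma dot_smul_left {d : ℕ} (k : ℝ) (a b : Fin d → ℝ) : dot (k • a) b = k * dot a b := by
  simp only [dot, Pi.smul_apply, smul_eq_mul, mul_sum, mul_assoc]

lemma dot_smul_right {d : ℕ} (k : ℝ) (a b : Fin d → ℝ) : dot a (k • b) = k * dot a b := by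
  rw [dot_comm, dot_smul_left, dot_comm]

lemma dot_sum_left {d : ℕ} {ι : Type*} (s : Finset ι) (a : ι → Fin d → ℝ) (b : Fin d → ℝ) :
    dot (∑ i ∈ s, a i) b = ∑ i ∈ s, dot (a i) b := by
  simp only [dot, Finset.sum_apply, sum_mul]
  rw [Finset.sum_comm]

lemma dot_e1 {d : ℕ} (hd : 0 < d) (a : Fin d → ℝ) : dot a (e1 d hd) = a ⟨0, hd⟩ := by
  simp [dot, e1]

lemma dot_single {d : ℕ} (a : Fin d → ℝ) (k : Fin d) : dot a (Pi.single k 1) = a k := by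
  simp [dot, Pi.single_apply]

namespace Setting

variable (S : Setting)

lemma y_mul_y (i : Fin S.N) : S.y i * S.y i = 1 := by
  rcases S.hy i with h | h <;> rw [h] <;> norm_num

lemma abs_y (i : Fin S.N) : |S.y i| = 1 := by
  rcases S.hy i with h | h <;> rw [h] <;> norm_num

lemma mem_SU_of_notMem_SL {i : Fin S.N} (h : i ∉ S.SL) : i ∈ S.SU := by
  have := S.hunion ▸ Finset.mem_univ i
  exact (Finset.mem_union.1 this).resolve_left h

lemma compl_SL : S.SLᶜ = S.SU := by
  ext i
  rw [Finset.mem_compl]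
  exact ⟨S.mem_SU_of_notMem_SL, fun h h' => Finset.disjoint_left.1 S.hdisj h' h⟩

lemma gAD_eq (fT : Fin S.N → ℝ) (t : ℕ) (i : Fin S.N) :
    S.gAD fT t i = psi (S.marg t i) - psi (S.y i * fT i) := by
  rw [gAD, sigm_eq, sigm_eq, neg_neg, psi_neg, psi_neg]
  ring

/-- Signed size of the perturbed signal patch. -/
def asig (t : ℕ) (i : Fin S.N) : ℝ := S.y i * dot (S.xadv t i (S.sig i)) (e1 S.d S.hd)

lemma xadv_sig_learnable (t : ℕ) {i : Fin S.N} (hi : i ∈ S.SL) :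
    S.xadv t i (S.sig i) = (S.y i * S.asig t i) • e1 S.d S.hd := by
  obtain ⟨c, hc⟩ := S.hadvspan t i
  have h1 : S.xadv t i (S.sig i) = ((1 + c) * (S.alpha * S.y i)) • e1 S.d S.hd := by
    rw [sub_eq_iff_eq_add.1 hc, S.hsigL i hi]
    module
  have h2 : S.asig t i = S.y i * ((1 + c) * (S.alpha * S.y i)) := by
    rw [asig, h1, dot_smul_left, dot_e1]
    simp [e1]
  have h3 := S.y_mul_y i
  rw [h1, h2]
  congr 1
  linear_combination (-((1 + c) * (S.alpha * S.y i))) * h3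

lemma dot_xadv_sig_unlearnable (t : ℕ) {i : Fin S.N} (hi : i ∈ S.SU) (r : Fin S.m) :
    dot (S.w t r) (S.xadv t i (S.sig i)) = 0 := by
  obtain ⟨c, hc⟩ := S.hadvspan t i
  rw [sub_eq_iff_eq_add.1 hc, S.hsigU i hi, dot_add_right, dot_smul_right, dot_smul_right,
    S.hwperp]
  simp

lemma dot_xadv_sig_learnable (t : ℕ) {i : Fin S.N} (hi : i ∈ S.SL) (r : Fin S.m) :
    dot (S.w t r) (S.xadv t i (S.sig i)) = S.y i * S.asig t i * S.wsig t r := by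
  rw [S.xadv_sig_learnable t hi, dot_smul_right, dot_e1, wsig]

/-- Normalised strength of the perturbed signal patch. -/
def beta (t : ℕ) (i : Fin S.N) : ℝ := if i ∈ S.SL then (S.asig t i / S.alpha) ^ 3 else 0

/-- Signed noise correlations, set to zero on signal patches. -/
def noiseCorr (t : ℕ) (z : Fin S.N × Fin S.P) (r : Fin S.m) : ℝ :=
  if z.2 = S.sig z.1 then 0 else S.y z.1 * dot (S.w t r) (S.x z.1 z.2)

/-- Rescaled noise coefficients, set to zero on signal patches. -/
def noiseCoef (fT : Fin S.N → ℝ) (t : ℕ) (z : Fin S.N × Fin S.P) (r : Fin S.m) : ℝ :=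
  if z.2 = S.sig z.1 then 0 else S.sigman ^ 2 * S.d * S.rhoAD fT z.1 z.2 r t

/-- Rescaled Gram matrix of the signed noise patches, extended by the identity on signal
patches. -/
def gram (z z' : Fin S.N × Fin S.P) : ℝ :=
  if z.2 = S.sig z.1 ∨ z'.2 = S.sig z'.1 then (if z = z' then 1 else 0)
  else S.y z.1 * S.y z'.1 * dot (S.x z.1 z.2) (S.x z'.1 z'.2) / (S.sigman ^ 2 * S.d)

lemma marg_eq (t : ℕ) (i : Fin S.N) :
    S.marg t i = S.beta t i * ∑ r, (S.alpha * S.wsig t r) ^ 3 +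
      ∑ r, ∑ j, S.noiseCorr t (i, j) r ^ 3 := by
  have hα := S.halpha.ne'
  have hy := S.y_mul_y i
  rw [marg, netOut_eq, mul_sum, mul_sum, ← sum_add_distrib]
  refine Finset.sum_congr rfl fun r _ => ?_
  rw [← Finset.add_sum_erase _ _ (mem_univ (S.sig i)),
    ← Finset.add_sum_erase _ (fun j => S.noiseCorr t (i, j) r ^ 3) (mem_univ (S.sig i)), mul_add]
  have h1 : S.y i * dot (S.w t r) (S.xadv t i (S.sig i)) ^ 3 =
      S.beta t i * (S.alpha * S.wsig t r) ^ 3 := by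
    by_cases hi : i ∈ S.SL
    · rw [S.dot_xadv_sig_learnable t hi, beta, if_pos hi, ← mul_pow, ← mul_assoc,
        div_mul_cancel₀ _ hα]
      linear_combination (S.asig t i ^ 3 * S.wsig t r ^ 3) * (S.y i * S.y i + 1) * hy
    · rw [S.dot_xadv_sig_unlearnable t (S.mem_SU_of_notMem_SL hi), beta, if_neg hi]
      ring
  have h2 : S.noiseCorr t (i, S.sig i) r = 0 := by simp [noiseCorr]
  rw [h1, h2, mul_sum, zero_pow (by norm_num), zero_add]
  congr 1
  refine Finset.sum_congr rfl fun j hj => ?_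
  have hj' := (Finset.mem_erase.1 hj).1
  rw [S.hadvnoise t i j hj', noiseCorr, if_neg hj']
  linear_combination (-(S.y i) * dot (S.w t r) (S.x i j) ^ 3) * hy

variable {S} {fT : Fin S.N → ℝ}

/-- Change of the filters along directions orthogonal to the learnable feature. -/
lemma ADDyn.dot_eq (h : S.ADDyn fT) (t : ℕ) (r : Fin S.m) {v : Fin S.d → ℝ}
    (hv : v ⟨0, S.hd⟩ = 0) :
    dot (S.w t r) v = dot (S.w 0 r) v +
      ∑ i, ∑ j, if j = S.sig i then 0 else S.y i * S.rhoAD fT i j r t * dot (S.x i j) v := by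
  induction t with
  | zero => simp [rhoAD]
  | succ t ih =>
    rw [h t r, dot_add_left, ih, dot_smul_left, dot_sum_left, add_assoc, mul_sum,
      ← sum_add_distrib]
    congr 1
    refine Finset.sum_congr rfl fun i _ => ?_
    rw [dot_smul_left, dot_sum_left, mul_sum, mul_sum, ← sum_add_distrib]
    refine Finset.sum_congr rfl fun j _ => ?_
    split_ifs with hj
    · subst hj
      rw [zero_add]
      by_cases hi : i ∈ S.SL
      · rw [S.xadv_sig_learnable t hi, dot_smul_left, dot_smul_left, dot_comm (e1 _ _), dot_e1, hv]
        ring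
      · rw [S.dot_xadv_sig_unlearnable t (S.mem_SU_of_notMem_SL hi), dot_smul_left]
        ring
    · rw [S.hadvnoise t i j hj, dot_smul_left, rhoAD]
      ring

lemma ADDyn.wsig_succ (h : S.ADDyn fT) (t : ℕ) (r : Fin S.m) :
    S.alpha * S.wsig (t + 1) r = S.alpha * S.wsig t r +
      (3 * S.eta * S.alpha ^ 2 / S.N * ∑ i, S.gAD fT t i * S.beta t i) *
        (S.alpha * S.wsig t r) ^ 2 := by
  have hα := S.halpha.ne'
  have key : S.wsig (t + 1) r = S.wsig t r +
      3 * S.eta / S.N * ∑ i, S.gAD fT t i * (S.alpha ^ 3 * S.beta t i) * S.wsig t r ^ 2 := by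
    have e : ∀ t, S.wsig t r = dot (S.w t r) (e1 S.d S.hd) := fun t => by rw [dot_e1, wsig]
    rw [e (t + 1), h t r, dot_add_left, ← e t, dot_smul_left, dot_sum_left]
    congr 2
    refine Finset.sum_congr rfl fun i _ => ?_
    rw [dot_smul_left, dot_sum_left, Finset.sum_eq_single (S.sig i)]
    · have hy := S.y_mul_y i
      by_cases hi : i ∈ S.SL
      · have h1 : dot (S.xadv t i (S.sig i)) (e1 S.d S.hd) = S.y i * S.asig t i := by
          rw [asig, ← mul_assoc, hy, one_mul]
        rw [dot_smul_left, h1, S.dot_xadv_sig_learnable t hi, beta, if_pos hi, div_pow,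
          mul_div_cancel₀ _ (pow_ne_zero 3 hα)]
        linear_combination (S.gAD fT t i * S.asig t i ^ 3 * S.wsig t r ^ 2) *
          (S.y i * S.y i + 1) * hy
      · rw [dot_smul_left, S.dot_xadv_sig_unlearnable t (S.mem_SU_of_notMem_SL hi), beta,
          if_neg hi]
        ring
    · intro j _ hj
      rw [dot_smul_left, S.hadvnoise t i j hj, S.hnoiseU i j hj, mul_zero]
    · simp
  rw [key, ← sum_mul]
  simp only [mul_left_comm _ (S.alpha ^ 3), ← mul_sum]
  ring

lemma ADDyn.noiseCorr_eq (h : S.ADDyn fT) (t : ℕ) (z : Fin S.N × Fin S.P) (r : Fin S.m) :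
    S.noiseCorr t z r = S.noiseCorr 0 z r + ∑ z', S.noiseCoef fT t z' r * S.gram z' z := by
  by_cases hz : z.2 = S.sig z.1
  · have : ∀ z', S.noiseCoef fT t z' r * S.gram z' z = 0 := fun z' => by
      rw [gram, if_pos (Or.inr hz)]
      split_ifs with h'
      · rw [h', noiseCoef, if_pos hz, zero_mul]
      · rw [mul_zero]
    simp [noiseCorr, hz, this]
  · have h0 : S.x z.1 z.2 ⟨0, S.hd⟩ = 0 := by
      rw [← dot_e1 S.hd (S.x z.1 z.2), S.hnoiseU _ _ hz]
    rw [noiseCorr, if_neg hz, noiseCorr, if_neg hz, h.dot_eq t r h0, mul_add,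
      Fintype.sum_prod_type, mul_sum]
    congr 1
    refine Finset.sum_congr rfl fun i _ => ?_
    rw [mul_sum]
    refine Finset.sum_congr rfl fun j _ => ?_
    by_cases hj : j = S.sig i
    · simp [noiseCoef, hj]
    · rw [if_neg hj, noiseCoef, if_neg hj, gram, if_neg (by simp [hj, hz])]
      have hσ := S.hsigman.ne'
      have hd : (S.d : ℝ) ≠ 0 := by exact_mod_cast S.hd.ne'
      field_simp

lemma noiseCoef_succ (t : ℕ) (z : Fin S.N × Fin S.P) (r : Fin S.m) :
    S.noiseCoef fT (t + 1) z r = S.noiseCoef fT t z r +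
      3 * S.eta * (S.sigman ^ 2 * S.d) / S.N * S.gAD fT t z.1 * S.noiseCorr t z r ^ 2 := by
  unfold noiseCoef noiseCorr
  split_ifs
  · ring
  · rw [rhoAD]
    have hy := S.y_mul_y z.1
    have h2 : (S.y z.1 * dot (S.w t r) (S.x z.1 z.2)) ^ 2 = dot (S.w t r) (S.x z.1 z.2) ^ 2 := by
      rw [mul_pow, pow_two (S.y z.1), hy, one_mul]
    rw [h2]
    ring

end Setting

namespace Setting

variable (S : Setting)

/-- Square root of the logarithmic factor of the parameter conditions. -/
def ell : ℝ := Real.sqrt (Real.log ((S.T : ℝ) * S.N * S.m * S.P / S.delta))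

/-- Bound for the normalised inner products of distinct noise patches. -/
def kap : ℝ := 5 * S.ell / Real.sqrt S.d

/-- Scale of the initial noise correlations. -/
def nu : ℝ := S.sigma0 * S.sigman * Real.sqrt S.d

/-- Bound for negative noise correlations. -/
def tau : ℝ := 4 * S.nu * S.ell + 12 * (S.kap * S.N * S.P * S.ell)

/-- The quantitative consequences of the parameter conditions that drive the dynamics. -/
structure Regime (Γ : ℝ) : Prop where
  hT : 0 < S.T
  hell : 1 ≤ S.ell
  hlogT : Real.log S.T ≤ S.ell ^ 2
  hkap : S.kap * S.N * S.P * S.m * S.ell ≤ 1 / 10 ^ 6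
  hnu : S.nu * S.N * S.P * S.m * S.ell ≤ 1 / 10 ^ 6
  hs01 : 3 * (S.alpha * S.sigma0) * S.ell ≤ 1
  hs0m : S.m * (3 * (S.alpha * S.sigma0) * S.ell) ^ 3 ≤ 1 / 4
  hetas : 3 * S.eta * S.alpha ^ 2 * S.ell ^ 2 ≤ 1 / 10 ^ 6
  hetan : 3 * S.eta * (S.sigman ^ 2 * S.d) * S.ell ^ 2 ≤ 1 / 10 ^ 6
  htaum : 1728 * (S.m ^ 2 * S.P * S.tau ^ 3) ≤ 1
  hU1 : (S.SU.card : ℝ) ≤ S.ell ^ 2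
  hU2 : 64 * (S.SU.card : ℝ) ≤ S.N
  hGam : 700 * (S.m * S.P * S.ell ^ 3) + 10 ≤ Γ
  hphase1 : 10 ^ 5 * (3 * S.eta * (S.sigman ^ 2 * S.d) * S.nu * S.ell ^ 2) ≤
    3 * S.eta * S.alpha ^ 2 * (S.alpha * S.sigma0 / 2) * S.N
  hphase2 : 3 * S.eta * (S.sigman ^ 2 * S.d) * S.ell ^ 3 ≤ 3 * S.eta * S.alpha ^ 2 * S.N
  hmem : 1000 * S.N < S.T * (3 * S.eta * (S.sigman ^ 2 * S.d)) * S.nu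
  log_pair : 2 * Real.sqrt (Real.log ((16 : ℝ) * S.N ^ 2 * S.P ^ 2 / S.delta)) ≤ 5 * S.ell
  log_init : 2 * Real.sqrt (Real.log ((16 : ℝ) * S.N * S.m * S.P / S.delta)) ≤ 4 * S.ell
  log_sig : Real.sqrt (2 * Real.log ((16 : ℝ) * S.m / S.delta)) ≤ 3 * S.ell
  two_eps_le : 2 * S.eps ≤ S.alpha
  nonempty_SU : S.SU.Nonempty
  two_le_P : 2 ≤ S.P

variable {S}

lemma exists_ne_of_two_le {P : ℕ} (hP : 2 ≤ P) (p : Fin P) : ∃ q, q ≠ p := by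
  have : Nontrivial (Fin P) := Fin.nontrivial_iff_two_le.2 hP
  exact exists_ne p

lemma d_pos : (0 : ℝ) < S.d := by exact_mod_cast S.hd

lemma nu_pos : 0 < S.nu := by
  have := S.hsigma0
  have := S.hsigman
  have : 0 < Real.sqrt S.d := Real.sqrt_pos.2 S.d_pos
  unfold nu; positivity

lemma ell_nonneg : 0 ≤ S.ell := Real.sqrt_nonneg _

lemma kap_nonneg : 0 ≤ S.kap := by
  have := S.ell_nonneg
  unfold kap; positivity

lemma noiseVar_pos : 0 < S.sigman ^ 2 * (S.d : ℝ) := by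
  have := S.hsigman
  have := S.d_pos
  positivity

lemma beta_bounds {Γ : ℝ} (hR : S.Regime Γ) (t : ℕ) {i : Fin S.N} (hi : i ∈ S.SL) :
    1 / 8 ≤ S.beta t i ∧ S.beta t i ≤ 1 := by
  have hα := S.halpha
  obtain ⟨h1, h2⟩ := S.hadvlearn t i hi
  have h3 : 1 / 2 ≤ S.asig t i / S.alpha := by
    rw [le_div_iff₀ hα, asig]; linarith [hR.two_eps_le]
  have h4 : S.asig t i / S.alpha ≤ 1 := by rw [div_le_one hα]; exact h2
  rw [beta, if_pos hi]
  exact ⟨by have := cube_le_cube h3; norm_num at this ⊢; exact this,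
    by have := cube_le_cube h4; norm_num at this ⊢; exact this⟩

lemma gram_self_bounds (hE : S.EventE) (z : Fin S.N × Fin S.P) :
    1 / 2 ≤ S.gram z z ∧ S.gram z z ≤ 3 / 2 := by
  by_cases hz : z.2 = S.sig z.1
  · rw [gram, if_pos (Or.inl hz), if_pos rfl]; norm_num
  · have hD := S.noiseVar_pos
    obtain ⟨h1, h2⟩ := hE.1 z.1 z.2 hz
    rw [gram, if_neg (by simp [hz]), S.y_mul_y, one_mul, div_le_iff₀ hD, le_div_iff₀ hD]
    unfold sqnorm at h1 h2
    constructor <;> linarith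

lemma abs_gram_le {Γ : ℝ} (hR : S.Regime Γ) (hE : S.EventE) {z z' : Fin S.N × Fin S.P}
    (hne : z ≠ z') : |S.gram z z'| ≤ S.kap := by
  by_cases hz : z.2 = S.sig z.1 ∨ z'.2 = S.sig z'.1
  · rw [gram, if_pos hz, if_neg hne, abs_zero]
    exact S.kap_nonneg
  · rw [gram, if_neg hz]
    push Not at hz
    have hD := S.noiseVar_pos
    have hd := S.d_pos
    have hsd : 0 < Real.sqrt S.d := Real.sqrt_pos.2 hd
    have h := hE.2.1 z.1 z'.1 z.2 z'.2 hz.1 hz.2 hne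
    rw [Real.sqrt_mul hd.le] at h
    rw [abs_div, abs_mul, abs_mul, abs_y, abs_y, abs_of_pos hD, one_mul, one_mul, div_le_iff₀ hD,
      kap]
    refine h.trans ?_
    have h2 : 5 * S.ell / Real.sqrt S.d * (S.sigman ^ 2 * S.d) =
        S.sigman ^ 2 * Real.sqrt S.d * (5 * S.ell) := by
      have h3 : (S.d : ℝ) = Real.sqrt S.d * Real.sqrt S.d := (Real.mul_self_sqrt hd.le).symm
      rw [div_mul_eq_mul_div, div_eq_iff hsd.ne']
      linear_combination (5 * S.ell * S.sigman ^ 2) * h3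
    rw [h2]
    have h4 := mul_le_mul_of_nonneg_left hR.log_pair
      (mul_nonneg (sq_nonneg S.sigman) hsd.le)
    linarith

lemma abs_noiseCorr_zero_le {Γ : ℝ} (hR : S.Regime Γ) (hE : S.EventE) (z : Fin S.N × Fin S.P)
    (r : Fin S.m) : |S.noiseCorr 0 z r| ≤ 4 * S.nu * S.ell := by
  by_cases hz : z.2 = S.sig z.1
  · rw [noiseCorr, if_pos hz, abs_zero]
    have := S.nu_pos
    have := S.ell_nonneg
    positivity
  · rw [noiseCorr, if_neg hz, abs_mul, abs_y, one_mul]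
    refine (hE.2.2.2.2.2.1 r z.1 z.2 hz).trans ?_
    rw [Real.sqrt_mul S.d_pos.le]
    have h := mul_le_mul_of_nonneg_left hR.log_init S.nu_pos.le
    unfold nu at h ⊢
    linarith

variable {fT : Fin S.N → ℝ} {Γ : ℝ}

/-- The normalised dynamics of a setting in the regime of the theorem. -/
def toSys (hdyn : S.ADDyn fT) (hE : S.EventE) (hR : S.Regime Γ)
    (hΓ : ∀ i, Γ ≤ S.y i * fT i) : Sys S.N S.m S.P S.T where
  SL := S.SL
  s t r := S.alpha * S.wsig t r
  n := S.noiseCorr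
  r := S.noiseCoef fT
  n0 := S.noiseCorr 0
  k := S.gram
  beta := S.beta
  M := S.marg
  g := S.gAD fT
  gam i := S.y i * fT i
  etas := 3 * S.eta * S.alpha ^ 2
  etan := 3 * S.eta * (S.sigman ^ 2 * S.d)
  kap := S.kap
  nu := S.nu
  ell := S.ell
  sg := S.alpha * S.sigma0 / 2
  s0 := 3 * (S.alpha * S.sigma0) * S.ell
  tau := S.tau
  Gam := Γ
  hN := S.hN
  hm := S.hm
  hP := S.hP
  hT := hR.hT
  hr0 z a := by simp [noiseCoef, rhoAD]
  hr := noiseCoef_succ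
  hn := hdyn.noiseCorr_eq
  hs := hdyn.wsig_succ
  hM := S.marg_eq
  hg := S.gAD_eq fT
  hgam := hΓ
  hbetaL t i hi := beta_bounds hR t hi
  hbetaU t i hi := by rw [beta, if_neg hi]
  hkd := gram_self_bounds hE
  hko z z' h := abs_gram_le hR hE h
  hn0 := abs_noiseCorr_zero_le hR hE
  hn0big := by
    obtain ⟨i, hi⟩ := hR.nonempty_SU
    obtain ⟨j, hj⟩ := exists_ne_of_two_le hR.two_le_P (S.sig i)
    obtain ⟨r, hr⟩ := hE.2.2.2.2.2.2.2 i j hj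
    refine ⟨(i, j), r, fun h => Finset.disjoint_left.1 S.hdisj h hi, ?_⟩
    rw [noiseCorr, if_neg hj]
    exact hr
  hs0 r := by
    have h := hE.2.2.2.2.1 r
    rw [dot_e1] at h
    have h2 := mul_le_mul_of_nonneg_left hR.log_sig S.hsigma0.le
    have hα := S.halpha
    rw [abs_mul, abs_of_pos hα]
    calc S.alpha * |S.wsig 0 r| ≤ S.alpha * (S.sigma0 * (3 * S.ell)) := by
          gcongr
          exact h.trans h2
      _ = _ := by ring
  hs0big := by
    obtain ⟨r, hr⟩ := hE.2.2.2.2.2.2.1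
    rw [dot_e1] at hr
    exact ⟨r, by have := mul_le_mul_of_nonneg_left hr S.halpha.le; unfold wsig; linarith⟩
  hell := hR.hell
  hlogT := hR.hlogT
  hkap0 := S.kap_nonneg
  hkap := hR.hkap
  hnu0 := S.nu_pos
  hnu := hR.hnu
  hs01 := hR.hs01
  hs0m := hR.hs0m
  hetas0 := by have := S.heta; have := S.halpha; positivity
  hetas := hR.hetas
  hetan0 := by have := S.heta; have := S.noiseVar_pos; positivity
  hetan := hR.hetan
  htau := rfl
  htaum := hR.htaum
  hU1 := by rw [S.compl_SL]; exact hR.hU1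
  hU2 := by rw [S.compl_SL]; exact hR.hU2
  hGam := hR.hGam
  hsg0 := by have := S.halpha; have := S.hsigma0; positivity
  hphase1 := hR.hphase1
  hphase2 := hR.hphase2
  hmem := hR.hmem

end Setting

lemma exists_noiseCoordLaw_eq (sigman : ℝ) (d : ℕ) (k : Fin d) :
    ∃ v : ℝ≥0, noiseCoordLaw sigman d k = gaussianReal 0 v ∧
      (v : ℝ) ≤ if (k : ℕ) = 0 then 0 else sigman ^ 2 := by
  unfold noiseCoordLaw
  by_cases h : (k : ℕ) = 0 ∨ (k : ℕ) = d - 1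
  · refine ⟨0, by rw [if_pos h, gaussianReal_zero_var], ?_⟩
    rw [NNReal.coe_zero]
    split_ifs <;> positivity
  · refine ⟨⟨sigman ^ 2, sq_nonneg _⟩, by rw [if_neg h], ?_⟩
    push Not at h
    rw [if_neg h.1]
    exact le_rfl

instance (sigman : ℝ) (d : ℕ) (k : Fin d) : IsProbabilityMeasure (noiseCoordLaw sigman d k) := by
  obtain ⟨v, hv, -⟩ := exists_noiseCoordLaw_eq sigman d k
  rw [hv]; infer_instance

instance (sigman : ℝ) (d : ℕ) : IsProbabilityMeasure (noisePatchLaw sigman d) := by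
  unfold noisePatchLaw; infer_instance

instance (P : ℕ) (hP : 0 < P) : IsProbabilityMeasure (uniformPatch P hP) := by
  unfold uniformPatch; infer_instance

lemma memLp_noiseCoordLaw (sigman : ℝ) (d : ℕ) (k : Fin d) :
    MemLp id 2 (noiseCoordLaw sigman d k) := by
  obtain ⟨v, hv, -⟩ := exists_noiseCoordLaw_eq sigman d k
  rw [hv]
  exact memLp_id_gaussianReal 2

lemma integral_noiseCoordLaw (sigman : ℝ) (d : ℕ) (k : Fin d) :
    ∫ z, z ∂noiseCoordLaw sigman d k = 0 := by
  obtain ⟨v, hv, -⟩ := exists_noiseCoordLaw_eq sigman d k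
  rw [hv, integral_id_gaussianReal]

lemma variance_noiseCoordLaw_le (sigman : ℝ) (d : ℕ) (k : Fin d) :
    Var[id; noiseCoordLaw sigman d k] ≤ if (k : ℕ) = 0 then 0 else sigman ^ 2 := by
  obtain ⟨v, hv, hle⟩ := exists_noiseCoordLaw_eq sigman d k
  rwa [hv, variance_id_gaussianReal]

lemma memLp_dot_noisePatchLaw (sigman : ℝ) {d : ℕ} (w : Fin d → ℝ) :
    MemLp (fun ξ => dot w ξ) 2 (noisePatchLaw sigman d) := by
  unfold dot noisePatchLaw
  exact memLp_finsetSum _ fun k _ => ((memLp_noiseCoordLaw sigman d k).comp_measurePreserving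
    (measurePreserving_eval _ k)).const_mul (w k)

lemma integral_dot_sq_le (sigman : ℝ) {d : ℕ} (w : Fin d → ℝ) :
    ∫ ξ, dot w ξ ^ 2 ∂noisePatchLaw sigman d ≤
      sigman ^ 2 * ∑ k : Fin d, if (k : ℕ) = 0 then 0 else w k ^ 2 := by
  have hmean : ∫ ξ, dot w ξ ∂noisePatchLaw sigman d = 0 := by
    unfold dot noisePatchLaw
    rw [integral_finsetSum]
    · refine Finset.sum_eq_zero fun k _ => ?_
      rw [integral_const_mul]
      have h2 : ∫ ξ, ξ k ∂Measure.pi (noiseCoordLaw sigman d) = 0 := by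
        rw [← integral_noiseCoordLaw sigman d k,
          ← (measurePreserving_eval (noiseCoordLaw sigman d) k).map_eq]
        exact (integral_map (f := fun z : ℝ => z)
          (measurePreserving_eval (noiseCoordLaw sigman d) k).aemeasurable
          measurable_id.aestronglyMeasurable).symm
      rw [h2, mul_zero]
    · intro k _
      exact (((memLp_noiseCoordLaw sigman d k).comp_measurePreserving
        (measurePreserving_eval _ k)).integrable (by norm_num)).const_mul (w k)
  have hvar := variance_of_integral_eq_zero
    (memLp_dot_noisePatchLaw sigman w).aestronglyMeasurable.aemeasurable hmean
  rw [← hvar]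
  have hfun : (fun ξ : Fin d → ℝ => dot w ξ) = ∑ k, fun ξ : Fin d → ℝ => w k * id (ξ k) := by
    ext ξ; simp [dot]
  rw [hfun, noisePatchLaw,
    variance_sum_pi fun k => (memLp_noiseCoordLaw sigman d k).const_mul (w k), mul_sum]
  refine Finset.sum_le_sum fun k _ => ?_
  rw [variance_const_mul]
  refine (mul_le_mul_of_nonneg_left (variance_noiseCoordLaw_le sigman d k) (sq_nonneg _)).trans ?_
  split_ifs <;> simp [mul_comm]

/-- With probability at least one half the filters correlate weakly with fresh noise patches. -/
lemma half_le_measure_dot_sq_le {m P d : ℕ} (sigman : ℝ) (w : Fin m → Fin d → ℝ) {b : ℝ}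
    (hw : ∀ r, sigman ^ 2 * ∑ k : Fin d, (if (k : ℕ) = 0 then 0 else w r k ^ 2) ≤ b)
    (hb : m * P * b ≤ 1 / 2) :
    ENNReal.ofReal (1 / 2) ≤ (Measure.pi fun _ : Fin P => noisePatchLaw sigman d)
      {ξ | ∑ r, ∑ p, dot (w r) (ξ p) ^ 2 ≤ 1} := by
  set μ := Measure.pi fun _ : Fin P => noisePatchLaw sigman d
  set f : (Fin P → Fin d → ℝ) → ℝ := fun ξ => ∑ r, ∑ p, dot (w r) (ξ p) ^ 2
  have hinteg : ∀ r p, Integrable (fun ξ : Fin P → Fin d → ℝ => dot (w r) (ξ p) ^ 2) μ :=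
    fun r p => ((memLp_dot_noisePatchLaw sigman (w r)).comp_measurePreserving
      (measurePreserving_eval (fun _ : Fin P => noisePatchLaw sigman d) p)).integrable_sq
  have hf : Integrable f μ :=
    integrable_finsetSum _ fun r _ => integrable_finsetSum _ fun p _ => hinteg r p
  have hmeas : ∀ r, Measurable fun ξ : Fin d → ℝ => dot (w r) ξ := fun r => by
    unfold dot; fun_prop
  have hle : ∫ ξ, f ξ ∂μ ≤ 1 / 2 := by
    have h1 : ∫ ξ, f ξ ∂μ = ∑ r, ∑ p, ∫ ξ, dot (w r) (ξ p) ^ 2 ∂μ := by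
      rw [integral_finsetSum _ fun r _ => integrable_finsetSum _ fun p _ => hinteg r p]
      exact Finset.sum_congr rfl fun r _ => integral_finsetSum _ fun p _ => hinteg r p
    have h2 : ∀ r p, ∫ ξ, dot (w r) (ξ p) ^ 2 ∂μ ≤ b := fun r p => by
      refine le_trans (le_of_eq ?_) ((integral_dot_sq_le sigman (w r)).trans (hw r))
      rw [← (measurePreserving_eval (fun _ : Fin P => noisePatchLaw sigman d) p).map_eq,
        integral_map (measurable_pi_apply p).aemeasurable
          ((hmeas r).pow_const 2).aestronglyMeasurable]
    rw [h1]
    refine le_trans (Finset.sum_le_sum fun r _ => Finset.sum_le_sum fun p _ => h2 r p) ?_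
    simp only [sum_const, card_univ, Fintype.card_fin, nsmul_eq_mul]
    linarith
  have hmk := mul_meas_ge_le_integral_of_nonneg (μ := μ)
    (ae_of_all _ fun ξ => Finset.sum_nonneg fun r _ => Finset.sum_nonneg fun p _ => sq_nonneg _ :
      0 ≤ᵐ[μ] f) hf 1
  rw [one_mul] at hmk
  have hm : MeasurableSet {ξ | f ξ ≤ 1} := by
    refine measurableSet_le ?_ measurable_const
    exact Finset.measurable_sum _ fun r _ => Finset.measurable_sum _ fun p _ =>
      ((hmeas r).comp (measurable_pi_apply p)).pow_const 2
  have hcompl : μ.real {ξ | f ξ ≤ 1}ᶜ ≤ 1 / 2 := by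
    refine le_trans (measureReal_mono ?_) (hmk.trans hle)
    intro ξ hξ
    simp only [Set.mem_compl_iff, Set.mem_ofPred_eq, not_le] at hξ ⊢
    exact hξ.le
  rw [probReal_compl_eq_one_sub hm] at hcompl
  rw [← ofReal_measureReal]
  exact ENNReal.ofReal_le_ofReal (by linarith)

/-- The test law charges a set at least as much as its label-uniform slice. -/
lemma le_testLaw {alpha sigman : ℝ} {P d : ℕ} (hP : 0 < P) (hd : 0 < d)
    {A : Set (Fin P → Fin d → ℝ)} {B : Set ((Fin P → Fin d → ℝ) × ℝ)}
    (h : ∀ y : ℝ, y = 1 ∨ y = -1 → ∀ s, ∀ ξ ∈ A,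
      (Function.update ξ s ((alpha * y) • e1 d hd), y) ∈ B) :
    (Measure.pi fun _ : Fin P => noisePatchLaw sigman d) A ≤ testLaw alpha sigman P d hP hd B := by
  unfold testLaw
  have hmeas : Measurable (fun z : ℝ × Fin P × (Fin P → Fin d → ℝ) =>
      (Function.update z.2.2 z.2.1 ((alpha * z.1) • e1 d hd), z.1)) := by
    refine Measurable.prodMk ?_ measurable_fst
    refine measurable_pi_lambda _ fun p => measurable_pi_lambda _ fun k => ?_
    have he : (fun z : ℝ × Fin P × (Fin P → Fin d → ℝ) =>
        Function.update z.2.2 z.2.1 ((alpha * z.1) • e1 d hd) p k) =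
        fun z => if p = z.2.1 then alpha * z.1 * e1 d hd k else z.2.2 p k := by
      ext z
      by_cases hp : p = z.2.1
      · rw [if_pos hp, ← hp]; simp
      · rw [if_neg hp, Function.update_of_ne hp]
    rw [he]
    refine Measurable.ite ?_ (by fun_prop) (by fun_prop)
    exact measurableSet_eq_fun measurable_const (by fun_prop)
  refine le_trans ?_ (Measure.le_map_apply hmeas.aemeasurable B)
  have hsub : ({1, -1} : Set ℝ) ×ˢ ((Set.univ : Set (Fin P)) ×ˢ A) ⊆
      (fun z : ℝ × Fin P × (Fin P → Fin d → ℝ) =>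
        (Function.update z.2.2 z.2.1 ((alpha * z.1) • e1 d hd), z.1)) ⁻¹' B := by
    rintro ⟨y, s, ξ⟩ ⟨hy, -, hξ⟩
    exact h y (by simpa using hy) s ξ hξ
  refine le_trans ?_ (measure_mono hsub)
  rw [Measure.prod_prod, Measure.prod_prod, measure_univ, one_mul]
  have hl : labelLaw ({1, -1} : Set ℝ) = 1 := by
    simp [labelLaw, ENNReal.inv_two_add_inv_two]
  rw [hl, one_mul]

lemma cube_add_le {a b : ℝ} (ha : 0 ≤ a) (hb : 0 ≤ b) : (a + b) ^ 3 ≤ 4 * a ^ 3 + 4 * b ^ 3 := by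
  nlinarith [mul_nonneg (add_nonneg ha hb) (sq_nonneg (a - b))]

/-- Perturbing one noise patch along a memorised direction flips the prediction. -/
lemma mul_netOut_attack_lt {m P d : ℕ} (w : Fin m → Fin d → ℝ) (X : Fin P → Fin d → ℝ)
    {s p₀ : Fin P} (hp : p₀ ≠ s) {y : ℝ} (hy : y = 1 ∨ y = -1) (x : Fin d → ℝ) {c B τ : ℝ}
    (hc : 0 ≤ c) (hτ : 0 ≤ τ) (r₀ : Fin m)
    (hB : ∑ r, y * dot (w r) (X s) ^ 3 ≤ B)
    (hX : ∑ r, ∑ p ∈ univ.erase s, dot (w r) (X p) ^ 2 ≤ 1)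
    (hx : ∀ r, -τ ≤ dot (w r) x) (hr : 2 ≤ c * dot (w r₀) x)
    (hlt : B + 1 + m * (4 + 4 * (c * τ) ^ 3) < (c * dot (w r₀) x) ^ 3 / 8) :
    y * netOut w (fun p => X p + (if p = p₀ then (-(y * c)) • x else 0)) < 0 := by
  have hyy : y * y = 1 := by rcases hy with h | h <;> rw [h] <;> norm_num
  have hsq : ∀ r, ∀ p ∈ univ.erase s, dot (w r) (X p) ^ 2 ≤ 1 := by
    intro r p hp
    refine le_trans ?_ hX
    refine le_trans (Finset.single_le_sum (f := fun p => dot (w r) (X p) ^ 2)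
      (fun _ _ => sq_nonneg _) hp) ?_
    exact Finset.single_le_sum (f := fun r => ∑ p ∈ univ.erase s, dot (w r) (X p) ^ 2)
      (fun _ _ => Finset.sum_nonneg fun _ _ => sq_nonneg _) (mem_univ r)
  have habs : ∀ r, ∀ p ∈ univ.erase s, |y * dot (w r) (X p)| ≤ 1 := by
    intro r p hp
    have := abs_le_of_sq_le_sq (a := dot (w r) (X p)) (b := 1)
      (by simpa using hsq r p hp) zero_le_one
    rw [abs_mul]
    have hy1 : |y| = 1 := by rcases hy with h | h <;> rw [h] <;> norm_num
    rw [hy1, one_mul]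
    exact this
  have hp₀ : p₀ ∈ univ.erase s := Finset.mem_erase.2 ⟨hp, mem_univ _⟩
  have hterm : ∀ r, ∀ p, y * dot (w r) (X p + (if p = p₀ then (-(y * c)) • x else 0)) ^ 3 =
      if p = p₀ then (y * dot (w r) (X p) - c * dot (w r) x) ^ 3
      else y * dot (w r) (X p) ^ 3 := by
    intro r p
    split_ifs with h
    · rw [dot_add_right, dot_smul_right]
      rcases hy with h | h <;> rw [h] <;> ring
    · rw [add_zero]
  have hrow : ∀ r, ∑ p, y * dot (w r) (X p + (if p = p₀ then (-(y * c)) • x else 0)) ^ 3 ≤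
      y * dot (w r) (X s) ^ 3 + ∑ p ∈ univ.erase s, dot (w r) (X p) ^ 2 +
        (y * dot (w r) (X p₀) - c * dot (w r) x) ^ 3 := by
    intro r
    simp only [hterm]
    rw [← Finset.add_sum_erase _ _ (mem_univ s), if_neg hp.symm, add_assoc]
    refine add_le_add le_rfl ?_
    rw [← Finset.add_sum_erase _ _ hp₀, if_pos rfl, add_comm]
    refine add_le_add ?_ le_rfl
    refine le_trans (Finset.sum_le_sum (g := fun p => dot (w r) (X p) ^ 2) fun p hp => ?_) ?_
    · obtain ⟨h1, h2⟩ := Finset.mem_erase.1 hp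
      rw [if_neg h1]
      have h3 := (abs_le.1 (habs r p h2)).2
      nlinarith [sq_nonneg (dot (w r) (X p))]
    · exact Finset.sum_le_sum_of_subset_of_nonneg (Finset.erase_subset _ _)
        fun _ _ _ => sq_nonneg _
  have hcube : ∀ r, (y * dot (w r) (X p₀) - c * dot (w r) x) ^ 3 ≤
      (4 + 4 * (c * τ) ^ 3) - if r = r₀ then (c * dot (w r₀) x) ^ 3 / 8 else 0 := by
    intro r
    have h1 := (abs_le.1 (habs r p₀ hp₀)).2
    have hcτ : 0 ≤ c * τ := mul_nonneg hc hτ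
    split_ifs with h
    · subst h
      have h2 : y * dot (w r) (X p₀) - c * dot (w r) x ≤ -(c * dot (w r) x / 2) := by linarith
      have h3 := cube_le_cube h2
      have h4 : (-(c * dot (w r) x / 2)) ^ 3 = -((c * dot (w r) x) ^ 3 / 8) := by ring
      have : 0 ≤ (c * τ) ^ 3 := by positivity
      linarith
    · have h2 : y * dot (w r) (X p₀) - c * dot (w r) x ≤ 1 + c * τ := by
        nlinarith [mul_le_mul_of_nonneg_left (hx r) hc]
      have h3 := cube_le_cube h2
      have h4 := cube_add_le zero_le_one hcτ
      linarith
  have hsum : ∑ r, (y * dot (w r) (X p₀) - c * dot (w r) x) ^ 3 ≤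
      m * (4 + 4 * (c * τ) ^ 3) - (c * dot (w r₀) x) ^ 3 / 8 := by
    refine (Finset.sum_le_sum fun r _ => hcube r).trans (le_of_eq ?_)
    rw [sum_sub_distrib]
    simp
    ring
  rw [netOut_eq, mul_sum]
  simp only [mul_sum]
  have htot := Finset.sum_le_sum fun r (_ : r ∈ univ) => hrow r
  rw [sum_add_distrib, sum_add_distrib] at htot
  linarith

namespace Setting

variable {S : Setting} {fT : Fin S.N → ℝ} {Γ : ℝ}

/-- Off the learnable feature, the trained filters stay small. -/
lemma sum_sq_w_le (hdyn : S.ADDyn fT) (hE : S.EventE) (hR : S.Regime Γ)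
    (hΓ : ∀ i, Γ ≤ S.y i * fT i) (r : Fin S.m) :
    S.sigman ^ 2 * ∑ k : Fin S.d, (if (k : ℕ) = 0 then 0 else S.w S.T r k ^ 2) ≤
      8 * S.nu ^ 2 + 18 * (S.kap * S.N * S.P) ^ 2 := by
  have hI := (toSys hdyn hE hR hΓ).inv S.T le_rfl
  have hd := S.d_pos
  have hD := S.noiseVar_pos
  have hσ := S.hsigman
  have hl := S.ell_nonneg
  set D : ℝ := S.sigman ^ 2 * S.d with hDdef
  set c : Fin S.N × Fin S.P → ℝ := fun z =>
    if z.2 = S.sig z.1 then 0 else S.y z.1 * S.rhoAD fT z.1 z.2 r S.T with hcdef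
  have hcsq : ∀ z, c z ^ 2 * sqnorm (S.x z.1 z.2) ≤ (12 * S.ell) ^ 2 * (3 / 2) / D := by
    intro z
    by_cases hz : z.2 = S.sig z.1
    · simp only [hcdef, if_pos hz]
      have : 0 ≤ (12 * S.ell) ^ 2 * (3 / 2) / D := by positivity
      linarith
    · have h1 : 0 ≤ S.noiseCoef fT S.T z r := (hI.2 z r).1
      have h2 : S.noiseCoef fT S.T z r ≤ 12 * S.ell := hI.r_le le_rfl z r
      rw [noiseCoef, if_neg hz] at h1 h2
      have h3 : (D * S.rhoAD fT z.1 z.2 r S.T) ^ 2 ≤ (12 * S.ell) ^ 2 := by gcongr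
      have h4 := (hE.1 z.1 z.2 hz).2
      have h4' : sqnorm (S.x z.1 z.2) ≤ 3 / 2 * D := by rw [hDdef]; linarith
      simp only [hcdef, if_neg hz]
      have hy := S.y_mul_y z.1
      rw [mul_pow, pow_two (S.y z.1), hy, one_mul, le_div_iff₀ hD]
      calc S.rhoAD fT z.1 z.2 r S.T ^ 2 * sqnorm (S.x z.1 z.2) * D
          ≤ S.rhoAD fT z.1 z.2 r S.T ^ 2 * (3 / 2 * D) * D := by gcongr
        _ = (D * S.rhoAD fT z.1 z.2 r S.T) ^ 2 * (3 / 2) := by ring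
        _ ≤ _ := by gcongr
  have hcoord : ∀ k : Fin S.d, (if (k : ℕ) = 0 then 0 else S.w S.T r k ^ 2) ≤
      2 * S.w 0 r k ^ 2 + 2 * (S.N * S.P * ∑ z, c z ^ 2 * S.x z.1 z.2 k ^ 2) := by
    intro k
    split_ifs with hk
    · positivity
    · have hv : (Pi.single k (1 : ℝ) : Fin S.d → ℝ) ⟨0, S.hd⟩ = 0 := by
        rw [Pi.single_eq_of_ne]
        intro h
        exact hk (by rw [← h])
      have h1 := hdyn.dot_eq S.T r hv
      simp only [dot_single] at h1
      have h2 : (∑ i, ∑ j, if j = S.sig i then 0 else S.y i * S.rhoAD fT i j r S.T * S.x i j k) =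
          ∑ z : Fin S.N × Fin S.P, c z * S.x z.1 z.2 k := by
        rw [Fintype.sum_prod_type]
        refine Finset.sum_congr rfl fun i _ => Finset.sum_congr rfl fun j _ => ?_
        simp only [hcdef]
        split_ifs <;> simp
      rw [h2] at h1
      have h3 := sq_sum_le_card_mul_sum_sq (s := (univ : Finset (Fin S.N × Fin S.P)))
        (f := fun z => c z * S.x z.1 z.2 k)
      simp only [mul_pow, card_univ, Fintype.card_prod, Fintype.card_fin, Nat.cast_mul] at h3
      rw [h1]
      nlinarith [sq_nonneg (S.w 0 r k - ∑ z : Fin S.N × Fin S.P, c z * S.x z.1 z.2 k)]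
  have hw0 : ∑ k, S.w 0 r k ^ 2 ≤ 4 * S.sigma0 ^ 2 * S.d := by
    have h := hE.2.2.2.1 r
    have h0 : sqnorm (S.w 0 r) = ∑ k, S.w 0 r k ^ 2 := by simp [sqnorm, dot, pow_two]
    rw [h0] at h
    have h1 : 0 ≤ ∑ k, S.w 0 r k ^ 2 := Finset.sum_nonneg fun _ _ => sq_nonneg _
    have h2 := pow_le_pow_left₀ (Real.sqrt_nonneg _) h 2
    rw [Real.sq_sqrt h1, mul_pow, mul_pow, Real.sq_sqrt hd.le] at h2
    linarith
  have hsum : ∑ k : Fin S.d, (if (k : ℕ) = 0 then 0 else S.w S.T r k ^ 2) ≤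
      2 * (4 * S.sigma0 ^ 2 * S.d) +
        2 * (S.N * S.P * (S.N * S.P * ((12 * S.ell) ^ 2 * (3 / 2) / D))) := by
    refine (Finset.sum_le_sum fun k _ => hcoord k).trans ?_
    rw [sum_add_distrib, ← mul_sum, ← mul_sum, ← mul_sum, Finset.sum_comm]
    have h1 : ∑ z : Fin S.N × Fin S.P, ∑ k, c z ^ 2 * S.x z.1 z.2 k ^ 2 ≤
        S.N * S.P * ((12 * S.ell) ^ 2 * (3 / 2) / D) := by
      refine (Finset.sum_le_card_nsmul _ _ ((12 * S.ell) ^ 2 * (3 / 2) / D)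
        fun z _ => ?_).trans (le_of_eq ?_)
      · rw [← mul_sum]
        refine le_trans (le_of_eq ?_) (hcsq z)
        simp [sqnorm, dot, pow_two]
      · simp
    gcongr
  have hfin := mul_le_mul_of_nonneg_left hsum (sq_nonneg S.sigman)
  refine hfin.trans ?_
  have e1 : S.nu ^ 2 = S.sigma0 ^ 2 * S.sigman ^ 2 * S.d := by
    rw [nu, mul_pow, mul_pow, Real.sq_sqrt hd.le]
  have e2 : (S.kap * S.N * S.P) ^ 2 = 25 * S.ell ^ 2 / S.d * (S.N * S.P) ^ 2 := by
    rw [kap, mul_pow, mul_pow, div_pow, Real.sq_sqrt hd.le]; ring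
  rw [e1, e2, hDdef]
  have e3 : S.sigman ^ 2 * (2 * (4 * S.sigma0 ^ 2 * S.d) + 2 * (S.N * S.P * (S.N * S.P *
      ((12 * S.ell) ^ 2 * (3 / 2) / (S.sigman ^ 2 * S.d))))) =
      8 * (S.sigma0 ^ 2 * S.sigman ^ 2 * S.d) +
        432 * (S.ell ^ 2 / S.d * (S.N * S.P) ^ 2) := by
    field_simp; ring
  rw [e3]
  have : 0 ≤ S.ell ^ 2 / S.d * ((S.N : ℝ) * S.P) ^ 2 := by positivity
  have e4 : 25 * S.ell ^ 2 / S.d * ((S.N : ℝ) * S.P) ^ 2 =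
    25 * (S.ell ^ 2 / S.d * (S.N * S.P) ^ 2) := by ring
  rw [e4]
  linarith

end Setting

lemma attack_strength_bounds {m P l c b τ : ℝ} (hm : 1 ≤ m) (hP : 1 ≤ P) (hl : 1 ≤ l)
    (hbc : 1 ≤ 27 * (m * P * b ^ 3)) (hτ : 1728 * (m ^ 2 * P * τ ^ 3) ≤ 1)
    (hc : 10 ^ 4 * (m * Real.sqrt P * l) ≤ c) :
    2 ≤ c * b ∧ m * (6 * l) ^ 3 + 1 + m * (4 + 4 * (c * τ) ^ 3) < (c * b) ^ 3 / 8 := by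
  have hsP : 1 ≤ Real.sqrt P := Real.one_le_sqrt.2 hP
  have hm0 : 0 < m := by linarith
  have hP0 : 0 < P := by linarith
  have hl0 : 0 < l := by linarith
  have hc0 : 0 < c := lt_of_lt_of_le (by positivity) hc
  have hl3 : 1 ≤ l ^ 3 := one_le_pow₀ hl
  have hR : 10 ^ 12 * (m * l ^ 3) * (m * P) ≤ c ^ 3 := by
    calc 10 ^ 12 * (m * l ^ 3) * (m * P) = 10 ^ 12 * (m * m * 1 * P * 1 * l ^ 3) := by ring
      _ ≤ 10 ^ 12 * (m * m * m * P * Real.sqrt P * l ^ 3) := by gcongr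
      _ = (10 ^ 4 * (m * Real.sqrt P * l)) ^ 3 := by
          have h : Real.sqrt P * Real.sqrt P = P := Real.mul_self_sqrt hP0.le
          linear_combination (-(10 ^ 12 * m ^ 3 * Real.sqrt P * l ^ 3)) * h
      _ ≤ c ^ 3 := by gcongr
  set v := c ^ 3 / (m * P) with hv
  have hmP : 0 < m * P := by positivity
  have hcv : c ^ 3 = v * (m * P) := by rw [hv]; field_simp
  have hv1 : 10 ^ 12 * (m * l ^ 3) ≤ v := by rw [hv, le_div_iff₀ hmP]; exact hR
  have hml : 1 ≤ m * l ^ 3 := one_le_mul_of_one_le_of_one_le hm hl3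
  have hmml : m ≤ m * l ^ 3 := le_mul_of_one_le_right hm0.le hl3
  have hv0 : 0 ≤ v := by linarith
  have h1 : v ≤ 27 * (c * b) ^ 3 := by
    have h := mul_le_mul_of_nonneg_left hbc hv0
    have e : (c * b) ^ 3 = v * (m * P) * b ^ 3 := by rw [mul_pow, hcv]
    rw [e]; linarith
  have h2 : m * (c * τ) ^ 3 ≤ v / 1728 := by
    have h := mul_le_mul_of_nonneg_left hτ hv0
    have e : m * (c * τ) ^ 3 = v * (m ^ 2 * P * τ ^ 3) := by rw [mul_pow, hcv]; ring
    rw [e]; linarith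
  refine ⟨?_, ?_⟩
  · by_contra hlt
    push Not at hlt
    have h3 := cube_le_cube hlt.le
    norm_num at h3
    linarith
  · have e : m * (6 * l) ^ 3 = 216 * (m * l ^ 3) := by ring
    rw [e]
    linarith

lemma lloss_le_exp_neg (z : ℝ) : lloss z ≤ Real.exp (-z) := by
  have := Real.log_le_sub_one_of_pos (show 0 < 1 + Real.exp (-z) by positivity)
  unfold lloss; linarith

lemma lloss_le_two {z : ℝ} (hz : -1 ≤ z) : lloss z ≤ 2 := by
  have h1 : Real.exp (-z) ≤ Real.exp 1 := Real.exp_le_exp.2 (by linarith)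
  have h2 := Real.add_one_le_exp (1 : ℝ)
  have h3 : 1 + Real.exp (-z) ≤ Real.exp 2 := by
    have e : Real.exp 2 = Real.exp 1 * Real.exp 1 := by rw [← Real.exp_add]; norm_num
    nlinarith
  calc lloss z ≤ Real.log (Real.exp 2) := Real.log_le_log (by positivity) h3
    _ = 2 := Real.log_exp 2

lemma rpow_third_cube {a : ℝ} (ha : 0 ≤ a) : (a ^ ((1 : ℝ) / 3)) ^ 3 = a := by
  rw [← Real.rpow_natCast, ← Real.rpow_mul ha]; norm_num

lemma le_of_cube_le {a b : ℝ} (h : a ^ 3 ≤ b ^ 3) : a ≤ b :=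
  (Odd.strictMono_pow (by decide : Odd 3)).le_iff_le.1 h

namespace Setting

variable {S : Setting} {fT : Fin S.N → ℝ} {Γ : ℝ}

lemma exists_wsig_ge (h : 1 ≤ ∑ r, (S.alpha * S.wsig S.T r) ^ 3) :
    ∃ r, 1 / (S.alpha * (S.m : ℝ) ^ ((1 : ℝ) / 3)) ≤ S.wsig S.T r := by
  have hm : (0 : ℝ) < S.m := by exact_mod_cast S.hm
  have hα := S.halpha
  have : ∃ r ∈ (univ : Finset (Fin S.m)), 1 / (S.m : ℝ) ≤ (S.alpha * S.wsig S.T r) ^ 3 := by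
    have : Nonempty (Fin S.m) := ⟨⟨0, S.hm⟩⟩
    refine Finset.exists_le_of_sum_le univ_nonempty ?_
    simp only [sum_const, card_univ, Fintype.card_fin, nsmul_eq_mul]
    rw [mul_one_div_cancel hm.ne']
    exact h
  obtain ⟨r, -, hr⟩ := this
  refine ⟨r, ?_⟩
  have hmr : 0 < (S.m : ℝ) ^ ((1 : ℝ) / 3) := by positivity
  rw [mul_comm, ← div_div, div_le_iff₀ hα, mul_comm (S.wsig S.T r)]
  refine le_of_cube_le ?_
  rw [div_pow, rpow_third_cube hm.le, one_pow]
  exact hr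

lemma one_div_le_of_memorized {b : ℝ} (h : 1 ≤ 27 * (S.m * S.P * b ^ 3)) :
    1 / (3 * ((S.m : ℝ) * S.P) ^ ((1 : ℝ) / 3)) ≤ b := by
  have hm : (0 : ℝ) < S.m := by exact_mod_cast S.hm
  have hP : (0 : ℝ) < S.P := by exact_mod_cast S.hP
  have hmP : 0 < (S.m : ℝ) * S.P := by positivity
  refine le_of_cube_le ?_
  rw [div_pow, mul_pow, rpow_third_cube hmP.le, one_pow, div_le_iff₀ (by positivity)]
  linarith

lemma sum_lloss_le (hdyn : S.ADDyn fT) (hE : S.EventE) (hR : S.Regime Γ)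
    (hΓ : ∀ i, Γ ≤ S.y i * fT i) {θ K : ℝ} (hθ : 0 < θ)
    (hK : K ≤ ∑ r, (S.alpha * S.wsig S.T r) ^ 3) (hKθ : Real.log (2 / θ) ≤ K / 8 - 1 / 2)
    (hpun : 4 * S.pun ≤ θ) : 1 / (S.N : ℝ) * ∑ i, lloss (S.marg S.T i) ≤ θ := by
  have hI := (toSys hdyn hE hR hΓ).inv S.T le_rfl
  have hN : (0 : ℝ) < S.N := by exact_mod_cast S.hN
  have hterm : ∀ i, lloss (S.marg S.T i) ≤ θ / 2 + if i ∈ S.SU then 2 else 0 := by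
    intro i
    have h1 : -1 ≤ S.marg S.T i := hI.neg_one_le_M le_rfl i
    split_ifs with hi
    · linarith [lloss_le_two h1]
    · have hi' : i ∈ S.SL := by
        by_contra hc
        exact hi (S.mem_SU_of_notMem_SL hc)
      have h2 : (∑ r, (S.alpha * S.wsig S.T r) ^ 3) / 8 - 1 / 2 ≤ S.marg S.T i :=
        hI.M_ge_sum le_rfl hi'
      have h3 : Real.exp (-S.marg S.T i) ≤ Real.exp (-Real.log (2 / θ)) :=
        Real.exp_le_exp.2 (by linarith)
      rw [Real.exp_neg (Real.log _), Real.exp_log (by positivity), inv_div] at h3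
      linarith [lloss_le_exp_neg (S.marg S.T i)]
  have hsum := Finset.sum_le_sum fun i (_ : i ∈ univ) => hterm i
  rw [sum_add_distrib, Finset.sum_ite_mem] at hsum
  simp only [sum_const, card_univ, Fintype.card_fin, nsmul_eq_mul, univ_inter] at hsum
  rw [pun, ← mul_div_assoc, div_le_iff₀ hN] at hpun
  rw [one_div, inv_mul_le_iff₀ hN]
  linarith

lemma half_le_robErr (hdyn : S.ADDyn fT) (hE : S.EventE) (hR : S.Regime Γ)
    (hΓ : ∀ i, Γ ≤ S.y i * fT i)
    (hvar : S.m * S.P * (8 * S.nu ^ 2 + 18 * (S.kap * S.N * S.P) ^ 2) ≤ 1 / 2)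
    (hatt : 10 ^ 4 * (S.m * Real.sqrt S.P * S.ell) *
      (S.sigman * Real.sqrt (2 * Real.log ((16 : ℝ) * S.d * S.N * S.P / S.delta))) ≤ S.eps) :
    ENNReal.ofReal (1 / 2) ≤ S.robErr S.T := by
  have hm : (1 : ℝ) ≤ S.m := by exact_mod_cast S.hm
  have hP : (1 : ℝ) ≤ S.P := by exact_mod_cast S.hP
  have hN : (1 : ℝ) ≤ S.N := by exact_mod_cast S.hN
  have hd : (1 : ℝ) ≤ S.d := by exact_mod_cast S.hd
  have hδ := S.hdelta0
  have hδ1 := S.hdelta1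
  have hσ := S.hsigman
  have hε := S.heps
  have hτ : 0 ≤ S.tau := by
    have := S.nu_pos
    have := S.ell_nonneg
    have := S.kap_nonneg
    unfold tau; positivity
  have hI := (toSys hdyn hE hR hΓ).inv S.T le_rfl
  obtain ⟨⟨i, j⟩, r₀, hi, hb, hbc⟩ := (toSys hdyn hE hR hΓ).exists_memorized
  change 0 < S.noiseCorr S.T (i, j) r₀ at hb
  change 1 ≤ 27 * (S.m * S.P * S.noiseCorr S.T (i, j) r₀ ^ 3) at hbc
  have hj : j ≠ S.sig i := by
    rintro rfl
    simp [noiseCorr] at hb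
  set q := S.sigman * Real.sqrt (2 * Real.log ((16 : ℝ) * S.d * S.N * S.P / S.delta)) with hq
  have hq0 : 0 < q := by
    have h1 : (1 : ℝ) < 16 * S.d * S.N * S.P / S.delta := by
      rw [lt_div_iff₀ hδ]
      have : (1 : ℝ) ≤ S.d * S.N * S.P := one_le_mul_of_one_le_of_one_le
        (one_le_mul_of_one_le_of_one_le hd hN) hP
      nlinarith
    have := Real.log_pos h1
    positivity
  set c := S.eps / q with hc
  have hc0 : 0 ≤ c := by positivity
  have hcge : 10 ^ 4 * (S.m * Real.sqrt S.P * S.ell) ≤ c := by rw [hc, le_div_iff₀ hq0]; exact hatt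
  have hcorr : ∀ r, S.noiseCorr S.T (i, j) r = dot (S.w S.T r) (S.y i • S.x i j) := by
    intro r
    rw [noiseCorr, if_neg hj, dot_smul_right]
  obtain ⟨hb2, hb3⟩ := attack_strength_bounds hm hP hR.hell hbc hR.htaum hcge
  rw [hcorr] at hb2 hb3
  refine (half_le_measure_dot_sq_le S.sigman (S.w S.T)
    (fun r => S.sum_sq_w_le hdyn hE hR hΓ r) hvar).trans ?_
  refine le_testLaw S.hP S.hd fun y hy s ξ hξ => ?_
  obtain ⟨p₀, hp₀⟩ := exists_ne_of_two_le hR.two_le_P s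
  set X := Function.update ξ s ((S.alpha * y) • e1 S.d S.hd) with hX
  refine ⟨fun p => if p = p₀ then (-(y * c)) • (S.y i • S.x i j) else 0, fun p k => ?_, ?_⟩
  · dsimp only
    split_ifs with h
    · have h1 := hE.2.2.1 i j hj k
      have hy1 : |y| = 1 := by rcases hy with h | h <;> rw [h] <;> norm_num
      simp only [Pi.smul_apply, smul_eq_mul, abs_mul, abs_neg, hy1, S.abs_y, one_mul,
        abs_of_nonneg hc0]
      calc c * |S.x i j k| ≤ c * q := by gcongr
        _ = S.eps := by rw [hc]; field_simp
    · simpa using hε.le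
  · refine mul_netOut_attack_lt (S.w S.T) X hp₀ hy (S.y i • S.x i j) hc0 hτ r₀
      (B := S.m * (6 * S.ell) ^ 3) ?_ ?_ ?_ hb2 hb3
    · have h1 : ∑ r, (S.alpha * S.wsig S.T r) ^ 3 ≤ S.m * (6 * S.ell) ^ 3 := hI.sum_s_le le_rfl
      refine le_trans (le_of_eq (Finset.sum_congr rfl fun r _ => ?_)) h1
      rw [hX, Function.update_self, dot_smul_right, dot_e1]
      unfold wsig
      rcases hy with h | h <;> rw [h] <;> ring
    · refine le_trans ?_ hξ
      refine Finset.sum_le_sum fun r _ => ?_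
      refine le_trans (Finset.sum_le_sum fun p hp => ?_)
        (Finset.sum_le_sum_of_subset_of_nonneg (Finset.erase_subset s _)
          fun _ _ _ => sq_nonneg _)
      rw [hX, Function.update_of_ne (Finset.ne_of_mem_erase hp)]
    · intro r
      rw [← hcorr]
      exact hI.neg_tau_le_n le_rfl (i, j) r

end Setting

namespace Setting

variable {S : Setting} {C : ℝ}

/-- The parameter conditions cleared of denominators, with `l` the logarithmic factor. -/
structure Scales (S : Setting) (C l L : ℝ) : Prop where
  two_le_P : 2 ≤ S.P
  P_le : (S.P : ℝ) ≤ C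
  T_ge : (16 : ℝ) ≤ S.T
  l_eq : l = Real.log ((S.T : ℝ) * S.N * S.m * S.P / S.delta)
  C_le : C ≤ l
  log_T_le : Real.log S.T ≤ l
  l_le : l ≤ L
  dim : C * (S.m * S.P * S.N * l ^ 2) ^ 2 ≤ S.d
  init_sig : C * L * (S.sigma0 * S.alpha * (S.m : ℝ) ^ ((2 : ℝ) / 3)) ≤ 1
  init_noise : C * L * (S.nu * Real.sqrt S.d * S.m ^ 2 * Real.sqrt S.P) ≤ 1
  rate_noise : C * l * (S.eta * (S.sigman ^ 2 * S.d)) ≤ 1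
  rate_sig : C * l * (S.eta * S.alpha ^ 2) ≤ 1
  horizon : C * S.N ≤ S.T * (S.eta * S.sigma0 * (S.sigman * Real.sqrt S.d) ^ 3)
  signal : C * (S.sigman * Real.sqrt S.d) * l ≤ S.alpha * (S.N : ℝ) ^ ((1 : ℝ) / 3)
  attack : C * (S.sigman * (S.m * Real.sqrt S.P * Real.sqrt l) *
    Real.sqrt (Real.log ((16 : ℝ) * S.d * S.N * S.P / S.delta))) ≤ S.eps
  eps_le : C * S.eps ≤ S.alpha
  C_le_card : C ≤ S.SU.card
  card_le : C * S.SU.card ≤ 2 * l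
  card_le_N : C ^ 2 * S.SU.card ≤ S.N

lemma mul_le_of_le_inv_mul_div {a b C M l : ℝ} (hC : 0 < C) (hl : 0 < l) (hb : 0 < b)
    (h : a ≤ C⁻¹ * M / l) (hM : M ≤ 1 / b) : C * l * (a * b) ≤ 1 := by
  have h1 : a * (C * l) ≤ M := by
    rw [le_div_iff₀ hl, inv_mul_eq_div, le_div_iff₀ hC] at h
    linarith
  have h2 := h1.trans hM
  rw [le_div_iff₀ hb] at h2
  linarith

set_option maxHeartbeats 1000000 in
lemma exists_scales (hC : 16 ≤ C) (hH : S.CondH C) (hS : S.SparseRegime C) :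
    ∃ l L, S.Scales C l L := by
  obtain ⟨-, hor, hdim, hsig, hinit, hrate, heps, heps', -, -, hP2, hPC⟩ := hH
  obtain ⟨hp1, hp2, hNbig⟩ := hS
  have hm : (1 : ℝ) ≤ S.m := by exact_mod_cast S.hm
  have hP : (1 : ℝ) ≤ S.P := by exact_mod_cast S.hP
  have hN : (1 : ℝ) ≤ S.N := by exact_mod_cast S.hN
  have hd : (1 : ℝ) ≤ S.d := by exact_mod_cast S.hd
  have hN0 : (0 : ℝ) < S.N := by linarith
  have hm0 : (0 : ℝ) < S.m := by linarith
  have hP0 : (0 : ℝ) < S.P := by linarith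
  have hd0 : (0 : ℝ) < S.d := by linarith
  have hC0 : 0 < C := by linarith
  have hδ := S.hdelta0
  have hδ1 := S.hdelta1
  have hσ := S.hsigman
  have hσ0 := S.hsigma0
  have hα := S.halpha
  have hη := S.heta
  have hν := S.nu_pos
  have hsd : 0 < Real.sqrt S.d := Real.sqrt_pos.2 hd0
  have hsP : 1 ≤ Real.sqrt S.P := Real.one_le_sqrt.2 hP
  have hsdd : Real.sqrt S.d * Real.sqrt S.d = S.d := Real.mul_self_sqrt hd0.le
  have hsd1 : 1 ≤ Real.sqrt S.d := Real.one_le_sqrt.2 hd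
  have hor' : C * S.N ≤ S.T * (S.eta * S.sigma0 * (S.sigman * Real.sqrt S.d) ^ 3) := by
    rw [div_le_iff₀ (by positivity)] at hor
    refine hor.trans (le_of_eq ?_)
    linear_combination (-(S.T * S.eta * S.sigma0 * S.sigman ^ 3 * Real.sqrt S.d)) * hsdd
  have hT0 : (0 : ℝ) < S.T := by
    by_contra hcon
    have h0 : (S.T : ℝ) = 0 := le_antisymm (not_lt.1 hcon) (Nat.cast_nonneg _)
    rw [h0, zero_mul] at hor'
    have : 0 < C * S.N := by positivity
    linarith
  have hT1 : (1 : ℝ) ≤ S.T := by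
    have : 0 < S.T := by exact_mod_cast hT0
    exact_mod_cast this
  have hδinv : 1 ≤ 1 / S.delta := by rw [le_div_iff₀ hδ]; linarith
  set l := Real.log ((S.T : ℝ) * S.N * S.m * S.P / S.delta) with hl
  set L := Real.log ((S.T : ℝ) * S.d * S.N * S.m * S.P / S.delta) with hL
  set L₂ := Real.log ((S.T : ℝ) * S.d * S.N * S.P / S.delta) with hL₂
  have hl_ge : ∀ z : ℝ, 0 < z → z ≤ (S.T : ℝ) * S.N * S.m * S.P / S.delta → Real.log z ≤ l :=
    fun z hz h => Real.log_le_log hz h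
  have hNmP : 1 ≤ S.N * S.m * S.P * (1 / S.delta) :=
    one_le_mul_of_one_le_of_one_le (one_le_mul_of_one_le_of_one_le
      (one_le_mul_of_one_le_of_one_le hN hm) hP) hδinv
  have hlogT : Real.log S.T ≤ l := by
    refine hl_ge _ hT0 ?_
    have := le_mul_of_one_le_right hT0.le hNmP
    refine this.trans (le_of_eq ?_); ring
  have hlogd : C ^ 2 ≤ Real.log S.d := by
    have h := hp1.trans hp2
    rw [div_le_div_iff_of_pos_right hN0, inv_mul_eq_div, le_div_iff₀ hC0] at h
    linarith
  have hLeq : L = Real.log S.d + l := by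
    rw [hL, hl, ← Real.log_mul (by positivity) (by positivity)]
    congr 1; ring
  have hmP : (1 : ℝ) ≤ S.m * S.P := one_le_mul_of_one_le_of_one_le hm hP
  have hC2 : 2 * C ≤ C ^ 2 := by rw [pow_two]; gcongr; linarith
  have hl0 : 0 ≤ l := (Real.log_nonneg hT1).trans hlogT
  have hLlog : Real.log S.d ≤ L := by linarith
  have hL1 : 1 ≤ L := by linarith
  have hNL : C * L ≤ S.N := by
    refine le_trans ?_ hNbig
    have h0 : 0 ≤ C * L := by positivity
    refine (le_mul_of_one_le_right h0 hmP).trans (le_of_eq ?_); ring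
  have hNC : C ≤ S.N := (le_mul_of_one_le_right hC0.le hL1).trans hNL
  have hl1 : 1 ≤ l := by
    have h1 : Real.exp 1 ≤ S.N := by linarith [Real.exp_one_lt_d9]
    have h2 : 1 ≤ Real.log S.N := (Real.le_log_iff_exp_le hN0).2 h1
    refine h2.trans (hl_ge _ hN0 ?_)
    have h3 : 1 ≤ S.T * S.m * S.P * (1 / S.delta) :=
      one_le_mul_of_one_le_of_one_le (one_le_mul_of_one_le_of_one_le
        (one_le_mul_of_one_le_of_one_le hT1 hm) hP) hδinv
    refine (le_mul_of_one_le_right hN0.le h3).trans (le_of_eq ?_); ring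
  have rate_noise : C * l * (S.eta * (S.sigman ^ 2 * S.d)) ≤ 1 :=
    mul_le_of_le_inv_mul_div hC0 (by linarith) (by positivity) hrate
      ((min_le_left _ _).trans (min_le_right _ _))
  have rate_sig : C * l * (S.eta * S.alpha ^ 2) ≤ 1 :=
    mul_le_of_le_inv_mul_div hC0 (by linarith) (by positivity) hrate (min_le_right _ _)
  have init_sig : C * L * (S.sigma0 * S.alpha * (S.m : ℝ) ^ ((2 : ℝ) / 3)) ≤ 1 := by
    rw [mul_assoc S.sigma0]
    exact mul_le_of_le_inv_mul_div hC0 (by linarith) (by positivity) hinit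
      ((min_le_left _ _).trans (min_le_right _ _))
  have init_noise : C * L * (S.nu * Real.sqrt S.d * S.m ^ 2 * Real.sqrt S.P) ≤ 1 := by
    have h : C * L * (S.sigma0 * (S.sigman * S.m ^ 2 * Real.sqrt S.P * S.d)) ≤ 1 :=
      mul_le_of_le_inv_mul_div hC0 (by linarith) (by positivity) hinit (min_le_right _ _)
    refine le_trans (le_of_eq ?_) h
    unfold nu
    linear_combination (C * L * S.sigma0 * S.sigman * S.m ^ 2 * Real.sqrt S.P) * hsdd
  have hTd : 16 * Real.sqrt S.d ≤ S.T := by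
    have h1 : S.eta * (S.sigman ^ 2 * S.d) ≤ 1 := by
      have h0 : 0 ≤ S.eta * (S.sigman ^ 2 * S.d) := by positivity
      exact (le_mul_of_one_le_left h0
        (one_le_mul_of_one_le_of_one_le (by linarith) hl1)).trans rate_noise
    have h2 : S.nu * Real.sqrt S.d ≤ 1 := by
      have h0 : 0 ≤ S.nu * Real.sqrt S.d := by positivity
      have h3 : 1 ≤ C * L * (S.m ^ 2 * Real.sqrt S.P) :=
        one_le_mul_of_one_le_of_one_le (one_le_mul_of_one_le_of_one_le (by linarith) hL1)
          (one_le_mul_of_one_le_of_one_le (one_le_pow₀ hm) hsP)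
      refine (le_mul_of_one_le_left h0 h3).trans (le_trans (le_of_eq ?_) init_noise)
      ring
    have h3 : C * S.N * Real.sqrt S.d ≤
        S.T * ((S.eta * (S.sigman ^ 2 * S.d)) * (S.nu * Real.sqrt S.d)) := by
      refine (mul_le_mul_of_nonneg_right hor' hsd.le).trans (le_of_eq ?_)
      unfold nu
      linear_combination (S.T * S.eta * S.sigma0 * S.sigman ^ 3 * Real.sqrt S.d ^ 2) * hsdd
    have h4 : (S.eta * (S.sigman ^ 2 * S.d)) * (S.nu * Real.sqrt S.d) ≤ 1 :=
      mul_le_one₀ h1 (by positivity) h2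
    have h5 : 16 ≤ C * S.N := hC.trans (le_mul_of_one_le_right hC0.le hN)
    calc 16 * Real.sqrt S.d ≤ C * S.N * Real.sqrt S.d := by gcongr
      _ ≤ _ := h3
      _ ≤ S.T * 1 := by gcongr
      _ = S.T := mul_one _
  have hT16 : (16 : ℝ) ≤ S.T := by linarith
  have hlogd2 : Real.log S.d ≤ 2 * l := by
    have h1 : Real.log (Real.sqrt S.d) ≤ Real.log S.T := Real.log_le_log hsd (by linarith)
    rw [Real.log_sqrt hd0.le] at h1
    linarith
  have hCl : C ≤ l := by linarith
  have hdim' : C * (S.m * S.P * S.N * l ^ 2) ^ 2 ≤ S.d := by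
    refine le_trans (le_of_eq ?_) hdim; ring
  have hcard : S.pun * S.N = S.SU.card := by rw [pun]; field_simp
  have hU1 : C ≤ S.SU.card := by
    rw [← hcard]; rwa [div_le_iff₀ hN0] at hp1
  have hU2 : C * S.SU.card ≤ Real.log S.d := by
    rw [← hcard]
    rwa [le_div_iff₀ hN0, inv_mul_eq_div, le_div_iff₀ hC0, mul_comm _ C] at hp2
  have hU3 : C ^ 2 * S.SU.card ≤ S.N := by
    calc C ^ 2 * S.SU.card = C * (C * S.SU.card) := by ring
      _ ≤ C * L := by gcongr; exact hU2.trans hLlog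
      _ ≤ S.N := hNL
  have hmd : (S.m : ℝ) ≤ S.d := by
    refine le_trans ?_ hdim'
    have h1 : (1 : ℝ) ≤ S.P * S.N * l ^ 2 :=
      one_le_mul_of_one_le_of_one_le (one_le_mul_of_one_le_of_one_le hP hN) (one_le_pow₀ hl1)
    have h2 : (S.m : ℝ) ≤ S.m * (S.P * S.N * l ^ 2) := le_mul_of_one_le_right hm0.le h1
    have h3 : (1 : ℝ) ≤ S.m * (S.P * S.N * l ^ 2) := hm.trans h2
    have e : (S.m * S.P * S.N * l ^ 2 : ℝ) = S.m * (S.P * S.N * l ^ 2) := by ring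
    rw [e]
    calc (S.m : ℝ) ≤ 1 * (S.m * (S.P * S.N * l ^ 2)) := by linarith
      _ ≤ C * (S.m * (S.P * S.N * l ^ 2)) ^ 2 := by
        gcongr
        · linarith
        · exact le_self_pow₀ h3 two_ne_zero
  have hlL₂ : l ≤ L₂ := by
    refine Real.log_le_log (by positivity) ?_
    calc (S.T : ℝ) * S.N * S.m * S.P / S.delta ≤ S.T * S.N * S.d * S.P / S.delta := by gcongr
      _ = _ := by ring
  refine ⟨l, L, hP2, hPC, hT16, hl, hCl, hlogT, by linarith, hdim', init_sig,
    init_noise, rate_noise, rate_sig, hor', ?_, ?_, ?_, hU1, by linarith, hU3⟩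
  · have hfrac : S.pun ≤ 1 / 2 := by
      have h : C ^ 2 * S.SU.card = C ^ 2 * S.pun * S.N := by rw [← hcard]; ring
      rw [h] at hU3
      have h2 : C ^ 2 * S.pun ≤ 1 := (mul_le_iff_le_one_left hN0).1 hU3
      have h3 : 0 ≤ S.pun := by unfold pun; positivity
      have h4 : 2 * S.pun ≤ C ^ 2 * S.pun := by gcongr; linarith
      linarith
    have hpos : 0 < (S.N : ℝ) * (1 - S.pun) := mul_pos hN0 (by linarith)
    rw [div_le_iff₀ (by positivity)] at hsig
    have h3 : 0 ≤ S.pun := by unfold pun; positivity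
    calc C * (S.sigman * Real.sqrt S.d) * l = C * S.sigman * Real.sqrt S.d * l := by ring
      _ ≤ _ := hsig
      _ ≤ S.alpha * (S.N : ℝ) ^ ((1 : ℝ) / 3) := by
        gcongr
        exact mul_le_of_le_one_right hN0.le (by linarith)
  · refine le_trans ?_ heps
    have h1 : Real.log ((16 : ℝ) * S.d * S.N * S.P / S.delta) ≤ L₂ :=
      Real.log_le_log (by positivity) (by gcongr)
    have h2 : Real.sqrt l * Real.sqrt (Real.log ((16 : ℝ) * S.d * S.N * S.P / S.delta)) ≤ L₂ := by
      calc _ ≤ Real.sqrt L₂ * Real.sqrt L₂ := by gcongr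
        _ = L₂ := Real.mul_self_sqrt (by linarith)
    calc _ = C * S.sigman * S.m * Real.sqrt S.P * (Real.sqrt l *
          Real.sqrt (Real.log ((16 : ℝ) * S.d * S.N * S.P / S.delta))) := by ring
      _ ≤ _ := by gcongr
  · have h := heps'.le.trans (mul_le_mul_of_nonneg_left (min_le_left _ _) (inv_nonneg.2 hC0.le))
    rw [inv_mul_eq_div, le_div_iff₀ hC0] at h
    linarith

end Setting

namespace Setting

namespace Scales

variable {S : Setting} {C l L Γ : ℝ}

lemma one_le_l (h : S.Scales C l L) (hC : 10 ^ 20 ≤ C) : 1 ≤ l := by linarith [h.C_le]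

lemma ell_sq (h : S.Scales C l L) (hC : 10 ^ 20 ≤ C) : S.ell ^ 2 = l := by
  rw [ell, ← h.l_eq, Real.sq_sqrt (by linarith [h.one_le_l hC])]

lemma one_le_ell (h : S.Scales C l L) (hC : 10 ^ 20 ≤ C) : 1 ≤ S.ell := by
  rw [ell, ← h.l_eq]
  exact Real.one_le_sqrt.2 (h.one_le_l hC)

lemma ell_le (h : S.Scales C l L) (hC : 10 ^ 20 ≤ C) : S.ell ≤ l := by
  rw [← h.ell_sq hC]
  exact le_self_pow₀ (h.one_le_ell hC) two_ne_zero

lemma sqrt_le_two_mul_ell (h : S.Scales C l L) (hC : 10 ^ 20 ≤ C) {z : ℝ} (hz : z ≤ 4 * l) :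
    Real.sqrt z ≤ 2 * S.ell := by
  have := h.ell_sq hC
  have := h.one_le_ell hC
  exact (Real.sqrt_le_left (by linarith)).2 (by nlinarith)

lemma mul_le_sqrt_d (h : S.Scales C l L) (hC : 10 ^ 20 ≤ C) :
    Real.sqrt C * (S.m * S.P * S.N * l ^ 2) ≤ Real.sqrt S.d := by
  refine Real.le_sqrt_of_sq_le ?_
  rw [mul_pow, Real.sq_sqrt (by linarith)]
  exact h.dim

lemma kap_le (h : S.Scales C l L) (hC : 10 ^ 20 ≤ C) :
    S.kap * S.N * S.P * S.m * S.ell * (Real.sqrt C * l) ≤ 5 := by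
  have hl := h.one_le_l hC
  have hsd : 0 < Real.sqrt S.d := Real.sqrt_pos.2 S.d_pos
  have h1 := mul_le_mul_of_nonneg_left (h.mul_le_sqrt_d hC)
    (mul_nonneg S.kap_nonneg S.ell_nonneg)
  have h2 : S.kap * S.ell * Real.sqrt S.d = 5 * l := by
    rw [← h.ell_sq hC, kap]; field_simp
  rw [h2] at h1
  refine le_of_mul_le_mul_right (a := l) ?_ (by linarith)
  linarith

lemma nu_le (h : S.Scales C l L) (hC : 10 ^ 20 ≤ C) :
    C * (S.nu * Real.sqrt S.d * S.m * S.ell) ≤ 1 := by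
  have hl := h.one_le_l hC
  have hm : (1 : ℝ) ≤ S.m := by exact_mod_cast S.hm
  have hP : (1 : ℝ) ≤ S.P := by exact_mod_cast S.hP
  have hsP : 1 ≤ Real.sqrt S.P := Real.one_le_sqrt.2 hP
  have hν := S.nu_pos
  refine le_trans ?_ h.init_noise
  calc C * (S.nu * Real.sqrt S.d * S.m * S.ell)
      = C * S.ell * (S.nu * Real.sqrt S.d * S.m * 1) := by ring
    _ ≤ C * L * (S.nu * Real.sqrt S.d * S.m ^ 2 * Real.sqrt S.P) := by
      have h1 := (h.ell_le hC).trans h.l_le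
      have h2 := le_self_pow₀ hm two_ne_zero
      have h3 : 0 ≤ C * L := mul_nonneg (by linarith) (S.ell_nonneg.trans h1)
      gcongr

lemma nu_mul_le (h : S.Scales C l L) (hC : 10 ^ 20 ≤ C) {z : ℝ} (hz : z ≤ Real.sqrt S.d) :
    C * (S.nu * z * S.m * S.ell) ≤ 1 := by
  have hν := S.nu_pos
  have := S.ell_nonneg
  refine le_trans ?_ (h.nu_le hC)
  gcongr

lemma le_sqrt_C (hC : 10 ^ 20 ≤ C) : 10 ^ 10 ≤ Real.sqrt C :=
  Real.le_sqrt_of_sq_le (by linarith)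

lemma one_le_sqrt_d : 1 ≤ Real.sqrt S.d :=
  Real.one_le_sqrt.2 (by exact_mod_cast S.hd)

lemma hnu (h : S.Scales C l L) (hC : 10 ^ 20 ≤ C) :
    S.nu * S.N * S.P * S.m * S.ell ≤ 1 / 10 ^ 6 := by
  have hm : (1 : ℝ) ≤ S.m := by exact_mod_cast S.hm
  have hl := h.one_le_l hC
  have hs := le_sqrt_C hC
  have hz : (S.P * S.N : ℝ) ≤ Real.sqrt S.d := by
    refine le_trans ?_ (h.mul_le_sqrt_d hC)
    calc (S.P * S.N : ℝ) = 1 * (1 * S.P * S.N * 1) := by ring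
      _ ≤ _ := by
        have := one_le_pow₀ hl (n := 2)
        gcongr
        linarith
  have h1 := h.nu_mul_le hC hz
  have h2 : 0 ≤ S.nu * (S.P * S.N) * S.m * S.ell := by
    have := S.nu_pos
    have := S.ell_nonneg
    positivity
  have h3 := mul_le_mul_of_nonneg_right hC h2
  linarith

lemma tau_le (h : S.Scales C l L) (hC : 10 ^ 20 ≤ C) :
    S.m * S.tau * Real.sqrt C ≤ 64 := by
  have hl := h.one_le_l hC
  have hs := le_sqrt_C hC
  have hν := S.nu_pos
  have hκ := S.kap_nonneg
  have he := S.ell_nonneg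
  have hCs : Real.sqrt C ≤ C := Real.sqrt_le_self_iff.2 (by right; linarith)
  have h1 := h.nu_mul_le hC one_le_sqrt_d
  have h2 : Real.sqrt C * (S.nu * 1 * S.m * S.ell) ≤ C * (S.nu * 1 * S.m * S.ell) := by gcongr
  have h3 : S.kap * S.N * S.P * S.m * S.ell * (Real.sqrt C * 1) ≤
      S.kap * S.N * S.P * S.m * S.ell * (Real.sqrt C * l) := by gcongr
  have h4 := h.kap_le hC
  have e : S.m * S.tau * Real.sqrt C = 4 * (Real.sqrt C * (S.nu * 1 * S.m * S.ell)) +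
      12 * (S.kap * S.N * S.P * S.m * S.ell * (Real.sqrt C * 1)) := by rw [tau]; ring
  rw [e]
  linarith

lemma htaum (h : S.Scales C l L) (hC : 10 ^ 20 ≤ C) :
    1728 * (S.m ^ 2 * S.P * S.tau ^ 3) ≤ 1 := by
  have hm : (1 : ℝ) ≤ S.m := by exact_mod_cast S.hm
  have hs := le_sqrt_C hC
  have hν := S.nu_pos
  have hκ := S.kap_nonneg
  have he := S.ell_nonneg
  have hτ : 0 ≤ S.tau := by unfold tau; positivity
  have h1 := cube_le_cube (h.tau_le hC)
  have hss : Real.sqrt C * Real.sqrt C = C := Real.mul_self_sqrt (by linarith)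
  have e : (S.m * S.tau * Real.sqrt C) ^ 3 = S.m ^ 3 * C * S.tau ^ 3 * Real.sqrt C := by
    linear_combination (S.m ^ 3 * S.tau ^ 3 * Real.sqrt C) * hss
  rw [e] at h1
  have h2 : S.m ^ 2 * S.P * S.tau ^ 3 * 10 ^ 10 ≤ S.m ^ 3 * C * S.tau ^ 3 * Real.sqrt C := by
    have := h.P_le
    have : (S.m : ℝ) ^ 2 ≤ S.m ^ 3 := pow_le_pow_right₀ hm (by norm_num)
    gcongr
  linarith

lemma hvar (h : S.Scales C l L) (hC : 10 ^ 20 ≤ C) :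
    S.m * S.P * (8 * S.nu ^ 2 + 18 * (S.kap * S.N * S.P) ^ 2) ≤ 1 / 2 := by
  have hm : (1 : ℝ) ≤ S.m := by exact_mod_cast S.hm
  have hs := le_sqrt_C hC
  have hν := S.nu_pos
  have hκ := S.kap_nonneg
  have he := S.ell_nonneg
  have he1 := h.one_le_ell hC
  have hss : Real.sqrt C * Real.sqrt C = C := Real.mul_self_sqrt (by linarith)
  have hP := h.P_le
  have hmm : (S.m : ℝ) ≤ S.m ^ 2 := le_self_pow₀ hm two_ne_zero
  have h1 : C * (S.nu * S.m) ≤ 1 := by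
    refine le_trans ?_ (h.nu_mul_le hC one_le_sqrt_d)
    rw [mul_one]
    have : S.nu * S.m ≤ S.nu * S.m * S.ell := le_mul_of_one_le_right (by positivity) he1
    gcongr
  have h2 : S.m * S.P * S.nu ^ 2 ≤ 1 / 100 := by
    have h3 : S.m * S.P * S.nu ^ 2 ≤ S.m ^ 2 * C * S.nu ^ 2 := by gcongr
    have h4 : S.m ^ 2 * C * S.nu ^ 2 = C * (S.nu * S.m) * (S.nu * S.m) := by ring
    have h5 : 0 ≤ S.nu * S.m := by positivity
    have h6 := mul_le_mul_of_nonneg_right hC h5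
    have h7 := mul_le_mul_of_nonneg_right h1 h5
    linarith
  have h3 : S.kap * S.N * S.P * S.m * Real.sqrt C ≤ 1 / 100 := by
    have h4 := h.kap_le hC
    have h0 : 0 ≤ S.kap * S.N * S.P * S.m * Real.sqrt C := by positivity
    have h5 : S.kap * S.N * S.P * S.m * Real.sqrt C * 500 ≤
        S.kap * S.N * S.P * S.m * Real.sqrt C * (S.ell * l) := by
      have : 1 * 500 ≤ S.ell * l :=
        mul_le_mul he1 (by linarith [h.C_le]) (by norm_num) he
      gcongr
      linarith
    linarith
  have h4 : S.m * S.P * (S.kap * S.N * S.P) ^ 2 ≤ 1 / 100 := by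
    calc S.m * S.P * (S.kap * S.N * S.P) ^ 2 ≤ S.m ^ 2 * C * (S.kap * S.N * S.P) ^ 2 := by gcongr
      _ = (S.kap * S.N * S.P * S.m * Real.sqrt C) ^ 2 := by
        linear_combination (-(S.m ^ 2 * (S.kap * S.N * S.P) ^ 2)) * hss
      _ ≤ (1 / 100) ^ 2 := by gcongr
      _ ≤ 1 / 100 := by norm_num
  linarith

lemma signal_cube (h : S.Scales C l L) :
    (C * (S.sigman * Real.sqrt S.d) * l) ^ 3 ≤ S.alpha ^ 3 * S.N := by
  have h1 := cube_le_cube h.signal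
  rwa [mul_pow S.alpha, rpow_third_cube (Nat.cast_nonneg _)] at h1

lemma signal_sq (h : S.Scales C l L) (hC : 10 ^ 20 ≤ C) :
    (C * (S.sigman * Real.sqrt S.d) * l) ^ 2 ≤ S.alpha ^ 2 * S.N := by
  have hN : (1 : ℝ) ≤ S.N := by exact_mod_cast S.hN
  have hσ := S.hsigman
  have hl := h.one_le_l hC
  have h0 : 0 ≤ C * (S.sigman * Real.sqrt S.d) * l := by positivity
  have h1 := pow_le_pow_left₀ h0 h.signal 2
  rw [mul_pow S.alpha] at h1
  refine h1.trans ?_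
  have h2 : 1 ≤ (S.N : ℝ) ^ ((1 : ℝ) / 3) := Real.one_le_rpow hN (by norm_num)
  have h3 : ((S.N : ℝ) ^ ((1 : ℝ) / 3)) ^ 2 ≤ ((S.N : ℝ) ^ ((1 : ℝ) / 3)) ^ 3 :=
    pow_le_pow_right₀ h2 (by norm_num)
  rw [rpow_third_cube (Nat.cast_nonneg _)] at h3
  gcongr

lemma le_horizon (h : S.Scales C l L) (hC : 10 ^ 20 ≤ C) :
    C ≤ S.T * (S.eta * S.sigma0 * S.alpha ^ 3) := by
  have hN : (0 : ℝ) < S.N := by exact_mod_cast S.hN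
  have hσ := S.hsigman
  have hσ0 := S.hsigma0
  have hη := S.heta
  have hl := h.one_le_l hC
  set A := S.sigman * Real.sqrt S.d with hA
  have hA0 : 0 ≤ A := by positivity
  have h1 : A ^ 3 ≤ S.alpha ^ 3 * S.N := by
    refine le_trans ?_ h.signal_cube
    have : A ≤ C * A * l := by
      calc A = 1 * A * 1 := by ring
        _ ≤ C * A * l := by gcongr; linarith
    gcongr
  refine le_of_mul_le_mul_right (a := (S.N : ℝ)) ?_ hN
  calc C * S.N ≤ S.T * (S.eta * S.sigma0 * A ^ 3) := h.horizon
    _ ≤ S.T * (S.eta * S.sigma0 * (S.alpha ^ 3 * S.N)) := by gcongr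
    _ = _ := by ring

lemma hatt (h : S.Scales C l L) (hC : 10 ^ 20 ≤ C) :
    10 ^ 4 * (S.m * Real.sqrt S.P * S.ell) *
      (S.sigman * Real.sqrt (2 * Real.log ((16 : ℝ) * S.d * S.N * S.P / S.delta))) ≤ S.eps := by
  refine le_trans ?_ h.attack
  rw [Real.sqrt_mul zero_le_two, ell, ← h.l_eq]
  have hσ := S.hsigman
  have h2 : Real.sqrt 2 ≤ 2 := Real.sqrt_le_self_iff.2 (by norm_num)
  have h3 : 10 ^ 4 * Real.sqrt 2 ≤ C := by linarith
  calc _ = 10 ^ 4 * Real.sqrt 2 * (S.sigman * (S.m * Real.sqrt S.P * Real.sqrt l) *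
    Real.sqrt (Real.log ((16 : ℝ) * S.d * S.N * S.P / S.delta))) := by ring
    _ ≤ _ := by gcongr

lemma pun_le (h : S.Scales C l L) (hC : 10 ^ 20 ≤ C) : C * S.pun ≤ 1 := by
  have hN : (0 : ℝ) < S.N := by exact_mod_cast S.hN
  rw [pun, ← mul_div_assoc, div_le_one hN]
  refine le_trans ?_ h.card_le_N
  have : C ≤ C ^ 2 := le_self_pow₀ (by linarith) two_ne_zero
  gcongr

lemma init_sig_le (h : S.Scales C l L) (hC : 10 ^ 20 ≤ C) :
    S.alpha * S.sigma0 * S.ell * (S.m : ℝ) ^ ((2 : ℝ) / 3) ≤ 1 / 10 := by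
  have hσ0 := S.hsigma0
  have hα := S.halpha
  have he := S.ell_nonneg
  have h1 : 10 * (S.alpha * S.sigma0 * S.ell * (S.m : ℝ) ^ ((2 : ℝ) / 3)) ≤
      C * L * (S.sigma0 * S.alpha * (S.m : ℝ) ^ ((2 : ℝ) / 3)) := by
    calc _ = 10 * S.ell * (S.sigma0 * S.alpha * (S.m : ℝ) ^ ((2 : ℝ) / 3)) := by ring
      _ ≤ _ := by
        have := (h.ell_le hC).trans h.l_le
        gcongr
        linarith
  linarith [h.init_sig]

lemma log_pair_le (h : S.Scales C l L) :
    Real.log ((16 : ℝ) * S.N ^ 2 * S.P ^ 2 / S.delta) ≤ 2 * l := by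
  have hm : (1 : ℝ) ≤ S.m := by exact_mod_cast S.hm
  have hP : (0 : ℝ) < S.P := by exact_mod_cast S.hP
  have hN : (0 : ℝ) < S.N := by exact_mod_cast S.hN
  have hδ := S.hdelta0
  have hδ1 := S.hdelta1
  have hT := h.T_ge
  have e : 2 * l = Real.log (((S.T : ℝ) * S.N * S.m * S.P / S.delta) ^ 2) := by
    rw [Real.log_pow, h.l_eq]; norm_num
  rw [e]
  refine Real.log_le_log (by positivity) ?_
  have h1 : (16 : ℝ) ≤ S.T ^ 2 := by nlinarith
  have h2 : (1 : ℝ) ≤ S.m ^ 2 := one_le_pow₀ hm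
  have h3 : S.delta ^ 2 ≤ S.delta := by nlinarith
  calc (16 : ℝ) * S.N ^ 2 * S.P ^ 2 / S.delta = 16 * S.N ^ 2 * 1 * S.P ^ 2 / S.delta := by ring
    _ ≤ S.T ^ 2 * S.N ^ 2 * S.m ^ 2 * S.P ^ 2 / S.delta ^ 2 := by gcongr
    _ = _ := by ring

lemma log_init_le (h : S.Scales C l L) :
    Real.log ((16 : ℝ) * S.N * S.m * S.P / S.delta) ≤ l := by
  have hm : (0 : ℝ) < S.m := by exact_mod_cast S.hm
  have hP : (0 : ℝ) < S.P := by exact_mod_cast S.hP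
  have hN : (0 : ℝ) < S.N := by exact_mod_cast S.hN
  have hδ := S.hdelta0
  have hT := h.T_ge
  rw [h.l_eq]
  exact Real.log_le_log (by positivity) (by gcongr)

lemma log_sig_le (h : S.Scales C l L) : Real.log ((16 : ℝ) * S.m / S.delta) ≤ l := by
  have hm : (0 : ℝ) < S.m := by exact_mod_cast S.hm
  have hP : (1 : ℝ) ≤ S.P := by exact_mod_cast S.hP
  have hN : (1 : ℝ) ≤ S.N := by exact_mod_cast S.hN
  have hδ := S.hdelta0
  refine le_trans (Real.log_le_log (by positivity) ?_) h.log_init_le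
  calc (16 : ℝ) * S.m / S.delta = 16 * 1 * S.m * 1 / S.delta := by ring
    _ ≤ _ := by gcongr

lemma margin_le (h : S.Scales C l L) (hC : 10 ^ 20 ≤ C) :
    700 * (S.m * S.P * S.ell ^ 3) + 10 ≤ (S.d : ℝ) := by
  have hm : (1 : ℝ) ≤ S.m := by exact_mod_cast S.hm
  have hP : (1 : ℝ) ≤ S.P := by exact_mod_cast S.hP
  have hN : (1 : ℝ) ≤ S.N := by exact_mod_cast S.hN
  have he1 := h.one_le_ell hC
  have hq : S.m * S.P * S.ell ^ 3 ≤ S.m * S.P * S.N * l ^ 2 := by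
    calc S.m * S.P * S.ell ^ 3 = S.m * S.P * 1 * S.ell ^ 3 := by ring
      _ ≤ S.m * S.P * S.N * S.ell ^ 4 := by
        have := pow_le_pow_right₀ he1 (by norm_num : 3 ≤ 4)
        gcongr
      _ = _ := by rw [← h.ell_sq hC]; ring
  have h1 : 1 ≤ S.m * S.P * S.N * l ^ 2 :=
    one_le_mul_of_one_le_of_one_le (one_le_mul_of_one_le_of_one_le
      (one_le_mul_of_one_le_of_one_le hm hP) hN) (one_le_pow₀ (h.one_le_l hC))
  refine le_trans ?_ h.dim
  set q := S.m * S.P * S.N * l ^ 2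
  have h2 : 1000 * q ≤ C * q ^ 2 := by
    have := le_self_pow₀ h1 two_ne_zero
    gcongr
    linarith
  linarith

lemma regime (h : S.Scales C l L) (hC : 10 ^ 20 ≤ C) (hΓ : C * S.d ≤ Γ) : S.Regime Γ := by
  have hm : (1 : ℝ) ≤ S.m := by exact_mod_cast S.hm
  have hN : (0 : ℝ) < S.N := by exact_mod_cast S.hN
  have hσ := S.hsigman
  have hσ0 := S.hsigma0
  have hα := S.halpha
  have hη := S.heta
  have hε := S.heps
  have hl := h.one_le_l hC
  have he := h.ell_sq hC
  have he1 := h.one_le_ell hC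
  have hs := le_sqrt_C hC
  have hd := S.d_pos
  have hμ : 1 ≤ (S.m : ℝ) ^ ((2 : ℝ) / 3) := Real.one_le_rpow hm (by norm_num)
  have hμ3 : ((S.m : ℝ) ^ ((2 : ℝ) / 3)) ^ 3 = S.m ^ 2 := by
    rw [← Real.rpow_natCast, ← Real.rpow_mul (by linarith), ← Real.rpow_natCast]; norm_num
  set A := S.sigman * Real.sqrt S.d with hA
  have hA0 : 0 < A := mul_pos hσ (Real.sqrt_pos.2 hd)
  have hD : S.sigman ^ 2 * S.d = A ^ 2 := by rw [hA, mul_pow, Real.sq_sqrt hd.le]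
  have hν : S.nu = S.sigma0 * A := by rw [nu, hA]; ring
  have hl13 : l ≤ l ^ 3 := le_self_pow₀ hl (by norm_num)
  refine
    { hT := by
        have : (0 : ℝ) < S.T := by linarith [h.T_ge]
        exact_mod_cast this
      hell := he1
      hlogT := he ▸ h.log_T_le
      hkap := ?_
      hnu := h.hnu hC
      hs01 := ?_
      hs0m := ?_
      hetas := ?_
      hetan := ?_
      htaum := h.htaum hC
      hU1 := ?_
      hU2 := ?_
      hGam := ?_
      hphase1 := ?_
      hphase2 := ?_
      hmem := ?_
      log_pair := ?_
      log_init := ?_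
      log_sig := ?_
      two_eps_le := ?_
      nonempty_SU := ?_
      two_le_P := h.two_le_P }
  · have h1 := h.kap_le hC
    have h0 : 0 ≤ S.kap * S.N * S.P * S.m * S.ell := by
      have := S.kap_nonneg
      positivity
    have h2 : S.kap * S.N * S.P * S.m * S.ell * (10 ^ 10 * 1) ≤
        S.kap * S.N * S.P * S.m * S.ell * (Real.sqrt C * l) := by gcongr
    linarith
  · have h1 := h.init_sig_le hC
    have h2 : S.alpha * S.sigma0 * S.ell ≤
        S.alpha * S.sigma0 * S.ell * (S.m : ℝ) ^ ((2 : ℝ) / 3) :=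
      le_mul_of_one_le_right (by positivity) hμ
    linarith
  · have h1 := cube_le_cube (h.init_sig_le hC)
    rw [mul_pow, hμ3] at h1
    have h2 : (S.alpha * S.sigma0 * S.ell) ^ 3 * S.m ≤
        (S.alpha * S.sigma0 * S.ell) ^ 3 * S.m ^ 2 := by
      have := le_self_pow₀ hm two_ne_zero
      gcongr
    have e : S.m * (3 * (S.alpha * S.sigma0) * S.ell) ^ 3 =
        27 * ((S.alpha * S.sigma0 * S.ell) ^ 3 * S.m) := by ring
    rw [e]
    linarith
  · rw [he]
    have h1 := h.rate_sig
    have h2 : 10 ^ 20 * (l * (S.eta * S.alpha ^ 2)) ≤ C * (l * (S.eta * S.alpha ^ 2)) := by gcongr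
    linarith
  · rw [he]
    have h1 := h.rate_noise
    have h2 : 10 ^ 20 * (l * (S.eta * (S.sigman ^ 2 * S.d))) ≤
        C * (l * (S.eta * (S.sigman ^ 2 * S.d))) := by gcongr
    linarith
  · rw [he]
    have h1 := h.card_le
    have h2 : 2 * (S.SU.card : ℝ) ≤ C * S.SU.card := by gcongr; linarith
    linarith
  · refine le_trans ?_ h.card_le_N
    have : C ≤ C ^ 2 := le_self_pow₀ (by linarith) two_ne_zero
    gcongr
    linarith
  · have h1 := h.margin_le hC
    have h2 : 1 * (S.d : ℝ) ≤ C * S.d := by gcongr; linarith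
    linarith
  · rw [he, hD, hν]
    have h1 := h.signal_cube
    have h2 : 10 ^ 6 * (A ^ 3 * l) ≤ (C * A * l) ^ 3 := by
      have hC3 : C ≤ C ^ 3 := le_self_pow₀ (by linarith) (by norm_num)
      calc 10 ^ 6 * (A ^ 3 * l) ≤ C ^ 3 * (A ^ 3 * l ^ 3) := by gcongr; linarith
        _ = _ := by ring
    have h3 := mul_le_mul_of_nonneg_left (h2.trans h1) (mul_pos hη hσ0).le
    have h4 : 0 ≤ S.eta * S.sigma0 * (A ^ 3 * l) := by positivity
    linarith
  · rw [hD]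
    have h1 := h.signal_sq hC
    have h2 : A ^ 2 * S.ell ^ 3 ≤ (C * A * l) ^ 2 := by
      have hC2 : 1 ≤ C ^ 2 := one_le_pow₀ (by linarith)
      have h34 := pow_le_pow_right₀ he1 (by norm_num : 3 ≤ 4)
      calc A ^ 2 * S.ell ^ 3 ≤ A ^ 2 * S.ell ^ 4 := by gcongr
        _ = 1 * (A ^ 2 * l ^ 2) := by rw [← he]; ring
        _ ≤ C ^ 2 * (A ^ 2 * l ^ 2) := by gcongr
        _ = _ := by ring
    have h3 := mul_le_mul_of_nonneg_left (h2.trans h1) hη.le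
    linarith
  · rw [hD, hν]
    have h1 := h.horizon
    have h2 : 10 ^ 20 * (S.N : ℝ) ≤ C * S.N := by gcongr
    have e : S.T * (3 * S.eta * A ^ 2) * (S.sigma0 * A) =
        3 * (S.T * (S.eta * S.sigma0 * A ^ 3)) := by ring
    rw [e]
    linarith
  · have h1 := h.sqrt_le_two_mul_ell hC (h.log_pair_le.trans (by linarith))
    linarith
  · have h1 := h.sqrt_le_two_mul_ell hC (h.log_init_le.trans (by linarith))
    linarith
  · have h1 := h.sqrt_le_two_mul_ell hC
      (z := 2 * Real.log ((16 : ℝ) * S.m / S.delta)) (by linarith [h.log_sig_le])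
    linarith
  · have h1 := h.eps_le
    have h2 : 2 * S.eps ≤ C * S.eps := by gcongr; linarith
    linarith
  · rw [← Finset.card_pos]
    have : (0 : ℝ) < S.SU.card := by linarith [h.C_le_card]
    exact_mod_cast this

end Scales

end Setting

/-- Adversarial distillation under a Bad Teacher. On the event `E`,
under Condition (H) in the sparse-unlearnable regime with teacher margin `Γ ≥ C d` on
all samples (a Bad Teacher): (1) some filter aligns with the learnable feature; (2)
the network memorizes noise on some unlearnable sample; (3) the robust training error
is `o(1)`; (4) the robust test error on the learnable test distribution is at least
`1/2 − o(1)`. -/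
theorem stmt18 :
    ∃ C0 C1 : ℝ, 0 < C0 ∧ 0 < C1 ∧
      ∀ θ : ℝ, 0 < θ →
        ∃ C : ℝ, 0 < C ∧
          ∀ (S : Setting) (fT : Fin S.N → ℝ) (Γ : ℝ),
            S.ADDyn fT → S.EventE → S.CondH C → S.SparseRegime C →
            C * S.d ≤ Γ →
            (∀ i ∈ S.SL, Γ ≤ S.y i * fT i) →
            (∀ i ∈ S.SU, Γ ≤ S.y i * fT i) →
            (∃ r, C0 / (S.alpha * (S.m : ℝ) ^ ((1 : ℝ) / 3)) ≤ S.wsig S.T r) ∧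
            (∃ i ∈ S.SU, ∃ r : Fin S.m, ∃ j, j ≠ S.sig i ∧
              C1 / (3 * ((S.m : ℝ) * S.P) ^ ((1 : ℝ) / 3)) ≤ S.y i * dot (S.w S.T r) (S.x i j)) ∧
            1 / (S.N : ℝ) * ∑ i, lloss (S.marg S.T i) ≤ θ ∧
            ENNReal.ofReal (1 / 2 - θ) ≤ S.robErr S.T := by
  refine ⟨1, 1, one_pos, one_pos, fun θ hθ => ?_⟩
  set K : ℝ := 8 * (1 + |Real.log (2 / θ)|) with hK
  have hlog := le_abs_self (Real.log (2 / θ))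
  have habs := abs_nonneg (Real.log (2 / θ))
  have hexp := Real.exp_pos (K + 1)
  have hθ4 : 0 < 4 / θ := by positivity
  set C : ℝ := 10 ^ 20 + 128 * Real.exp (K + 1) + (K + 3) + 4 / θ with hC
  have hC20 : 10 ^ 20 ≤ C := by linarith
  refine ⟨C, by linarith, fun S fT Γ hdyn hE hH hS hΓ hL hU => ?_⟩
  obtain ⟨l, L, hsc⟩ := Setting.exists_scales (by linarith) hH hS
  have hR : S.Regime Γ := hsc.regime hC20 hΓ
  have hΓ' : ∀ i, Γ ≤ S.y i * fT i := by
    intro i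
    by_cases hi : i ∈ S.SL
    · exact hL i hi
    · exact hU i (S.mem_SU_of_notMem_SL hi)
  have hd : (1 : ℝ) ≤ S.d := by exact_mod_cast S.hd
  have hCd : C ≤ C * S.d := le_mul_of_one_le_right (by linarith) hd
  have hstr : K ≤ ∑ r, (S.alpha * S.wsig S.T r) ^ 3 := by
    refine (Setting.toSys hdyn hE hR hΓ').le_str (by linarith) ?_ ?_
    · change K + 3 ≤ Γ
      linarith
    · change 128 * Real.exp (K + 1) <
        S.T * (3 * S.eta * S.alpha ^ 2) * (S.alpha * S.sigma0 / 2)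
      linarith [hsc.le_horizon hC20]
  refine ⟨Setting.exists_wsig_ge (by linarith), ?_,
    Setting.sum_lloss_le hdyn hE hR hΓ' hθ hstr (by linarith) ?_, ?_⟩
  · obtain ⟨⟨i, j⟩, r, hi, hpos, hmem⟩ := (Setting.toSys hdyn hE hR hΓ').exists_memorized
    change 0 < S.noiseCorr S.T (i, j) r at hpos
    change 1 ≤ 27 * (S.m * S.P * S.noiseCorr S.T (i, j) r ^ 3) at hmem
    have hj : j ≠ S.sig i := by
      rintro rfl
      simp [Setting.noiseCorr] at hpos
    refine ⟨i, S.mem_SU_of_notMem_SL hi, r, j, hj, ?_⟩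
    have h := Setting.one_div_le_of_memorized hmem
    rwa [Setting.noiseCorr, if_neg hj] at h
  · have h1 := hsc.pun_le hC20
    have h2 : 4 / θ * S.pun ≤ C * S.pun := by
      have : 0 ≤ S.pun := by unfold Setting.pun; positivity
      gcongr
      linarith
    have h3 := h2.trans h1
    rwa [div_mul_eq_mul_div, div_le_one hθ] at h3
  · refine le_trans (ENNReal.ofReal_le_ofReal (by linarith)) (Setting.half_le_robErr hdyn hE hR
      hΓ' (hsc.hvar hC20) (hsc.hatt hC20))

end AD

end
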